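/- Suppose Λ is a finite simple graph whose complement Λᶜ is a linear forest, and Γ is any finite simple graph. If there is an injective group homomorphism from A(Λ) into A(Γ), then Λ embeds into Γ as a full (induced) subgraph. -/

import Mathlib

open SimpleGraph

/-- The set of commutator relations of a graph: one commutator for each edge. -/
def raagRels {V : Type} (G : SimpleGraph V) : Set (FreeGroup V) :=
  {r | ∃ u v : V, G.Adj u v ∧
    r = FreeGroup.of u * FreeGroup.of v * (FreeGroup.of u)⁻¹ * (FreeGroup.of v)⁻¹}

/-- The right-angled Artin group `A(G)` of a graph `G`. -/
abbrev RAAG {V : Type} (G : SimpleGraph V) : Type := PresentedGroup (raagRels G)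

/-- `G(Γ) = A(Γᶜ)`, the RAAG on the complement graph. -/
abbrev GG {V : Type} (G : SimpleGraph V) : Type := RAAG Gᶜ

/-- A linear forest: an acyclic graph all of whose vertices have degree at most 2. -/
def IsLinearForest {V : Type} (G : SimpleGraph V) : Prop :=
  G.IsAcyclic ∧ ∀ v : V, (G.neighborSet v).ncard ≤ 2

/-- The star of a vertex: the vertex together with its neighbours. -/
def starSet {V : Type} (G : SimpleGraph V) (v : V) : Set V :=
  insert v (G.neighborSet v)

/-- The double `D_v(G)` of `G` along the star of `v`: original vertices together with
copies of the vertices outside the star. -/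
def GraphDouble {V : Type} (G : SimpleGraph V) (v : V) :
    SimpleGraph (V ⊕ {w : V // w ∉ starSet G v}) :=
  SimpleGraph.fromRel (fun x y =>
    match x, y with
    | Sum.inl a, Sum.inl b => G.Adj a b
    | Sum.inr a, Sum.inr b => G.Adj a.1 b.1
    | Sum.inl a, Sum.inr b => a ∈ starSet G v ∧ G.Adj a b.1
    | Sum.inr _, Sum.inl _ => False)

/-- Subdivision of the edge `[v,w]` of `Λ`, with `none` as the new vertex. -/
def SubdivEdge {V : Type} (Λ : SimpleGraph V) (v w : V) : SimpleGraph (Option V) :=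
  SimpleGraph.fromRel (fun x y =>
    match x, y with
    | some a, some b => Λ.Adj a b ∧ ¬((a = v ∧ b = w) ∨ (a = w ∧ b = v))
    | some a, none => a = v ∨ a = w
    | none, some _ => False
    | none, none => False)

/-- The graph `Λ_u⁻(w₁,w₂)`, with `none` as the new vertex `v`. -/
def MinusGraph {V : Type} (Λ : SimpleGraph V) (u w₁ w₂ : V) : SimpleGraph (Option V) :=
  SimpleGraph.fromRel (fun x y =>
    match x, y with
    | some a, some b => Λ.Adj a b ∧
        ¬((a = u ∧ b = w₁) ∨ (a = w₁ ∧ b = u) ∨ (a = u ∧ b = w₂) ∨ (a = w₂ ∧ b = u))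
    | some a, none => a = w₁ ∨ a = u ∨ a = w₂
    | none, some _ => False
    | none, none => False)

/-- The graph `Λ_u⁺(w₁,w₂)`: `Λ_u⁻(w₁,w₂)` with the edge `[u,w₂]` added back. -/
def PlusGraph {V : Type} (Λ : SimpleGraph V) (u w₁ w₂ : V) : SimpleGraph (Option V) :=
  SimpleGraph.fromRel (fun x y =>
    (MinusGraph Λ u w₁ w₂).Adj x y ∨ (x = some u ∧ y = some w₂))

open scoped Pointwise commutatorElement

/-! The conjugates of the standard generators of `A(Γ)`, with commutation as adjacency, form the
extension graph of `Γ`. An embedding of `Λ` is first found there and then pushed down to `Γ`.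

Let `φ : A(Λ) → A(Γ)` be injective. The parabolic closure of each `φ i` is the direct product of
irreducible factors. Join two of these factors, over all `i`, when they do not commute. The
connected components of this graph, the regions, commute with one another, so `φ` is the product
of its restrictions `φ_c` to the regions `c`. Consider a component of `Λᶜ`, a path with `n ≥ 2`
vertices. Factors belonging to its two ends that lie in the same region are so far apart that a
path joining them yields `n` conjugates of generators spanning the complement of a path, and no
other component of `Λᶜ` contributes factors to that region. If this fails for every region, then
every `φ_c` kills a nontrivial word in the two ends; as finitely many nontrivial normal subgroups
of an irreducible `A(C)` meet nontrivially, `φ` is not injective. The isolated vertices of `Λᶜ`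
generate a free abelian direct factor, and comparing ranks assigns distinct regions to them.
Different regions commute, so the pieces assemble to an embedding of `Λ` into the extension graph.

The finitely many conjugates used are brought back to generators by passing to doubles:
`A(D_v(Γ))` is a subgroup of index two in `A(Γ)`, the kernel of the exponent of `v` modulo two,
and rewriting conjugates in it shortens the conjugating words. It remains to see that an induced
copy of `Λ` in `D_v(Γ)` yields one in `Γ`. Folding the double onto `Γ` can only fail on a pair of
vertices on different sheets off the star of `v`, which is an edge of `Λᶜ`. If one vertex forms
such pairs with two others, these are its two neighbours in `Λᶜ`, and it can be moved to `v`.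
Otherwise there is a single pair `{a, b}`, and if it is not folded onto an edge of `Γᶜ`, then
either `b` can be moved to `v` or `v` can be inserted between `a` and `b` in the path of `Λᶜ` that
contains them. -/

namespace RAAG

section Conjugation

variable {G : Type*} [Group G]

lemma mem_conj_smul {h y : G} {K : Subgroup G} : y ∈ MulAut.conj h • K ↔ h⁻¹ * y * h ∈ K := by
  simp [Subgroup.mem_pointwise_smul_iff_inv_smul_mem, MulAut.smul_def]

lemma conj_mem_conj_smul {h y : G} {K : Subgroup G} :
    h * y * h⁻¹ ∈ MulAut.conj h • K ↔ y ∈ K :=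
  Subgroup.smul_mem_pointwise_smul_iff (a := MulAut.conj h)

lemma conj_smul_le_centralizer {h : G} {K L : Subgroup G} :
    MulAut.conj h • K ≤ Subgroup.centralizer (MulAut.conj h • L : Subgroup G) ↔
      K ≤ Subgroup.centralizer L := by
  refine ⟨fun H x hx y hy => ?_, fun H x hx y hy => ?_⟩
  · exact (Commute.conj_iff h).1 (H (conj_mem_conj_smul.2 hx) _ (conj_mem_conj_smul.2 hy))
  · have := H (mem_conj_smul.1 hx) _ (mem_conj_smul.1 hy)
    simpa [mul_assoc, commute_iff_eq] using (Commute.conj_iff h).2 this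

end Conjugation

section Parabolic

variable {W : Type} {Γ : SimpleGraph W} {S T : Set W} {v w : W} {x y : RAAG Γ}

/-- The generator of `A(Γ)` attached to a vertex. -/
def gen (Γ : SimpleGraph W) (v : W) : RAAG Γ := PresentedGroup.of v

lemma commute_gen {u v : W} (h : Γ.Adj u v) : Commute (gen Γ u) (gen Γ v) := by
  have hrel : gen Γ u * gen Γ v * (gen Γ u)⁻¹ * (gen Γ v)⁻¹ = 1 :=
    PresentedGroup.one_of_mem (rels := raagRels Γ) ⟨u, v, h, rfl⟩
  rwa [mul_inv_eq_one, mul_inv_eq_iff_eq_mul] at hrel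

/-- The universal property of `A(Γ)`: a map on the vertices under which adjacent vertices have
commuting images extends to a homomorphism. -/
def lift {G : Type*} [Group G] (f : W → G) (hf : ∀ u v, Γ.Adj u v → Commute (f u) (f v)) :
    RAAG Γ →* G :=
  PresentedGroup.toGroup (rels := raagRels Γ) (f := f) (by
    rintro r ⟨u, v, h, rfl⟩
    simp [(hf u v h).eq])

@[simp] lemma lift_gen {G : Type*} [Group G] (f : W → G)
    (hf : ∀ u v, Γ.Adj u v → Commute (f u) (f v)) (v : W) : lift f hf (gen Γ v) = f v :=
  PresentedGroup.toGroup.of _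

/-- The standard parabolic subgroup `⟨S⟩` of `A(Γ)` generated by a set `S` of vertices. -/
def parabolic (Γ : SimpleGraph W) (S : Set W) : Subgroup (RAAG Γ) :=
  Subgroup.closure (gen Γ '' S)

lemma gen_mem_parabolic (h : v ∈ S) : gen Γ v ∈ parabolic Γ S :=
  Subgroup.subset_closure ⟨v, h, rfl⟩

lemma parabolic_le {H : Subgroup (RAAG Γ)} : parabolic Γ S ≤ H ↔ ∀ v ∈ S, gen Γ v ∈ H := by
  rw [parabolic, Subgroup.closure_le, Set.image_subset_iff]
  rfl

lemma parabolic_mono (h : S ⊆ T) : parabolic Γ S ≤ parabolic Γ T :=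
  Subgroup.closure_mono (Set.image_mono h)

@[simp] lemma parabolic_univ : parabolic Γ Set.univ = ⊤ := by
  rw [parabolic, Set.image_univ]
  exact PresentedGroup.closure_range_of _

@[simp] lemma parabolic_empty : parabolic Γ ∅ = ⊥ := by simp [parabolic]

lemma parabolic_le_centralizer (h : ∀ u ∈ S, ∀ v ∈ T, Commute (gen Γ u) (gen Γ v)) :
    parabolic Γ S ≤ Subgroup.centralizer (parabolic Γ T) := by
  rw [parabolic_le]
  intro u hu
  rw [parabolic, Subgroup.centralizer_closure]
  rintro _ ⟨v, hv, rfl⟩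
  exact (h u hu v hv).symm

lemma commute_of_mem_parabolic (h : ∀ v ∈ S, Commute y (gen Γ v)) (hx : x ∈ parabolic Γ S) :
    Commute y x := by
  have : parabolic Γ S ≤ Subgroup.centralizer {y} :=
    parabolic_le.2 fun v hv => Subgroup.mem_centralizer_singleton_iff.2 (h v hv).eq.symm
  exact (Subgroup.mem_centralizer_singleton_iff.1 (this hx)).symm

lemma commute_of_mem_parabolic_of_adj (h : ∀ u ∈ S, ∀ v ∈ T, Γ.Adj u v) (hx : x ∈ parabolic Γ S)
    (hy : y ∈ parabolic Γ T) : Commute x y :=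
  (parabolic_le_centralizer (fun u hu v hv => commute_gen (h u hu v hv)) hx y hy).symm

open scoped Classical in
/-- The retraction of `A(Γ)` onto `⟨S⟩` killing the generators outside `S`. -/
noncomputable def retract (Γ : SimpleGraph W) (S : Set W) : RAAG Γ →* RAAG Γ :=
  lift (fun v => if v ∈ S then gen Γ v else 1) (by
    intro u v h
    by_cases hu : u ∈ S <;> by_cases hv : v ∈ S <;> simp [hu, hv, commute_gen h])

lemma retract_gen_of_mem (h : v ∈ S) : retract Γ S (gen Γ v) = gen Γ v := by
  simp [retract, h]

lemma retract_gen_of_notMem (h : v ∉ S) : retract Γ S (gen Γ v) = 1 := by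
  simp [retract, h]

lemma retract_retract (S T : Set W) (x : RAAG Γ) :
    retract Γ S (retract Γ T x) = retract Γ (S ∩ T) x := by
  suffices (retract Γ S).comp (retract Γ T) = retract Γ (S ∩ T) from DFunLike.congr_fun this x
  refine PresentedGroup.ext fun v => ?_
  change retract Γ S (retract Γ T (gen Γ v)) = retract Γ (S ∩ T) (gen Γ v)
  by_cases hS : v ∈ S <;> by_cases hT : v ∈ T <;> simp [retract, hS, hT]

lemma retract_mem (S : Set W) (x : RAAG Γ) : retract Γ S x ∈ parabolic Γ S := by
  suffices (⊤ : Subgroup (RAAG Γ)) ≤ (parabolic Γ S).comap (retract Γ S) from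
    this (Subgroup.mem_top x)
  rw [← parabolic_univ, parabolic_le]
  intro v _
  rw [Subgroup.mem_comap]
  by_cases hv : v ∈ S
  · rw [retract_gen_of_mem hv]
    exact gen_mem_parabolic hv
  · rw [retract_gen_of_notMem hv]
    exact one_mem _

lemma retract_eq_self (h : x ∈ parabolic Γ S) : retract Γ S x = x := by
  have : parabolic Γ S ≤ (retract Γ S).eqLocus (MonoidHom.id _) :=
    parabolic_le.2 fun v hv => retract_gen_of_mem hv
  exact this h

lemma retract_mem_parabolic_inter (h : x ∈ parabolic Γ T) :
    retract Γ S x ∈ parabolic Γ (S ∩ T) := by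
  rw [← retract_eq_self h, retract_retract]
  exact retract_mem _ _

lemma mem_parabolic_inter (hS : x ∈ parabolic Γ S) (hT : x ∈ parabolic Γ T) :
    x ∈ parabolic Γ (S ∩ T) := by
  simpa only [retract_eq_self hS] using retract_mem_parabolic_inter (S := S) hT

lemma retract_mem_of_mem (h : x ∈ parabolic Γ T) : retract Γ S x ∈ parabolic Γ T :=
  parabolic_mono Set.inter_subset_right (retract_mem_parabolic_inter h)

lemma mem_parabolic_of_forall_notMem [Finite W] (h : ∀ w, w ∉ T → x ∈ parabolic Γ {w}ᶜ) :
    x ∈ parabolic Γ T := by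
  suffices ∀ F : Set W, F.Finite → F ⊆ Tᶜ → x ∈ parabolic Γ Fᶜ by
    simpa using this Tᶜ (Set.toFinite _) subset_rfl
  intro F hF
  induction F, hF using Set.Finite.induction_on with
  | empty => simp
  | @insert a F _ _ ih =>
    intro hFT
    rw [Set.insert_eq, Set.compl_union]
    exact mem_parabolic_inter (h a (hFT (Set.mem_insert _ _)))
      (ih ((Set.subset_insert _ _).trans hFT))

lemma retract_union (h : ∀ u ∈ S, ∀ v ∈ T, Γ.Adj u v) (x : RAAG Γ) :
    retract Γ (S ∪ T) x = retract Γ S x * retract Γ T x := by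
  have hcomm (x y : RAAG Γ) : Commute (retract Γ S x) (retract Γ T y) :=
    commute_of_mem_parabolic_of_adj h (retract_mem _ _) (retract_mem _ _)
  suffices retract Γ (S ∪ T) = MonoidHom.mk' (fun x => retract Γ S x * retract Γ T x) (fun x y => by
      rw [map_mul, map_mul, (hcomm y x).mul_mul_mul_comm]) from DFunLike.congr_fun this x
  refine PresentedGroup.ext fun v => ?_
  change retract Γ (S ∪ T) (gen Γ v) = retract Γ S (gen Γ v) * retract Γ T (gen Γ v)
  by_cases hS : v ∈ S <;> by_cases hT : v ∈ T
  · exact absurd (h v hS v hT) (Γ.loopless.irrefl v)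
  all_goals simp [retract, hS, hT]

open scoped Classical in
/-- The exponent sum of the generator `w`. -/
noncomputable def expSum (Γ : SimpleGraph W) (w : W) : RAAG Γ →* Multiplicative ℤ :=
  lift (fun v => if v = w then Multiplicative.ofAdd 1 else 1) (fun _ _ _ => Commute.all _ _)

@[simp] lemma expSum_gen_self (w : W) : expSum Γ w (gen Γ w) = Multiplicative.ofAdd 1 := by
  simp [expSum]

lemma expSum_gen_of_ne (h : v ≠ w) : expSum Γ w (gen Γ v) = 1 := by simp [expSum, h]

lemma expSum_eq_one (h : w ∉ S) (hx : x ∈ parabolic Γ S) : expSum Γ w x = 1 := by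
  have : parabolic Γ S ≤ (expSum Γ w).ker :=
    parabolic_le.2 fun v hv => expSum_gen_of_ne (ne_of_mem_of_not_mem hv h)
  exact this hx

lemma expSum_conj (w : W) (h x : RAAG Γ) : expSum Γ w (h * x * h⁻¹) = expSum Γ w x := by simp

lemma expSum_gen_zpow (v : W) (n : ℤ) : expSum Γ v (gen Γ v ^ n) = Multiplicative.ofAdd n := by
  rw [map_zpow, expSum_gen_self, ← ofAdd_zsmul, smul_eq_mul, mul_one]

lemma gen_zpow_ne_one (v : W) {n : ℤ} (hn : n ≠ 0) : gen Γ v ^ n ≠ 1 := by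
  intro h
  have := expSum_gen_zpow (Γ := Γ) v n
  rw [h, map_one] at this
  exact hn (ofAdd_eq_one.1 this.symm)

lemma gen_ne_one (v : W) : gen Γ v ≠ 1 := by
  simpa using gen_zpow_ne_one (Γ := Γ) v one_ne_zero

lemma gen_mem_parabolic_iff : gen Γ v ∈ parabolic Γ S ↔ v ∈ S := by
  refine ⟨fun h => ?_, gen_mem_parabolic⟩
  by_contra hv
  have := expSum_eq_one hv h
  rw [expSum_gen_self] at this
  exact absurd this (by decide)

end Parabolic

section HNN

open HNNExtension HNNExtension.NormalWord

variable {G : Type*} [Group G] {A B : Subgroup G} {φ : A ≃* B}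

/-- The product `t^u₁ g₁ t^u₂ g₂ ⋯` of a word `(u₁, g₁), (u₂, g₂), …` in an HNN extension. -/
def wordProd (φ : A ≃* B) (l : List (ℤˣ × G)) : HNNExtension G A B φ :=
  (l.map fun e => t ^ (e.1 : ℤ) * of e.2).prod

@[simp] lemma wordProd_nil : wordProd φ [] = 1 := rfl

@[simp] lemma wordProd_cons (e : ℤˣ × G) (l : List (ℤˣ × G)) :
    wordProd φ (e :: l) = t ^ (e.1 : ℤ) * of e.2 * wordProd φ l := by simp [wordProd]

@[simp] lemma wordProd_append (l₁ l₂ : List (ℤˣ × G)) :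
    wordProd φ (l₁ ++ l₂) = wordProd φ l₁ * wordProd φ l₂ := by simp [wordProd]

/-- The word `l` has no pinch, that is, no consecutive letters `(u, g)` and `(-u, g')` with `g` in
the subgroup associated with `u`. -/
abbrev IsReducedWord (A B : Subgroup G) (l : List (ℤˣ × G)) : Prop :=
  l.IsChain fun a b => a.2 ∈ toSubgroup A B a.1 → a.1 = b.1

lemma exists_isReducedWord_eq (z : HNNExtension G A B φ) :
    ∃ (g : G) (l : List (ℤˣ × G)), IsReducedWord A B l ∧ z = of g * wordProd φ l := by
  obtain ⟨d⟩ := TransversalPair.nonempty G A B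
  let w := z • (empty : NormalWord d)
  have hw := prod_smul φ z (empty : NormalWord d)
  rw [prod_empty, mul_one] at hw
  exact ⟨w.head, w.toList, w.chain, hw.symm⟩

lemma exists_isReducedWord_wordProd_mul_of {l : List (ℤˣ × G)} (hl : IsReducedWord A B l)
    (hne : l ≠ []) (g : G) : ∃ l', IsReducedWord A B l' ∧ l'.length = l.length ∧
      wordProd φ l' = wordProd φ l * of g := by
  obtain ⟨l, e, rfl⟩ := l.eq_nil_or_concat.resolve_left hne
  rw [List.concat_eq_append, IsReducedWord, List.isChain_append] at hl
  refine ⟨l ++ [(e.1, e.2 * g)], ?_, by simp, by simp [mul_assoc]⟩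
  refine List.isChain_append.2 ⟨hl.1, List.isChain_singleton _, fun b hb c hc => ?_⟩
  obtain rfl : (e.1, e.2 * g) = c := by simpa using hc
  exact hl.2.2 b hb e (by simp)

/- Write `h⁻¹` as a reduced word: then `x h⁻¹ = h⁻¹ y` has two reduced expressions, with heads
`x g` and `g`, and these heads must agree up to an associated subgroup. -/
lemma hnn_exists_conj_mem_toSubgroup {h : HNNExtension G A B φ} {x y : G}
    (hh : h ∉ (of : G →* HNNExtension G A B φ).range) (hxy : h * of x * h⁻¹ = of y) :
    ∃ (u : ℤˣ) (k : G), k * x * k⁻¹ ∈ toSubgroup A B u := by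
  obtain ⟨g, l, hl, hg⟩ := exists_isReducedWord_eq h⁻¹
  have hne : l ≠ [] := by
    rintro rfl
    exact hh ⟨g⁻¹, by rw [map_inv, ← inv_inv h, hg, wordProd_nil, mul_one]⟩
  obtain ⟨l', hl', -, hprod⟩ := exists_isReducedWord_wordProd_mul_of (φ := φ) hl hne y
  let w₁ : ReducedWord G A B := ⟨x * g, l, hl⟩
  let w₂ : ReducedWord G A B := ⟨g, l', hl'⟩
  have heq : w₁.prod φ = w₂.prod φ := by
    change of (x * g) * wordProd φ l = of g * wordProd φ l'
    rw [hprod, map_mul, mul_assoc, ← hg, ← mul_assoc, ← hg, ← hxy]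
    group
  obtain ⟨b, l₀, rfl⟩ := List.exists_cons_of_ne_nil hne
  have hmem := (ReducedWord.map_fst_eq_and_of_prod_eq φ heq).2 b.1 (by simp [w₁])
  refine ⟨-b.1, g⁻¹, ?_⟩
  rw [← inv_mem_iff]
  simpa [w₁, w₂, mul_assoc] using hmem

end HNN

section VertexHNN

variable {W : Type} {Γ : SimpleGraph W} {w : W}

/-- The subgroup `⟨lk w⟩` of `⟨Γ - w⟩`. -/
abbrev linkSubgroup (Γ : SimpleGraph W) (w : W) : Subgroup (parabolic Γ {w}ᶜ) :=
  (parabolic Γ (Γ.neighborSet w)).subgroupOf (parabolic Γ {w}ᶜ)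

/-- The HNN extension of `⟨Γ - w⟩` by a stable letter centralizing `⟨lk w⟩`. It is isomorphic to
`A(Γ)`, the stable letter being the generator `w`. -/
abbrev VertexHNN (Γ : SimpleGraph W) (w : W) : Type :=
  HNNExtension (parabolic Γ {w}ᶜ) (linkSubgroup Γ w) (linkSubgroup Γ w) (MulEquiv.refl _)

lemma commute_t_of_adj {v : W} (h : Γ.Adj w v) :
    Commute (HNNExtension.t : VertexHNN Γ w)
      (HNNExtension.of ⟨gen Γ v, gen_mem_parabolic h.ne'⟩) :=
  HNNExtension.t_mul_of (φ := MulEquiv.refl (linkSubgroup Γ w))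
    ⟨⟨gen Γ v, gen_mem_parabolic h.ne'⟩, gen_mem_parabolic h⟩

open scoped Classical in
/-- The canonical map from `A(Γ)` to its HNN decomposition at `w`. -/
noncomputable def toVertexHNN (Γ : SimpleGraph W) (w : W) : RAAG Γ →* VertexHNN Γ w :=
  lift (fun v => if h : v = w then HNNExtension.t
      else HNNExtension.of ⟨gen Γ v, gen_mem_parabolic h⟩) (by
    intro u v h
    by_cases hu : u = w <;> by_cases hv : v = w
    · simp [hu, hv]
    · subst hu
      simpa [hv] using commute_t_of_adj h
    · subst hv
      simpa [hu] using (commute_t_of_adj h.symm).symm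
    · simp only [hu, hv, dite_false]
      exact Commute.map (Subtype.ext (commute_gen h).eq) HNNExtension.of)

@[simp] lemma toVertexHNN_gen_self (w : W) : toVertexHNN Γ w (gen Γ w) = HNNExtension.t := by
  simp [toVertexHNN]

lemma toVertexHNN_coe (x : parabolic Γ {w}ᶜ) : toVertexHNN Γ w x = HNNExtension.of x := by
  obtain ⟨x, hx⟩ := x
  change toVertexHNN Γ w x = HNNExtension.of ⟨x, hx⟩
  induction hx using Subgroup.closure_induction with
  | mem x hx =>
    obtain ⟨v, hv, rfl⟩ := hx
    simp [toVertexHNN, show v ≠ w from hv]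
  | one => exact (map_one _).trans (map_one HNNExtension.of).symm
  | mul x y hx hy ihx ihy => exact (map_mul _ x y).trans (by rw [ihx, ihy, ← map_mul]; rfl)
  | inv x hx ih => exact (map_inv _ x).trans (by rw [ih, ← map_inv]; rfl)

/-- The inverse of `toVertexHNN`. -/
noncomputable def ofVertexHNN (Γ : SimpleGraph W) (w : W) : VertexHNN Γ w →* RAAG Γ :=
  HNNExtension.lift (parabolic Γ {w}ᶜ).subtype (gen Γ w) fun a =>
    (commute_of_mem_parabolic (fun _ hv => commute_gen hv) (Subgroup.mem_subgroupOf.1 a.2)).eq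

lemma ofVertexHNN_toVertexHNN (w : W) (x : RAAG Γ) :
    ofVertexHNN Γ w (toVertexHNN Γ w x) = x := by
  suffices (ofVertexHNN Γ w).comp (toVertexHNN Γ w) = MonoidHom.id _ from
    DFunLike.congr_fun this x
  refine PresentedGroup.ext fun v => ?_
  change ofVertexHNN Γ w (toVertexHNN Γ w (gen Γ v)) = gen Γ v
  by_cases h : v = w
  · subst h
    rw [toVertexHNN_gen_self]
    exact HNNExtension.lift_t _ _ _
  · rw [toVertexHNN_coe ⟨gen Γ v, gen_mem_parabolic h⟩]
    exact HNNExtension.lift_of _ _ _ _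

lemma toVertexHNN_injective (w : W) : Function.Injective (toVertexHNN Γ w) :=
  Function.LeftInverse.injective (ofVertexHNN_toVertexHNN w)

lemma exists_conj_mem_parabolic_neighborSet {x h : RAAG Γ} (hx : x ∈ parabolic Γ {w}ᶜ)
    (hh : h ∉ parabolic Γ {w}ᶜ) (hc : h * x * h⁻¹ ∈ parabolic Γ {w}ᶜ) :
    ∃ k, k * x * k⁻¹ ∈ parabolic Γ (Γ.neighborSet w) := by
  have hbase : toVertexHNN Γ w h ∉ (HNNExtension.of : _ →* VertexHNN Γ w).range := by
    rintro ⟨y, hy⟩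
    rw [← toVertexHNN_coe] at hy
    exact hh (toVertexHNN_injective w hy ▸ y.2)
  have hconj : toVertexHNN Γ w h * HNNExtension.of ⟨x, hx⟩ * (toVertexHNN Γ w h)⁻¹ =
      HNNExtension.of ⟨_, hc⟩ := by
    rw [← toVertexHNN_coe, ← toVertexHNN_coe]
    simp
  obtain ⟨u, k, hk⟩ := hnn_exists_conj_mem_toSubgroup hbase hconj
  have hsub : HNNExtension.toSubgroup (linkSubgroup Γ w) (linkSubgroup Γ w) u =
      linkSubgroup Γ w := by
    rcases Int.units_eq_one_or u with rfl | rfl <;> rfl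
  rw [hsub, Subgroup.mem_subgroupOf] at hk
  exact ⟨k, hk⟩

end VertexHNN

section CyclicallyReduced

variable {W : Type} {Γ : SimpleGraph W} {S T : Set W} {c h x y : RAAG Γ} {v : W}

/-- `c` is cyclically reduced with support `S`: it lies in `⟨S⟩`, and each of its conjugates
involves all the letters of `S`. -/
def IsCyclicallyReduced (S : Set W) (c : RAAG Γ) : Prop :=
  c ∈ parabolic Γ S ∧ ∀ w ∈ S, ∀ h : RAAG Γ, h * c * h⁻¹ ∉ parabolic Γ {w}ᶜ

/-- The set `S^⊥` of the vertices adjacent to every vertex of `S`. -/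
def perp (Γ : SimpleGraph W) (S : Set W) : Set W := {w | ∀ s ∈ S, Γ.Adj w s}

/-- `P` is the parabolic closure of `x`: it contains `x` and lies in every conjugate of a standard
parabolic subgroup that contains `x`. -/
def IsParabolicClosure (P : Subgroup (RAAG Γ)) (x : RAAG Γ) : Prop :=
  x ∈ P ∧ ∀ (k : RAAG Γ) (T : Set W),
    x ∈ MulAut.conj k • parabolic Γ T → P ≤ MulAut.conj k • parabolic Γ T

lemma exists_isCyclicallyReduced_conj [Finite W] (x : RAAG Γ) :
    ∃ (h : RAAG Γ) (S : Set W), IsCyclicallyReduced S (h⁻¹ * x * h) := by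
  classical
  have hex : ∃ n : ℕ, ∃ (h : RAAG Γ) (S : Set W), S.ncard = n ∧ h⁻¹ * x * h ∈ parabolic Γ S :=
    ⟨_, 1, Set.univ, rfl, by simp⟩
  obtain ⟨h, S, hcard, hmem⟩ := Nat.find_spec hex
  refine ⟨h, S, hmem, fun w hw k hk => ?_⟩
  have hlt : (S ∩ {w}ᶜ).ncard < Nat.find hex := by
    rw [← hcard]
    exact Set.ncard_lt_ncard (Set.inter_ssubset_left_iff.2 fun hS => hS hw rfl) (Set.toFinite _)
  refine Nat.find_min hex hlt ⟨h * (retract Γ S k)⁻¹, _, rfl, ?_⟩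
  have := retract_mem_parabolic_inter (S := S) hk
  rw [map_mul, map_mul, map_inv, retract_eq_self hmem] at this
  simpa [mul_assoc] using this

lemma isCyclicallyReduced_of_expSum_ne_one (hc : c ∈ parabolic Γ S)
    (hne : ∀ w ∈ S, expSum Γ w c ≠ 1) : IsCyclicallyReduced S c := by
  refine ⟨hc, fun w hw k hk => hne w hw ?_⟩
  rw [← expSum_conj w k]
  exact expSum_eq_one (by simp) hk

lemma IsCyclicallyReduced.mem_parabolic_union_perp [Finite W] (hc : IsCyclicallyReduced S c)
    (hh : h * c * h⁻¹ ∈ parabolic Γ S) : h ∈ parabolic Γ (S ∪ perp Γ S) := by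
  refine mem_parabolic_of_forall_notMem fun w hw => ?_
  by_contra hn
  have hsub : S ⊆ {w}ᶜ := Set.subset_compl_singleton_iff.2 fun hS => hw (Or.inl hS)
  obtain ⟨k, hk⟩ := exists_conj_mem_parabolic_neighborSet (parabolic_mono hsub hc.1) hn
    (parabolic_mono hsub hh)
  refine hw (Or.inr fun s hs => ?_)
  by_contra hadj
  exact hc.2 s hs k (parabolic_mono (Set.subset_compl_singleton_iff.2 hadj) hk)

lemma IsCyclicallyReduced.mem_of_commute [Finite W] (hc : IsCyclicallyReduced S c)
    (hh : Commute h c) : h ∈ parabolic Γ (S ∪ perp Γ S) := by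
  refine hc.mem_parabolic_union_perp ?_
  rw [hh.eq, mul_inv_cancel_right]
  exact hc.1

lemma conj_mem_parabolic_of_normalizes {U : Set W} (hU : ∀ u ∈ U, u ∈ S ∨ u ∈ perp Γ S)
    (hx : x ∈ parabolic Γ U) (hy : y ∈ parabolic Γ S) : x * y * x⁻¹ ∈ parabolic Γ S := by
  suffices parabolic Γ U ≤ Subgroup.normalizer (parabolic Γ S : Set (RAAG Γ)) from
    (Subgroup.mem_normalizer_iff.1 (this hx) y).1 hy
  rw [parabolic_le]
  intro u hu
  rcases hU u hu with hS | hperp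
  · exact Subgroup.le_normalizer (gen_mem_parabolic hS)
  · refine Subgroup.centralizer_le_normalizer _ (Subgroup.mem_centralizer_iff.2 fun z hz => ?_)
    exact (commute_of_mem_parabolic (fun s hs => commute_gen (hperp s hs)) hz).eq.symm

lemma IsCyclicallyReduced.parabolic_le_of_mem [Finite W] {k : RAAG Γ}
    (hx : IsCyclicallyReduced S x) (hk : x ∈ MulAut.conj k • parabolic Γ T) :
    parabolic Γ S ≤ MulAut.conj k • parabolic Γ T := by
  rw [mem_conj_smul] at hk
  set j := retract Γ T k
  set m := j * k⁻¹ with hm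
  have hjT : j ∈ parabolic Γ T := retract_mem T k
  have hmx : m * x * m⁻¹ = retract Γ T x := by
    have : j⁻¹ * retract Γ T x * j = k⁻¹ * x * k := by simpa using retract_eq_self hk
    calc m * x * m⁻¹ = j * (k⁻¹ * x * k) * j⁻¹ := by rw [hm]; group
      _ = retract Γ T x := by rw [← this]; group
  have hST : S ⊆ T := by
    intro w hw
    by_contra hwT
    refine hx.2 w hw m ?_
    rw [hmx]
    exact parabolic_mono (Set.subset_compl_singleton_iff.2 hwT) (retract_mem T x)
  rw [retract_eq_self (parabolic_mono hST hx.1)] at hmx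
  have hmS : m ∈ parabolic Γ (S ∪ perp Γ S) := hx.mem_parabolic_union_perp (by rw [hmx]; exact hx.1)
  intro y hy
  have hmy := parabolic_mono hST (conj_mem_parabolic_of_normalizes (fun _ hu => hu) hmS hy)
  have := mul_mem (mul_mem (inv_mem hjT) hmy) hjT
  rw [mem_conj_smul]
  convert this using 1
  rw [hm]
  group

lemma isParabolicClosure_parabolic_iff [Finite W] :
    IsParabolicClosure (parabolic Γ S) c ↔ IsCyclicallyReduced S c := by
  refine ⟨fun h => ⟨h.1, fun w hw k hk => ?_⟩, fun h => ⟨h.1, fun k T => h.parabolic_le_of_mem⟩⟩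
  have hmem : c ∈ MulAut.conj k⁻¹ • parabolic Γ {w}ᶜ := by
    rw [mem_conj_smul]
    simpa using hk
  have hgen := mem_conj_smul.1 (h.2 _ _ hmem (gen_mem_parabolic hw))
  have := expSum_eq_one (w := w) (by simp) hgen
  simp at this

lemma IsParabolicClosure.conj {P : Subgroup (RAAG Γ)} (hP : IsParabolicClosure P x)
    (g : RAAG Γ) : IsParabolicClosure (MulAut.conj g • P) (g * x * g⁻¹) := by
  refine ⟨conj_mem_conj_smul.2 hP.1, fun k T hk => ?_⟩
  rw [Subgroup.pointwise_smul_subset_iff, ← map_inv, ← mul_smul, ← map_mul]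
  refine hP.2 _ _ ?_
  rw [mem_conj_smul] at hk ⊢
  simpa [mul_assoc] using hk

lemma isCyclicallyReduced_gen_zpow (v : W) {n : ℤ} (hn : n ≠ 0) :
    IsCyclicallyReduced {v} (gen Γ v ^ n) := by
  refine isCyclicallyReduced_of_expSum_ne_one
    (zpow_mem (gen_mem_parabolic (Set.mem_singleton _)) n) ?_
  rintro w rfl
  simpa only [expSum_gen_zpow, ne_eq, ofAdd_eq_one] using hn

lemma mem_parabolic_starSet_of_commute_zpow [Finite W] {n : ℤ} (hn : n ≠ 0)
    (h : Commute x (gen Γ v ^ n)) : x ∈ parabolic Γ (starSet Γ v) := by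
  refine parabolic_mono ?_ ((isCyclicallyReduced_gen_zpow v hn).mem_of_commute h)
  rintro u (hu | hu)
  · exact Or.inl hu
  · exact Or.inr (hu v rfl).symm

lemma mem_parabolic_starSet_of_commute [Finite W] (h : Commute x (gen Γ v)) :
    x ∈ parabolic Γ (starSet Γ v) :=
  mem_parabolic_starSet_of_commute_zpow one_ne_zero (by simpa using h)

lemma commute_gen_iff [Finite W] {u v : W} : Commute (gen Γ u) (gen Γ v) ↔ u = v ∨ Γ.Adj u v := by
  refine ⟨fun h => ?_, ?_⟩
  · exact (gen_mem_parabolic_iff.1 (mem_parabolic_starSet_of_commute h)).imp id fun h => h.symm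
  · rintro (rfl | h)
    · exact Commute.refl _
    · exact commute_gen h

lemma IsCyclicallyReduced.retract {D : Set W} (hc : IsCyclicallyReduced S c) (hDS : D ⊆ S)
    (hjoin : ∀ d ∈ D, ∀ s ∈ S \ D, Γ.Adj d s) :
    IsCyclicallyReduced D (retract Γ D c) := by
  refine ⟨retract_mem _ _, fun w hw g hg => hc.2 w (hDS hw) (RAAG.retract Γ D g) ?_⟩
  set g' := RAAG.retract Γ D g
  set a := RAAG.retract Γ D c
  set b := RAAG.retract Γ (S \ D) c
  have hcab : c = a * b := by
    rw [← retract_union hjoin, Set.union_sdiff_cancel hDS, retract_eq_self hc.1]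
  have hcomm : Commute g' b :=
    commute_of_mem_parabolic_of_adj hjoin (retract_mem _ _) (retract_mem _ _)
  have hconj : g' * c * g'⁻¹ = (g' * a * g'⁻¹) * b := by
    rw [hcab, ← mul_assoc, mul_assoc _ b, ← hcomm.inv_left.eq, ← mul_assoc]
  have ha : g' * a * g'⁻¹ ∈ parabolic Γ {w}ᶜ := by
    have := retract_mem_of_mem (S := D) hg
    rwa [map_mul, map_mul, map_inv, retract_retract, Set.inter_self] at this
  rw [hconj]
  refine mul_mem ha (parabolic_mono ?_ (retract_mem _ _))
  exact Set.subset_compl_singleton_iff.2 fun h => h.2 hw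

end CyclicallyReduced

section CoConnected

variable {W : Type} {Γ : SimpleGraph W} {S C D D' : Set W} {u v w : W}

/-- `a` and `b` are vertices of `S` that are not adjacent in `Γ`; equal vertices are allowed. -/
def CoAdj (Γ : SimpleGraph W) (S : Set W) (a b : W) : Prop := a ∈ S ∧ b ∈ S ∧ ¬ Γ.Adj a b

lemma CoAdj.symm {a b : W} (h : CoAdj Γ S a b) : CoAdj Γ S b a :=
  ⟨h.2.1, h.1, fun hadj => h.2.2 hadj.symm⟩

/-- The vertex set of the connected component of `v` in the complement of the graph induced by `Γ`
on `S`, for `v ∈ S`. -/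
def coComponent (Γ : SimpleGraph W) (S : Set W) (v : W) : Set W :=
  {u | Relation.ReflTransGen (CoAdj Γ S) v u}

/-- The complement of the graph induced by `Γ` on `C` is connected. -/
def CoConnected (Γ : SimpleGraph W) (C : Set W) : Prop :=
  C.Nonempty ∧ ∀ u ∈ C, ∀ v ∈ C, Relation.ReflTransGen (CoAdj Γ C) u v

lemma reflTransGen_coAdj_symm (h : Relation.ReflTransGen (CoAdj Γ S) u v) :
    Relation.ReflTransGen (CoAdj Γ S) v u :=
  have : Std.Symm (CoAdj Γ S) := ⟨fun _ _ => CoAdj.symm⟩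
  Std.Symm.symm _ _ h

lemma coComponent_subset (hv : v ∈ S) : coComponent Γ S v ⊆ S := fun _ hu =>
  (Relation.ReflTransGen.cases_tail hu).elim (fun h => h ▸ hv) fun ⟨_, _, h⟩ => h.2.1

lemma mem_coComponent_self : v ∈ coComponent Γ S v := Relation.ReflTransGen.refl

lemma coComponent_eq (h : u ∈ coComponent Γ S v) : coComponent Γ S u = coComponent Γ S v :=
  Set.ext fun _ => ⟨fun hz => h.trans hz, fun hz => (reflTransGen_coAdj_symm h).trans hz⟩

lemma adj_of_mem_coComponent {a b : W} (hv : v ∈ S) (ha : a ∈ coComponent Γ S v) (hb : b ∈ S)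
    (hb' : b ∉ coComponent Γ S v) : Γ.Adj a b := by
  by_contra h
  exact hb' (Relation.ReflTransGen.tail ha ⟨coComponent_subset hv ha, hb, h⟩)

lemma coConnected_coComponent (S : Set W) (v : W) : CoConnected Γ (coComponent Γ S v) := by
  have hconn : ∀ u ∈ coComponent Γ S v,
      Relation.ReflTransGen (CoAdj Γ (coComponent Γ S v)) v u := by
    intro u hu
    induction hu with
    | refl => exact .refl
    | tail h₁ h₂ ih => exact ih.tail ⟨h₁, h₁.tail h₂, h₂.2.2⟩
  exact ⟨⟨v, mem_coComponent_self⟩, fun u hu w hw =>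
    (reflTransGen_coAdj_symm (hconn u hu)).trans (hconn w hw)⟩

lemma CoConnected.exists_ne_not_adj (hC : CoConnected Γ C) (hnt : C.Nontrivial) (hw : w ∈ C) :
    ∃ v ∈ C, v ≠ w ∧ ¬ Γ.Adj w v := by
  obtain ⟨z, hz, hzw⟩ := hnt.exists_ne w
  induction hC.2 w hw z hz with
  | refl => exact absurd rfl hzw
  | @tail b c _ hbc ih =>
    rcases eq_or_ne b w with rfl | hb
    · exact ⟨c, hz, hzw, hbc.2.2⟩
    · exact ih hbc.1 hb

lemma CoConnected.disjoint_centralizer [Finite W] (hC : CoConnected Γ C) (hnt : C.Nontrivial) :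
    Disjoint (parabolic Γ C) (Subgroup.centralizer (parabolic Γ C)) := by
  rw [Subgroup.disjoint_def]
  intro m hm hcent
  suffices m ∈ parabolic Γ ∅ by simpa using this
  refine mem_parabolic_of_forall_notMem fun w _ => ?_
  by_cases hw : w ∈ C
  · obtain ⟨v, hv, hvw, hadj⟩ := hC.exists_ne_not_adj hnt hw
    have hcomm : Commute m (gen Γ v) := (hcent _ (gen_mem_parabolic hv)).symm
    refine parabolic_mono (Set.subset_compl_singleton_iff.2 ?_)
      (mem_parabolic_starSet_of_commute hcomm)
    rintro (h | h)
    · exact hvw h.symm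
    · exact hadj (Γ.adj_symm h)
  · exact parabolic_mono (Set.subset_compl_singleton_iff.2 hw) hm

lemma conj_gen_mem_or_of_join (hjoin : ∀ d ∈ D, ∀ d' ∈ D', Γ.Adj d d') {k : RAAG Γ}
    (h : k * gen Γ u * k⁻¹ ∈ parabolic Γ (D ∪ D')) :
    k * gen Γ u * k⁻¹ ∈ parabolic Γ D ∨ k * gen Γ u * k⁻¹ ∈ parabolic Γ D' := by
  have hret := retract_eq_self h
  rw [map_mul, map_mul, map_inv] at hret
  have hk := retract_mem (D ∪ D') k
  rw [← hret]
  by_cases hu : u ∈ D ∪ D'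
  · rw [retract_gen_of_mem hu]
    refine hu.imp (fun hu => ?_) (fun hu => ?_)
    · refine conj_mem_parabolic_of_normalizes (fun w hw => ?_) hk (gen_mem_parabolic hu)
      exact hw.imp id fun hw s hs => (hjoin s hs w hw).symm
    · refine conj_mem_parabolic_of_normalizes (fun w hw => ?_) hk (gen_mem_parabolic hu)
      exact hw.symm.imp id fun hw s hs => hjoin w hw s hs
  · simp [retract_gen_of_notMem hu]

lemma conj_gen_mem_of_not_adj [Finite W] (hjoin : ∀ d ∈ D, ∀ d' ∈ D', Γ.Adj d d') {k : RAAG Γ}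
    (hu : k * gen Γ u * k⁻¹ ∈ parabolic Γ D) (hw : k * gen Γ w * k⁻¹ ∈ parabolic Γ (D ∪ D'))
    (hadj : ¬ Γ.Adj u w) : k * gen Γ w * k⁻¹ ∈ parabolic Γ D := by
  refine (conj_gen_mem_or_of_join hjoin hw).elim id fun hw' => ?_
  have hcomm := commute_of_mem_parabolic_of_adj hjoin hu hw'
  rcases commute_gen_iff.1 ((Commute.conj_iff k).1 hcomm) with rfl | h
  · exact hu
  · exact absurd h hadj

lemma CoConnected.conj_smul_le [Finite W] (hC : CoConnected Γ C)
    (hjoin : ∀ d ∈ D, ∀ d' ∈ D', Γ.Adj d d') {k : RAAG Γ}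
    (hk : MulAut.conj k • parabolic Γ C ≤ parabolic Γ (D ∪ D')) (hu : u ∈ C)
    (hmem : k * gen Γ u * k⁻¹ ∈ parabolic Γ D) : MulAut.conj k • parabolic Γ C ≤ parabolic Γ D := by
  rw [Subgroup.pointwise_smul_subset_iff, ← map_inv, parabolic_le]
  intro w hw
  rw [mem_conj_smul, inv_inv]
  induction hC.2 u hu w hw with
  | refl => exact hmem
  | tail _ hbc ih =>
    exact conj_gen_mem_of_not_adj hjoin (ih hbc.1)
      (hk (conj_mem_conj_smul.2 (gen_mem_parabolic hw))) hbc.2.2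

lemma CoConnected.conj_smul_le_or_of_join [Finite W] (hC : CoConnected Γ C)
    (hjoin : ∀ d ∈ D, ∀ d' ∈ D', Γ.Adj d d') {k : RAAG Γ}
    (hk : MulAut.conj k • parabolic Γ C ≤ parabolic Γ (D ∪ D')) :
    MulAut.conj k • parabolic Γ C ≤ parabolic Γ D ∨
      MulAut.conj k • parabolic Γ C ≤ parabolic Γ D' := by
  obtain ⟨u, hu⟩ := hC.1
  refine (conj_gen_mem_or_of_join hjoin (hk (conj_mem_conj_smul.2 (gen_mem_parabolic hu)))).imp
    (hC.conj_smul_le hjoin hk hu) ?_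
  rw [Set.union_comm] at hk
  exact hC.conj_smul_le (fun d hd d' hd' => (hjoin d' hd' d hd).symm) hk hu

lemma CoConnected.conj_smul_le_coComponent_or [Finite W] (hC : CoConnected Γ C) {k : RAAG Γ}
    (hk : MulAut.conj k • parabolic Γ C ≤ parabolic Γ (S ∪ perp Γ S)) (hv : v ∈ S) :
    MulAut.conj k • parabolic Γ C ≤ parabolic Γ (coComponent Γ S v) ∨
      MulAut.conj k • parabolic Γ C ≤
        Subgroup.centralizer (parabolic Γ (coComponent Γ S v)) := by
  have hsub := coComponent_subset (Γ := Γ) hv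
  have hjoin : ∀ d ∈ coComponent Γ S v, ∀ d' ∈ (S ∪ perp Γ S) \ coComponent Γ S v, Γ.Adj d d' := by
    rintro d hd d' ⟨hS | hperp, hn⟩
    · exact adj_of_mem_coComponent hv hd hS hn
    · exact (hperp d (hsub hd)).symm
  rw [← Set.union_sdiff_cancel (hsub.trans Set.subset_union_left)] at hk
  refine (hC.conj_smul_le_or_of_join hjoin hk).imp id fun h => h.trans ?_
  exact parabolic_le_centralizer fun u hu v hv => (commute_gen (hjoin v hv u hu)).symm

/-- `P` is conjugate to a standard parabolic subgroup that does not split as a direct product of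
standard parabolic subgroups. -/
def IsIrreducibleParabolic (P : Subgroup (RAAG Γ)) : Prop :=
  ∃ (h : RAAG Γ) (C : Set W), CoConnected Γ C ∧ P = MulAut.conj h • parabolic Γ C

lemma IsIrreducibleParabolic.le_centralizer_or_disjoint [Finite W] {P : Subgroup (RAAG Γ)}
    (hP : IsIrreducibleParabolic P) :
    P ≤ Subgroup.centralizer P ∨ Disjoint P (Subgroup.centralizer P) := by
  obtain ⟨h, C, hC, rfl⟩ := hP
  rcases C.subsingleton_or_nontrivial with hss | hnt
  · left
    rw [conj_smul_le_centralizer]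
    exact parabolic_le_centralizer fun u hu v hv => hss hu hv ▸ Commute.refl _
  · right
    rw [Subgroup.disjoint_def]
    intro m hm hcent
    have hone := Subgroup.disjoint_def.1 (hC.disjoint_centralizer hnt) (mem_conj_smul.1 hm)
      fun p hp => by
        have : h * p * h⁻¹ * m = m * (h * p * h⁻¹) := hcent _ (conj_mem_conj_smul.2 hp)
        rw [← mul_left_cancel_iff (a := h), ← mul_right_cancel_iff (a := h⁻¹)]
        simpa [mul_assoc] using this
    simpa using conj_eq_one_iff.1 (show h⁻¹ * m * h⁻¹⁻¹ = 1 by simpa using hone)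

end CoConnected

section Factors

variable {W : Type} {Γ : SimpleGraph W} [Finite W] {x y : RAAG Γ} {P Q : Subgroup (RAAG Γ)}
  {T T' : Set (Subgroup (RAAG Γ))} {u v : W}

/-- A chosen element conjugating `x` into a cyclically reduced element. -/
noncomputable def conjugator (x : RAAG Γ) : RAAG Γ := (exists_isCyclicallyReduced_conj x).choose

/-- The essential support of `x`: the support of its cyclic reduction. -/
noncomputable def essSupport (x : RAAG Γ) : Set W :=
  (exists_isCyclicallyReduced_conj x).choose_spec.choose

/-- The cyclic reduction of `x`. -/
noncomputable def core (x : RAAG Γ) : RAAG Γ := (conjugator x)⁻¹ * x * conjugator x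

lemma isCyclicallyReduced_core (x : RAAG Γ) : IsCyclicallyReduced (essSupport x) (core x) :=
  (exists_isCyclicallyReduced_conj x).choose_spec.choose_spec

lemma conj_core (x : RAAG Γ) : conjugator x * core x * (conjugator x)⁻¹ = x := by
  rw [core]
  group

/-- The irreducible factor at `v` of the parabolic closure of `x`, for `v` in the essential support
of `x`. -/
noncomputable def factor (x : RAAG Γ) (v : W) : Subgroup (RAAG Γ) :=
  MulAut.conj (conjugator x) • parabolic Γ (coComponent Γ (essSupport x) v)

/-- The irreducible factors of the parabolic closure of `x`, which is their direct product. -/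
def factors (x : RAAG Γ) : Set (Subgroup (RAAG Γ)) := factor x '' essSupport x

/-- The vertices of the essential support of `x` whose factor belongs to `T`. -/
def factorSupport (x : RAAG Γ) (T : Set (Subgroup (RAAG Γ))) : Set W :=
  {v | v ∈ essSupport x ∧ factor x v ∈ T}

/-- The component of `x` in the product of those of its factors that belong to `T`. -/
noncomputable def part (x : RAAG Γ) (T : Set (Subgroup (RAAG Γ))) : RAAG Γ :=
  conjugator x * retract Γ (factorSupport x T) (core x) * (conjugator x)⁻¹

lemma factors_finite (x : RAAG Γ) : (factors x).Finite := (Set.toFinite (essSupport x)).image _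

lemma isIrreducibleParabolic_of_mem_factors (hP : P ∈ factors x) : IsIrreducibleParabolic P := by
  obtain ⟨v, -, rfl⟩ := hP
  exact ⟨conjugator x, _, coConnected_coComponent _ _, rfl⟩

lemma le_of_mem_factors {k : RAAG Γ} {S : Set W} (hP : P ∈ factors x)
    (hx : x ∈ MulAut.conj k • parabolic Γ S) : P ≤ MulAut.conj k • parabolic Γ S := by
  obtain ⟨v, hv, rfl⟩ := hP
  have hclosure := (isParabolicClosure_parabolic_iff.2 (isCyclicallyReduced_core x)).conj
    (conjugator x)
  rw [conj_core] at hclosure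
  exact (smul_mono_right _ (parabolic_mono (coComponent_subset hv))).trans (hclosure.2 k S hx)

lemma le_or_le_centralizer_of_commute (hP : IsIrreducibleParabolic P)
    (hx : ∀ (k : RAAG Γ) (S : Set W),
      x ∈ MulAut.conj k • parabolic Γ S → P ≤ MulAut.conj k • parabolic Γ S)
    (h : Commute x y) (hQ : Q ∈ factors y) : P ≤ Q ∨ P ≤ Subgroup.centralizer Q := by
  obtain ⟨v, hv, rfl⟩ := hQ
  obtain ⟨k, C, hC, rfl⟩ := hP
  have hcomm : Commute ((conjugator y)⁻¹ * x * conjugator y) (core y) := by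
    simpa [core] using (Commute.conj_iff (conjugator y)⁻¹).2 h
  have hmem : x ∈ MulAut.conj (conjugator y) •
      parabolic Γ (essSupport y ∪ perp Γ (essSupport y)) :=
    mem_conj_smul.2 ((isCyclicallyReduced_core y).mem_of_commute hcomm)
  have hle : MulAut.conj ((conjugator y)⁻¹ * k) • parabolic Γ C ≤
      parabolic Γ (essSupport y ∪ perp Γ (essSupport y)) := by
    rw [map_mul, mul_smul, map_inv, ← Subgroup.subset_pointwise_smul_iff]
    exact hx _ _ hmem
  have hmul : MulAut.conj (conjugator y) • MulAut.conj ((conjugator y)⁻¹ * k) • parabolic Γ C =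
      MulAut.conj k • parabolic Γ C := by
    rw [← mul_smul, ← map_mul, mul_inv_cancel_left]
  rw [← hmul, factor, Subgroup.pointwise_smul_le_pointwise_smul_iff, conj_smul_le_centralizer]
  exact hC.conj_smul_le_coComponent_or hle hv

lemma eq_or_le_centralizer_of_mem_factors (h : Commute x y) (hP : P ∈ factors x)
    (hQ : Q ∈ factors y) : P = Q ∨ P ≤ Subgroup.centralizer Q := by
  have key {x y : RAAG Γ} {P Q : Subgroup (RAAG Γ)} (h : Commute x y) (hP : P ∈ factors x)
      (hQ : Q ∈ factors y) : P ≤ Q ∨ P ≤ Subgroup.centralizer Q :=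
    le_or_le_centralizer_of_commute (isIrreducibleParabolic_of_mem_factors hP)
      (fun _ _ => le_of_mem_factors hP) h hQ
  rcases key h hP hQ with hPQ | hcomm
  · exact (key h.symm hQ hP).imp hPQ.antisymm Subgroup.le_centralizer_iff.1
  · exact Or.inr hcomm

lemma factor_eq_iff :
    factor x u = factor x v ↔ u ∈ coComponent Γ (essSupport x) v := by
  refine ⟨fun h => ?_, fun h => by rw [factor, coComponent_eq h, factor]⟩
  have hmem : conjugator x * gen Γ u * (conjugator x)⁻¹ ∈ factor x v := by
    rw [← h]
    exact conj_mem_conj_smul.2 (gen_mem_parabolic mem_coComponent_self)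
  exact gen_mem_parabolic_iff.1 (conj_mem_conj_smul.1 hmem)

lemma factorSupport_singleton (hv : v ∈ essSupport x) :
    factorSupport x {factor x v} = coComponent Γ (essSupport x) v :=
  Set.ext fun _ => ⟨fun h => factor_eq_iff.1 h.2,
    fun h => ⟨coComponent_subset hv h, factor_eq_iff.2 h⟩⟩

lemma adj_of_mem_factorSupport (h : Disjoint T T') (hu : u ∈ factorSupport x T)
    (hv : v ∈ factorSupport x T') : Γ.Adj u v := by
  refine adj_of_mem_coComponent hu.1 mem_coComponent_self hv.1 fun hmem => ?_
  refine Set.disjoint_left.1 h hu.2 ?_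
  rw [← factor_eq_iff.2 hmem]
  exact hv.2

lemma part_union (h : Disjoint T T') : part x (T ∪ T') = part x T * part x T' := by
  have hsupp : factorSupport x (T ∪ T') = factorSupport x T ∪ factorSupport x T' := by
    ext v
    simp only [factorSupport, Set.mem_ofPred_eq, Set.mem_union, and_or_left]
  rw [part, hsupp, retract_union fun _ hu _ hv => adj_of_mem_factorSupport h hu hv, part, part]
  group

lemma part_inter_factors (x : RAAG Γ) (T : Set (Subgroup (RAAG Γ))) :
    part x (T ∩ factors x) = part x T := by
  have hsupp : factorSupport x (T ∩ factors x) = factorSupport x T :=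
    Set.ext fun v => ⟨fun h => ⟨h.1, h.2.1⟩, fun h => ⟨h.1, h.2, v, h.1, rfl⟩⟩
  rw [part, hsupp, part]

@[simp] lemma part_empty (x : RAAG Γ) : part x ∅ = 1 := by
  have hsupp : factorSupport x ∅ = ∅ := by simp [factorSupport]
  have := retract_mem ∅ (core x)
  rw [parabolic_empty, Subgroup.mem_bot] at this
  simp [part, hsupp, this]

@[simp] lemma part_univ (x : RAAG Γ) : part x Set.univ = x := by
  have hsupp : factorSupport x Set.univ = essSupport x := by simp [factorSupport]
  rw [part, hsupp, retract_eq_self (isCyclicallyReduced_core x).1, conj_core]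

lemma part_eq_one (h : Disjoint T (factors x)) : part x T = 1 := by
  rw [← part_inter_factors, h.inter_eq, part_empty]

lemma part_mul_part_compl (x : RAAG Γ) (T : Set (Subgroup (RAAG Γ))) :
    part x T * part x Tᶜ = x := by
  rw [← part_union disjoint_compl_right, Set.union_compl_self, part_univ]

lemma isParabolicClosure_part_singleton (hP : P ∈ factors x) :
    IsParabolicClosure P (part x {P}) := by
  obtain ⟨v, hv, rfl⟩ := hP
  rw [part, factorSupport_singleton hv]
  refine (isParabolicClosure_parabolic_iff.2 ?_).conj _
  exact (isCyclicallyReduced_core x).retract (coComponent_subset hv)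
    fun d hd s hs => adj_of_mem_coComponent hv hd hs.1 hs.2

lemma part_singleton_mem (hP : P ∈ factors x) : part x {P} ∈ P :=
  (isParabolicClosure_part_singleton hP).1

lemma part_mem_of_forall {H : Subgroup (RAAG Γ)}
    (hH : ∀ P ∈ T, P ∈ factors x → part x {P} ∈ H) : part x T ∈ H := by
  rw [← part_inter_factors]
  have hfin : (T ∩ factors x).Finite := (factors_finite x).subset Set.inter_subset_right
  have hsub : ∀ P ∈ T ∩ factors x, part x {P} ∈ H := fun P hP => hH P hP.1 hP.2
  generalize T ∩ factors x = F at hfin hsub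
  induction F, hfin using Set.Finite.induction_on with
  | empty => simp
  | @insert a s ha _ ih =>
    rw [Set.insert_eq, part_union (Set.disjoint_singleton_left.2 ha)]
    exact mul_mem (hsub a (Set.mem_insert _ _)) (ih fun P hP => hsub P (Set.mem_insert_of_mem _ hP))

lemma part_compl_mem_centralizer (hP : P ∈ factors x) :
    part x {P}ᶜ ∈ Subgroup.centralizer (P : Set (RAAG Γ)) := by
  refine part_mem_of_forall fun Q hQ hQx => ?_
  rcases eq_or_le_centralizer_of_mem_factors (Commute.refl x) hQx hP with rfl | h
  · exact absurd rfl hQ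
  · exact h (part_singleton_mem hQx)

/- The commutators `⁅α, β⁆` and `⁅a, b⁆` are inverse to each other. One lies in `P` and the other
in its centralizer. -/
lemma commute_of_commute_mul {G : Type*} [Group G] {P : Subgroup G} {α β a b : G}
    (hα : α ∈ P) (hβ : β ∈ P) (ha : a ∈ Subgroup.centralizer (P : Set G))
    (hb : b ∈ Subgroup.centralizer (P : Set G)) (hP : Disjoint P (Subgroup.centralizer P))
    (h : Commute (α * a) (β * b)) : Commute α β := by
  have haβ : Commute β a := ha β hβ
  have hbα : Commute α b := hb α hα
  have hmul : (α * β) * (a * b) = (β * α) * (b * a) := by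
    rw [← haβ.symm.mul_mul_mul_comm, h.eq, hbα.symm.mul_mul_mul_comm]
  have heq : (β * α)⁻¹ * (α * β) = b * a * (a * b)⁻¹ := by
    rw [inv_mul_eq_iff_eq_mul, ← mul_assoc, eq_mul_inv_iff_mul_eq, hmul]
  have hone : (β * α)⁻¹ * (α * β) = 1 := by
    refine Subgroup.disjoint_def.1 hP
      (mul_mem (inv_mem (mul_mem hβ hα)) (mul_mem hα hβ)) ?_
    rw [heq]
    exact mul_mem (mul_mem hb ha) (inv_mem (mul_mem ha hb))
  exact (inv_mul_eq_one.1 hone).symm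

lemma commute_part_singleton (h : Commute x y) (hP : P ∈ factors x) (hQ : Q ∈ factors y) :
    Commute (part x {P}) (part y {Q}) := by
  rcases eq_or_le_centralizer_of_mem_factors h hP hQ with rfl | hPQ
  · rcases (isIrreducibleParabolic_of_mem_factors hP).le_centralizer_or_disjoint with hab | hdisj
    · exact hab (part_singleton_mem hQ) _ (part_singleton_mem hP)
    · refine commute_of_commute_mul (part_singleton_mem hP) (part_singleton_mem hQ)
        (part_compl_mem_centralizer hP) (part_compl_mem_centralizer hQ) hdisj ?_
      rwa [part_mul_part_compl, part_mul_part_compl]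
  · exact (hPQ (part_singleton_mem hP) _ (part_singleton_mem hQ)).symm

lemma commute_part (h : Commute x y) (T T' : Set (Subgroup (RAAG Γ))) :
    Commute (part x T) (part y T') := by
  suffices part x T ∈ Subgroup.centralizer {part y T'} from
    Subgroup.mem_centralizer_singleton_iff.1 this
  refine part_mem_of_forall fun P _ hP => Subgroup.mem_centralizer_singleton_iff.2 ?_
  suffices part y T' ∈ Subgroup.centralizer {part x {P}} from
    (Subgroup.mem_centralizer_singleton_iff.1 this).symm
  refine part_mem_of_forall fun Q _ hQ => Subgroup.mem_centralizer_singleton_iff.2 ?_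
  exact (commute_part_singleton h hP hQ).symm

end Factors

section HNNCommute

open HNNExtension HNNExtension.NormalWord

variable {G : Type*} [Group G] {A B : Subgroup G} {φ : A ≃* B}

/-- The letters of the normal form of `x`. They depend only on the coset of `x` modulo the base
group, and they describe the geodesic from the base vertex to this coset in the Bass-Serre tree. -/
noncomputable def normalLetters (d : TransversalPair G A B) (x : HNNExtension G A B φ) :
    List (ℤˣ × G) :=
  (x • (empty : NormalWord d)).toList

variable {d : TransversalPair G A B} {l l₁ l₂ : List (ℤˣ × G)} {a b x y : HNNExtension G A B φ}

lemma exists_wordProd_pinch {e e' : ℤˣ × G} (he : e.2 ∈ toSubgroup A B e.1) (hne : e.1 ≠ e'.1) :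
    ∃ g : G, wordProd φ [e, e'] = of g := by
  obtain ⟨u, g⟩ := e
  obtain ⟨u', g'⟩ := e'
  obtain rfl : u' = -u := by
    change u ≠ u' at hne
    rw [Int.units_ne_iff_eq_neg.1 hne, neg_neg]
  rcases Int.units_eq_one_or u with rfl | rfl
  · exact ⟨φ ⟨g, he⟩ * g', by simp [equiv_eq_conj, mul_assoc]⟩
  · exact ⟨φ.symm ⟨g, he⟩ * g', by simp [equiv_symm_eq_conj, mul_assoc]⟩

lemma normalLetters_of_mul (g : G) (x : HNNExtension G A B φ) :
    normalLetters d (of g * x) = normalLetters d x := by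
  rw [normalLetters, mul_smul, of_smul_eq_smul, group_smul_toList, normalLetters]

lemma exists_eq_of_mul_wordProd_normalLetters (d : TransversalPair G A B)
    (x : HNNExtension G A B φ) : ∃ g : G, x = of g * wordProd φ (normalLetters d x) := by
  refine ⟨(x • (empty : NormalWord d)).head, ?_⟩
  have := prod_smul φ x (empty : NormalWord d)
  rw [prod_empty, mul_one] at this
  exact this.symm

lemma exists_eq_of_mul_of_normalLetters_eq (h : normalLetters d x = normalLetters d y) :
    ∃ g : G, x = of g * y := by
  obtain ⟨g, hg⟩ := exists_eq_of_mul_wordProd_normalLetters d x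
  obtain ⟨g', hg'⟩ := exists_eq_of_mul_wordProd_normalLetters d y
  rw [h, ← inv_mul_eq_iff_eq_mul.2 hg'] at hg
  exact ⟨g * g'⁻¹, by rw [map_mul, map_inv, mul_assoc, ← hg]⟩

lemma normalLetters_t_zpow_mul (u : ℤˣ) (x : HNNExtension G A B φ) :
    (∃ e, normalLetters d (t ^ (u : ℤ) * x) = e :: normalLetters d x) ∨
      ∃ e, normalLetters d x = e :: normalLetters d (t ^ (u : ℤ) * x) := by
  rw [normalLetters, normalLetters, mul_smul, t_pow_smul_eq_unitsSMul]
  generalize x • (empty : NormalWord d) = w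
  by_cases h : Cancels u w
  · right
    rw [unitsSMul, dif_pos h]
    induction w using consRecOn with
    | ofGroup g => simp [Cancels, ofGroup] at h
    | cons g u' w h1 h2 _ => exact ⟨(u', w.head), by simp [unitsSMulWithCancel]⟩
  · left
    rw [unitsSMul, dif_neg h]
    exact ⟨_, cons_toList ..⟩

lemma length_normalLetters_wordProd (hl : IsReducedWord A B l) :
    (normalLetters d (wordProd φ l)).length = l.length := by
  obtain ⟨w, hprod, hmap, -⟩ := ReducedWord.exists_normalWord_prod_eq φ d ⟨1, l, hl⟩
  have hw : wordProd φ l = w.prod φ := by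
    rw [hprod, ReducedWord.prod, map_one, one_mul, wordProd]
  rw [hw, normalLetters, prod_smul_empty, ← List.length_map (f := Prod.fst), hmap, List.length_map]

lemma normalLetters_suffix_or_length_lt (l : List (ℤˣ × G)) (x : HNNExtension G A B φ) :
    (normalLetters d (wordProd φ l * x)).length < l.length + (normalLetters d x).length ∨
      normalLetters d x <:+ normalLetters d (wordProd φ l * x) ∧
        (normalLetters d (wordProd φ l * x)).length = l.length + (normalLetters d x).length := by
  induction l with
  | nil => simp
  | cons e l ih =>
    rw [wordProd_cons, mul_assoc, mul_assoc, List.length_cons]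
    have hstep := normalLetters_t_zpow_mul (d := d) e.1 (of e.2 * (wordProd φ l * x))
    rw [normalLetters_of_mul] at hstep
    rcases hstep with ⟨e', he'⟩ | ⟨e', he'⟩
    · rw [he', List.length_cons]
      refine ih.imp (fun h => by omega) fun h => ⟨h.1.trans (List.suffix_cons _ _), by omega⟩
    · have := congrArg List.length he'
      rw [List.length_cons] at this
      left
      omega

lemma normalLetters_suffix_of_length_eq (l : List (ℤˣ × G))
    (h : (normalLetters d (wordProd φ l * x)).length = l.length + (normalLetters d x).length) :
    normalLetters d x <:+ normalLetters d (wordProd φ l * x) :=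
  ((normalLetters_suffix_or_length_lt l x).resolve_left h.not_lt).1

lemma IsReducedWord.normalLetters_suffix (h : IsReducedWord A B (l₁ ++ l₂)) :
    normalLetters d (wordProd φ l₂) <:+ normalLetters d (wordProd φ (l₁ ++ l₂)) := by
  rw [wordProd_append]
  refine normalLetters_suffix_of_length_eq l₁ ?_
  rw [← wordProd_append, length_normalLetters_wordProd h,
    length_normalLetters_wordProd h.right_of_append, List.length_append]

lemma exists_isReducedWord_conj {K : HNNExtension G A B φ} {g : G} (hl : IsReducedWord A B l)
    (hne : l ≠ []) (ha : K * a * K⁻¹ = of g * wordProd φ l) :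
    ∃ K' l', IsReducedWord A B l' ∧ l'.length = l.length ∧ K' * a * K'⁻¹ = wordProd φ l' := by
  obtain ⟨l', hl', hlen, hprod⟩ := exists_isReducedWord_wordProd_mul_of (φ := φ) hl hne g
  refine ⟨(of g)⁻¹ * K, l', hl', hlen, ?_⟩
  calc (of g)⁻¹ * K * a * ((of g)⁻¹ * K)⁻¹ = (of g)⁻¹ * (K * a * K⁻¹) * of g := by group
    _ = wordProd φ l' := by rw [ha, hprod]; group

lemma exists_shorter_conj (hl : IsReducedWord A B l) (hll : ¬ IsReducedWord A B (l ++ l)) :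
    ∃ K g l', IsReducedWord A B l' ∧ l'.length < l.length ∧
      K * wordProd φ l * K⁻¹ = of g * wordProd φ l' := by
  have hjunction : ∃ x ∈ l.getLast?, ∃ y ∈ l.head?, x.2 ∈ toSubgroup A B x.1 ∧ x.1 ≠ y.1 := by
    by_contra! hno
    exact hll (List.isChain_append.2 ⟨hl, hl, hno⟩)
  obtain ⟨x, hx, y, hy, hmem, hxy⟩ := hjunction
  obtain ⟨r, rfl⟩ : ∃ r, l = y :: r := ⟨l.tail, (List.cons_head?_tail hy).symm⟩
  obtain ⟨r, rfl⟩ : ∃ r', r = r' ++ [x] := by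
    rcases r.eq_nil_or_concat with rfl | ⟨r', x', rfl⟩
    · exact absurd (congrArg Prod.fst (by simpa using hx)) hxy.symm
    · rw [List.concat_eq_append, ← List.cons_append, List.getLast?_concat] at hx
      exact ⟨r', by rw [Option.mem_some_iff.1 hx, List.concat_eq_append]⟩
  obtain ⟨g, hg⟩ := exists_wordProd_pinch (φ := φ) hmem hxy
  refine ⟨wordProd φ [x], g, r, (List.isChain_cons.1 hl).2.left_of_append, by simp, ?_⟩
  rw [← hg, ← wordProd_append, mul_inv_eq_iff_eq_mul, ← wordProd_append, ← wordProd_append]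
  simp

lemma exists_isReducedWord_append_self
    (ha : ∀ K, K * a * K⁻¹ ∉ (of : G →* HNNExtension G A B φ).range) :
    ∃ K l, l ≠ [] ∧ IsReducedWord A B (l ++ l) ∧ K * a * K⁻¹ = wordProd φ l := by
  have key (n : ℕ) : ∀ K g l, l.length = n → IsReducedWord A B l →
      K * a * K⁻¹ = of g * wordProd φ l →
      ∃ K l, l ≠ [] ∧ IsReducedWord A B (l ++ l) ∧ K * a * K⁻¹ = wordProd φ l := by
    induction n using Nat.strong_induction_on with
    | _ n ih =>
      intro K g l hn hl hK
      have hne : l ≠ [] := by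
        rintro rfl
        exact ha K ⟨g, by rw [hK, wordProd_nil, mul_one]⟩
      obtain ⟨K', l', hl', hlen, hK'⟩ := exists_isReducedWord_conj hl hne hK
      by_cases hll : IsReducedWord A B (l' ++ l')
      · exact ⟨K', l', by rwa [← List.length_pos_iff, hlen, List.length_pos_iff], hll, hK'⟩
      · obtain ⟨K₂, g₂, l₂, hl₂, hlen₂, hK₂⟩ := exists_shorter_conj (φ := φ) hl' hll
        refine ih _ (by omega) (K₂ * K') g₂ l₂ rfl hl₂ ?_
        rw [← hK₂, ← hK']
        group
  obtain ⟨g, l, hl, hg⟩ := exists_isReducedWord_eq a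
  exact key _ 1 g l rfl hl (by simpa using hg)

lemma exists_eq_of_mul_of_normalLetters_suffix {L : List (ℤˣ × G)} (h₁ : IsReducedWord A B l₁)
    (h₂ : IsReducedWord A B l₂) (hlen : l₁.length = l₂.length)
    (hL₁ : normalLetters d (wordProd φ l₁) <:+ L) (hL₂ : normalLetters d (wordProd φ l₂) <:+ L) :
    ∃ g : G, wordProd φ l₁ = of g * wordProd φ l₂ := by
  have hlen' : (normalLetters d (wordProd φ l₁)).length =
      (normalLetters d (wordProd φ l₂)).length := by
    rw [length_normalLetters_wordProd h₁, length_normalLetters_wordProd h₂, hlen]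
  exact exists_eq_of_mul_of_normalLetters_eq
    ((List.suffix_of_suffix_length_le hL₁ hL₂ hlen'.le).eq_of_length hlen')

/- The normal form of `a v = v a`, with `a = wordProd φ l`, extends those of `v` and of `a`; these
two geodesics agree near the base vertex, so their letters after `s` match. -/
lemma exists_wordProd_singleton_eq {l₀ s : List (ℤˣ × G)} {e y : ℤˣ × G} {g : G}
    (hred : IsReducedWord A B (l₀ ++ [e] ++ s ++ l)) (hy : y :: s <:+ s ++ l)
    (hcomm : Commute (wordProd φ l) (of g * wordProd φ (l₀ ++ [e] ++ s))) :
    ∃ g' : G, wordProd φ [e] = of g' * wordProd φ [y] := by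
  obtain ⟨d⟩ := TransversalPair.nonempty G A B
  set v := of g * wordProd φ (l₀ ++ [e] ++ s)
  have hv : normalLetters d v = normalLetters d (wordProd φ (l₀ ++ [e] ++ s)) :=
    normalLetters_of_mul ..
  have hav : normalLetters d (wordProd φ l * v) =
      normalLetters d (wordProd φ (l₀ ++ [e] ++ s ++ l)) := by
    rw [hcomm.eq, mul_assoc, normalLetters_of_mul, ← wordProd_append]
  have hv_suffix : normalLetters d v <:+ normalLetters d (wordProd φ l * v) := by
    refine normalLetters_suffix_of_length_eq l ?_
    rw [hav, hv, length_normalLetters_wordProd hred,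
      length_normalLetters_wordProd hred.left_of_append]
    simp only [List.length_append]
    omega
  have he : normalLetters d (wordProd φ (e :: s)) <:+ normalLetters d (wordProd φ l * v) := by
    refine .trans ?_ hv_suffix
    rw [hv, List.append_assoc]
    exact IsReducedWord.normalLetters_suffix (by simpa using hred.left_of_append)
  have he_red : IsReducedWord A B (e :: s) :=
    List.IsChain.right_of_append (l₁ := l₀) (by simpa using hred.left_of_append)
  obtain ⟨q, hq⟩ := hy
  rw [List.append_assoc, ← hq, ← List.append_assoc] at hred hav
  have hys : normalLetters d (wordProd φ (y :: s)) <:+ normalLetters d (wordProd φ l * v) :=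
    hav ▸ hred.normalLetters_suffix
  obtain ⟨g', hg'⟩ :=
    exists_eq_of_mul_of_normalLetters_suffix he_red hred.right_of_append rfl he hys
  exact ⟨g', by simpa [← mul_assoc] using hg'⟩

lemma exists_cons_suffix_append {s : List (ℤˣ × G)} (hne : s ≠ []) (hs : s <:+ l) :
    ∃ y s' m, y :: s <:+ s ++ l ∧ s' <:+ l ∧
      wordProd φ (y :: s) = wordProd φ s' * wordProd φ l ^ (m : ℤ) := by
  obtain ⟨p, rfl⟩ := hs
  rcases p.eq_nil_or_concat with rfl | ⟨p, y, rfl⟩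
  · obtain ⟨r, y, rfl⟩ := s.eq_nil_or_concat.resolve_left hne
    exact ⟨y, [y], 1, ⟨r, by simp⟩, ⟨r, by simp⟩, by simp⟩
  · exact ⟨y, y :: s, 0, ⟨s ++ p, by simp⟩, ⟨p, by simp⟩, by simp⟩

lemma exists_suffix_ne_nil (hne : l ≠ []) {s : List (ℤˣ × G)} (hs : s <:+ l) (m : ℤ) :
    ∃ y s' m', y :: s' <:+ l ∧
      wordProd φ s * wordProd φ l ^ m = wordProd φ (y :: s') * wordProd φ l ^ (m' : ℤ) := by
  rcases s with _ | ⟨y, s⟩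
  · obtain ⟨y, r, rfl⟩ := List.exists_cons_of_ne_nil hne
    exact ⟨y, r, m - 1, List.suffix_rfl, by
      rw [wordProd_nil, one_mul, ← zpow_one_add, add_sub_cancel]⟩
  · exact ⟨y, s, m, hs, rfl⟩

lemma exists_shorter_prefix_of_commute (hne : l ≠ []) (hll : IsReducedWord A B (l ++ l))
    {l₀ s : List (ℤˣ × G)} {e : ℤˣ × G} {g : G} {m : ℤ} (hl₀ : IsReducedWord A B (l₀ ++ [e]))
    (hs : s <:+ l)
    (hb : Commute (wordProd φ l)
      (of g * wordProd φ (l₀ ++ [e]) * (wordProd φ s * wordProd φ l ^ m))) :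
    ∃ g' s' m', s' <:+ l ∧ wordProd φ [e] * (wordProd φ s * wordProd φ l ^ m) =
      of g' * wordProd φ s' * wordProd φ l ^ (m' : ℤ) := by
  obtain ⟨y, r, m₁, hr, hprod⟩ := exists_suffix_ne_nil (φ := φ) hne hs m
  rw [hprod] at hb ⊢
  by_cases hpinch : e.2 ∈ toSubgroup A B e.1 ∧ e.1 ≠ y.1
  · obtain ⟨g', hg'⟩ := exists_wordProd_pinch (φ := φ) hpinch.1 hpinch.2
    refine ⟨g', r, m₁, (List.suffix_cons y r).trans hr, ?_⟩
    rw [← hg', ← mul_assoc, ← wordProd_append, ← wordProd_append]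
    rfl
  have hred : IsReducedWord A B (l₀ ++ [e] ++ (y :: r) ++ l) := by
    rw [List.append_assoc]
    refine List.isChain_append.2 ⟨hl₀, ?_, ?_⟩
    · obtain ⟨p, rfl⟩ := hr
      exact List.IsChain.right_of_append (l₁ := p) (by simpa using hll)
    · simpa [not_and_or] using hpinch
  obtain ⟨y', s', m₂, hy', hs', hprod'⟩ := exists_cons_suffix_append (φ := φ) (by simp) hr
  have hcomm : Commute (wordProd φ l) (of g * wordProd φ (l₀ ++ [e] ++ y :: r)) := by
    rw [← mul_assoc, mul_assoc (of g), ← wordProd_append] at hb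
    simpa using hb.mul_right ((Commute.refl (wordProd φ l)).zpow_right (-m₁))
  obtain ⟨g', hg'⟩ := exists_wordProd_singleton_eq (φ := φ) hred hy' hcomm
  refine ⟨g', s', m₂ + m₁, hs', ?_⟩
  rw [zpow_add, ← mul_assoc _ (_ ^ m₂), mul_assoc _ _ (_ ^ m₂), ← hprod', hg', ← mul_assoc,
    mul_assoc (of g'), ← wordProd_append]
  rfl

lemma exists_eq_of_mul_wordProd_suffix_mul_zpow (hne : l ≠ []) (hll : IsReducedWord A B (l ++ l))
    (hcomm : Commute (wordProd φ l) b) :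
    ∃ g s m, s <:+ l ∧ b = of g * wordProd φ s * wordProd φ l ^ (m : ℤ) := by
  have key (n : ℕ) : ∀ g l₀ s m, l₀.length = n → IsReducedWord A B l₀ → s <:+ l →
      b = of g * wordProd φ l₀ * (wordProd φ s * wordProd φ l ^ (m : ℤ)) →
      ∃ g s m, s <:+ l ∧ b = of g * wordProd φ s * wordProd φ l ^ (m : ℤ) := by
    induction n with
    | zero =>
      intro g l₀ s m hn _ hs hb
      rw [List.length_eq_zero_iff.1 hn, wordProd_nil, mul_one, ← mul_assoc] at hb
      exact ⟨g, s, m, hs, hb⟩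
    | succ n ih =>
      intro g l₀ s m hn hl₀ hs hb
      obtain ⟨l₀, e, rfl⟩ := l₀.eq_nil_or_concat.resolve_left (by rintro rfl; simp at hn)
      rw [List.concat_eq_append] at hn hl₀ hb
      obtain ⟨g', s', m', hs', hstep⟩ :=
        exists_shorter_prefix_of_commute hne hll hl₀ hs (hb ▸ hcomm)
      rcases eq_or_ne l₀ [] with rfl | hl₀ne
      · refine ⟨g * g', s', m', hs', ?_⟩
        rw [hb, List.nil_append, mul_assoc, hstep]
        simp only [map_mul, mul_assoc]
      obtain ⟨l₁, hl₁, hlen, hprod⟩ :=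
        exists_isReducedWord_wordProd_mul_of (φ := φ) hl₀.left_of_append hl₀ne g'
      refine ih g l₁ s' m' (by simpa [hlen] using hn) hl₁ hs' ?_
      rw [hb, hprod, wordProd_append, mul_assoc, mul_assoc (wordProd φ l₀), hstep]
      simp only [mul_assoc]
  obtain ⟨g, l₀, hl₀, hg⟩ := exists_isReducedWord_eq b
  exact key _ g l₀ [] 0 rfl hl₀ (List.nil_suffix) (by simpa using hg)

lemma exists_conj_pow_mul_zpow_mem_range (hab : Commute a b)
    (ha : ∀ K, K * a * K⁻¹ ∉ (of : G →* HNNExtension G A B φ).range) :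
    ∃ p > 0, ∃ (q : ℤ) (k : HNNExtension G A B φ), k * (b ^ p * a ^ q) * k⁻¹ ∈ of.range := by
  obtain ⟨K, l, hne, hll, hK⟩ := exists_isReducedWord_append_self ha
  have hcomm (i : ℕ) : Commute (wordProd φ l) ((K * b * K⁻¹) ^ i) := by
    rw [← hK]
    exact ((Commute.conj_iff K).2 hab).pow_right i
  choose g s m hs hb using fun i => exists_eq_of_mul_wordProd_suffix_mul_zpow hne hll (hcomm i)
  have hmem (i : ℕ) : s i ∈ {s | s <:+ l} := hs i
  obtain ⟨i, j, hij, hsij⟩ := Set.Finite.exists_lt_map_eq_of_forall_mem hmem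
    (l.tails.finite_toSet.subset fun _ => (List.mem_tails _ _).2)
  refine ⟨j - i, by omega, m i - m j, wordProd φ (s i) * wordProd φ l ^ m i * K,
    (g i)⁻¹ * g j, ?_⟩
  have hpow : (K * b * K⁻¹) ^ (j - i) = ((K * b * K⁻¹) ^ i)⁻¹ * (K * b * K⁻¹) ^ j := by
    rw [eq_inv_mul_iff_mul_eq, ← pow_add, Nat.add_sub_of_le hij.le]
  symm
  calc wordProd φ (s i) * wordProd φ l ^ m i * K * (b ^ (j - i) * a ^ (m i - m j)) *
        (wordProd φ (s i) * wordProd φ l ^ m i * K)⁻¹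
      = wordProd φ (s i) * wordProd φ l ^ m i * ((K * b * K⁻¹) ^ (j - i) *
        (K * a * K⁻¹) ^ (m i - m j)) * (wordProd φ (s i) * wordProd φ l ^ m i)⁻¹ := by
        rw [conj_pow, conj_zpow]
        group
    _ = of ((g i)⁻¹ * g j) := by
        rw [hpow, hb i, hb j, hK, hsij, map_mul, map_inv, zpow_sub]
        group

end HNNCommute

section Powers

variable {W : Type} {Γ : SimpleGraph W} {C : Set W} {a b : RAAG Γ} {v w : W}

lemma mem_parabolic_singleton_iff : a ∈ parabolic Γ {v} ↔ ∃ n : ℤ, gen Γ v ^ n = a := by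
  rw [parabolic, Set.image_singleton, Subgroup.mem_closure_singleton]

lemma exists_pow_eq_zpow_of_mem_parabolic_singleton (ha : a ∈ parabolic Γ {v}) (ha1 : a ≠ 1)
    (hb : b ∈ parabolic Γ {v}) : ∃ p > 0, ∃ q : ℤ, b ^ p = a ^ q := by
  obtain ⟨i, rfl⟩ := mem_parabolic_singleton_iff.1 ha
  obtain ⟨j, rfl⟩ := mem_parabolic_singleton_iff.1 hb
  have hi : i ≠ 0 := by
    rintro rfl
    exact ha1 (zpow_zero _)
  refine ⟨i.natAbs, Int.natAbs_pos.2 hi, j * i.sign, ?_⟩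
  rw [← zpow_natCast, ← zpow_mul, ← zpow_mul, mul_left_comm, Int.mul_sign_self]

lemma ofVertexHNN_conj_mem {K : VertexHNN Γ w}
    (h : K * toVertexHNN Γ w a * K⁻¹ ∈ (HNNExtension.of : _ →* VertexHNN Γ w).range) :
    ofVertexHNN Γ w K * a * (ofVertexHNN Γ w K)⁻¹ ∈ parabolic Γ {w}ᶜ := by
  obtain ⟨x, hx⟩ := h
  have := congrArg (ofVertexHNN Γ w) hx
  rw [map_mul, map_mul, map_inv, ofVertexHNN_toVertexHNN] at this
  have hof : ofVertexHNN Γ w (HNNExtension.of x) = x := HNNExtension.lift_of ..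
  exact this ▸ hof ▸ x.2

lemma exists_conj_mem_parabolic_compl_singleton (hab : Commute a b)
    (ha : ∀ K, K * a * K⁻¹ ∉ parabolic Γ {w}ᶜ) :
    ∃ p > 0, ∃ (q : ℤ) (k : RAAG Γ), k * (b ^ p * a ^ q) * k⁻¹ ∈ parabolic Γ {w}ᶜ := by
  obtain ⟨p, hp, q, k, hk⟩ := exists_conj_pow_mul_zpow_mem_range (hab.map (toVertexHNN Γ w))
    fun K hK => ha _ (ofVertexHNN_conj_mem hK)
  exact ⟨p, hp, q, _, ofVertexHNN_conj_mem (by simpa using hk)⟩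

lemma IsCyclicallyReduced.eq_one_of_commute [Finite W] (hC : CoConnected Γ C) (hnt : C.Nontrivial)
    (ha : IsCyclicallyReduced C a) (hb : b ∈ parabolic Γ C) (hab : Commute a b) (hw : w ∈ C)
    {k : RAAG Γ} (hk : k * b * k⁻¹ ∈ parabolic Γ {w}ᶜ) : b = 1 := by
  rw [← part_univ b, ← Subgroup.mem_bot]
  refine part_mem_of_forall fun Q _ hQ => ?_
  have hQC : Q ≤ parabolic Γ C := by
    simpa using le_of_mem_factors (k := 1) (S := C) hQ (by simpa using hb)
  rcases le_or_le_centralizer_of_commute ⟨1, C, hC, by simp⟩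
    (isParabolicClosure_parabolic_iff.2 ha).2 hab hQ with hle | hle
  · have hQk := le_of_mem_factors (k := k⁻¹) (S := {w}ᶜ) hQ (mem_conj_smul.2 (by simpa using hk))
    have := mem_conj_smul.1 (hQk (hle ha.1))
    exact absurd (by simpa using this) (ha.2 w hw k)
  · have := hC.disjoint_centralizer hnt
    exact this.le_bot ⟨hQC (part_singleton_mem hQ),
      Subgroup.le_centralizer_iff.1 hle (part_singleton_mem hQ)⟩

lemma IsCyclicallyReduced.exists_pow_eq_zpow [Finite W] (hC : CoConnected Γ C)
    (ha : IsCyclicallyReduced C a) (hb : b ∈ parabolic Γ C) (hab : Commute a b) :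
    ∃ p > 0, ∃ q : ℤ, b ^ p = a ^ q := by
  obtain ⟨w, hw⟩ := hC.1
  rcases C.subsingleton_or_nontrivial with hsub | hnt
  · obtain rfl := hsub.eq_singleton_of_mem hw
    refine exists_pow_eq_zpow_of_mem_parabolic_singleton ha.1 ?_ hb
    rintro rfl
    exact ha.2 w hw 1 (by simp)
  · obtain ⟨p, hp, q, k, hk⟩ := exists_conj_mem_parabolic_compl_singleton hab (ha.2 w hw)
    have hone := ha.eq_one_of_commute hC hnt (mul_mem (pow_mem hb p) (zpow_mem ha.1 q))
      ((hab.pow_right p).mul_right ((Commute.refl a).zpow_right q)) hw hk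
    exact ⟨p, hp, -q, by rw [zpow_neg, eq_inv_iff_mul_eq_one.2 hone]⟩

lemma IsParabolicClosure.exists_pow_eq_zpow [Finite W] {P : Subgroup (RAAG Γ)}
    (hP : IsIrreducibleParabolic P) (ha : IsParabolicClosure P a) (hb : b ∈ P)
    (hab : Commute a b) : ∃ p > 0, ∃ q : ℤ, b ^ p = a ^ q := by
  obtain ⟨k, C, hC, rfl⟩ := hP
  have hcore := ha.conj k⁻¹
  rw [← mul_smul, ← map_mul, inv_mul_cancel, map_one, one_smul,
    isParabolicClosure_parabolic_iff] at hcore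
  obtain ⟨p, hp, q, h⟩ := hcore.exists_pow_eq_zpow (b := k⁻¹ * b * k⁻¹⁻¹) hC
    (by simpa using mem_conj_smul.1 hb) ((Commute.conj_iff k⁻¹).2 hab)
  rw [conj_pow, conj_zpow] at h
  exact ⟨p, hp, q, by simpa using h⟩

end Powers

section CommonElements

variable {W : Type} {Γ : SimpleGraph W} {C S : Set W} {w : W} {x y : RAAG Γ}

lemma exists_ne_one_mem_of_forall_exists_not_commute {G α : Type*} [Group G] [Finite α]
    {H : Subgroup G} (hH : H ≠ ⊥) {N : α → Subgroup G} (hN : ∀ a, (N a).Normal)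
    (h : ∀ a, ∀ x ∈ H, x ≠ 1 → ∃ y ∈ H ⊓ N a, ¬ Commute x y) :
    ∃ x ∈ H, x ≠ 1 ∧ ∀ a, x ∈ N a := by
  classical
  have := Fintype.ofFinite α
  suffices ∀ s : Finset α, ∃ x ∈ H, x ≠ 1 ∧ ∀ a ∈ s, x ∈ N a by simpa using this Finset.univ
  intro s
  induction s using Finset.induction with
  | empty =>
    obtain ⟨x, hx, hx1⟩ := H.ne_bot_iff_exists_ne_one.1 hH |> Subtype.exists.1
    exact ⟨x, hx, by simpa using hx1, by simp⟩
  | insert a s _ ih =>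
    obtain ⟨x, hx, hx1, hxs⟩ := ih
    obtain ⟨y, ⟨hy, hya⟩, hxy⟩ := h a x hx hx1
    refine ⟨⁅x, y⁆, ?_, mt commutatorElement_eq_one_iff_commute.1 hxy, ?_⟩
    · exact mul_mem (mul_mem (mul_mem hx hy) (inv_mem hx)) (inv_mem hy)
    intro b hb
    rcases Finset.mem_insert.1 hb with rfl | hb
    · exact mul_mem ((hN b).conj_mem y hya x) (inv_mem hya)
    · rw [commutatorElement_def, mul_assoc, mul_assoc, ← mul_assoc y]
      exact mul_mem (hxs b hb) ((hN b).conj_mem _ (inv_mem (hxs b hb)) y)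

lemma mem_parabolic_starSet_of_forall_conj_mem [Finite W] (hw : w ∈ C)
    (h : ∀ t ∈ parabolic Γ C, t * x * t⁻¹ ∈ parabolic Γ {w}ᶜ) {t : RAAG Γ}
    (ht : t ∈ parabolic Γ C) : t * x * t⁻¹ ∈ parabolic Γ (starSet Γ w) := by
  have hself := retract_eq_self (h t ht)
  have hconj := retract_eq_self (h _ (mul_mem (gen_mem_parabolic hw) ht))
  have hassoc : gen Γ w * t * x * (gen Γ w * t)⁻¹ = gen Γ w * (t * x * t⁻¹) * (gen Γ w)⁻¹ := by
    group
  rw [hassoc, map_mul, map_mul, map_inv, retract_gen_of_notMem (by simp), hself, one_mul, inv_one,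
    mul_one] at hconj
  exact mem_parabolic_starSet_of_commute (eq_mul_inv_iff_mul_eq.1 hconj)

lemma CoConnected.eq_one_of_forall_conj_mem [Finite W] (hC : CoConnected Γ C)
    (hx : x ∈ parabolic Γ C) (hw : w ∈ C)
    (h : ∀ t ∈ parabolic Γ C, t * x * t⁻¹ ∈ parabolic Γ {w}ᶜ) : x = 1 := by
  have hall (u : W) (hu : u ∈ C) : ∀ t ∈ parabolic Γ C, t * x * t⁻¹ ∈ parabolic Γ {u}ᶜ := by
    induction hC.2 w hw u hu with
    | refl => exact h
    | @tail a b _ hab ih =>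
      intro t ht
      rcases eq_or_ne a b with rfl | hne
      · exact ih hu t ht
      · refine parabolic_mono (Set.subset_compl_singleton_iff.2 ?_)
          (mem_parabolic_starSet_of_forall_conj_mem hab.1 (ih hab.1) ht)
        exact fun hb => hb.elim hne.symm hab.2.2
  rw [← Subgroup.mem_bot, ← parabolic_empty (Γ := Γ)]
  refine mem_parabolic_of_forall_notMem fun u _ => ?_
  by_cases hu : u ∈ C
  · simpa using hall u hu 1 (one_mem _)
  · exact parabolic_mono (Set.subset_compl_singleton_iff.2 hu) hx

lemma CoConnected.subset_of_subset_union_perp (hC : CoConnected Γ C) (hSC : S ⊆ C)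
    (hS : S.Nonempty) (h : C ⊆ S ∪ perp Γ S) : C ⊆ S := by
  obtain ⟨s, hs⟩ := hS
  intro c hc
  induction hC.2 s (hSC hs) c hc with
  | refl => exact hs
  | tail _ hab ih => exact (h hc).resolve_right fun hp => hab.2.2 (hp _ (ih hab.1)).symm

lemma CoConnected.eq_one_of_forall_commute_conj_of_isCyclicallyReduced [Finite W]
    (hC : CoConnected Γ C) (hx : x ∈ parabolic Γ C) (hSC : S ⊆ C) (hS : S.Nonempty)
    (hy : IsCyclicallyReduced S y) (h : ∀ t ∈ parabolic Γ C, Commute x (t * y * t⁻¹))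
    (hne : S ≠ C) : x = 1 := by
  obtain ⟨w, hw, hwS⟩ : ∃ w ∈ C, w ∉ S ∪ perp Γ S := by
    by_contra! hsub
    exact hne (hSC.antisymm (hC.subset_of_subset_union_perp hSC hS hsub))
  refine hC.eq_one_of_forall_conj_mem hx hw fun t ht => ?_
  refine parabolic_mono (Set.subset_compl_singleton_iff.2 hwS) (hy.mem_of_commute ?_)
  rw [← Commute.conj_iff t⁻¹]
  simpa [mul_assoc] using h t⁻¹ (inv_mem ht)

lemma CoConnected.eq_one_of_forall_commute_conj_of_expSum_ne_one [Finite W]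
    (hC : CoConnected Γ C) (hnt : C.Nontrivial) (hx : x ∈ parabolic Γ C) (hy : y ∈ parabolic Γ C)
    (hexp : ∀ w ∈ C, expSum Γ w y ≠ 1) (h : ∀ t ∈ parabolic Γ C, Commute x (t * y * t⁻¹)) :
    x = 1 := by
  by_contra hx1
  have hexp_pow (n : ℕ) (hn : n > 0) (w : W) (hw : w ∈ C) : expSum Γ w (y ^ n) ≠ 1 := by
    simpa [hn.ne'] using hexp w hw
  have hxy : Commute x y := by simpa using h 1 (one_mem _)
  have hycr := isCyclicallyReduced_of_expSum_ne_one hy hexp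
  have hxcr : IsCyclicallyReduced C x := ⟨hx, fun w hw k hk =>
    hx1 (hycr.eq_one_of_commute hC hnt hx hxy.symm hw hk)⟩
  obtain ⟨p, hp, q, hpq⟩ := hxcr.exists_pow_eq_zpow hC hy hxy
  obtain ⟨w, hw⟩ := hC.1
  obtain ⟨v, hv, hvw, hadj⟩ := hC.exists_ne_not_adj hnt hw
  set t := gen Γ w
  have ht : t ∈ parabolic Γ C := gen_mem_parabolic hw
  have hconj : IsCyclicallyReduced C (t * y * t⁻¹) :=
    isCyclicallyReduced_of_expSum_ne_one (mul_mem (mul_mem ht hy) (inv_mem ht))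
      fun w hw => by rw [expSum_conj]; exact hexp w hw
  obtain ⟨r, hr, s, hrs⟩ := hconj.exists_pow_eq_zpow hC (pow_mem hy p)
    (hpq ▸ ((h t ht).zpow_left q).symm)
  obtain rfl : s = (p * r : ℕ) := by
    have hexp_eq := congrArg (fun z => (expSum Γ w z).toAdd) hrs
    simp only [map_pow, map_zpow, expSum_conj, ← pow_mul, toAdd_pow, toAdd_zpow, smul_eq_mul,
      nsmul_eq_mul] at hexp_eq
    exact (mul_right_cancel₀ (mt toAdd_eq_zero.1 (hexp w hw)) hexp_eq).symm
  rw [zpow_natCast, conj_pow, ← pow_mul] at hrs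
  have hcomm : Commute (y ^ (p * r)) t := (eq_mul_inv_iff_mul_eq.1 hrs)
  refine hexp_pow _ (Nat.mul_pos hp hr) v hv
    (expSum_eq_one (fun hst => ?_) (mem_parabolic_starSet_of_commute hcomm))
  exact hst.elim hvw hadj

lemma CoConnected.exists_not_commute_conj [Finite W] (hC : CoConnected Γ C) (hnt : C.Nontrivial)
    (hSC : S ⊆ C) (hS : S.Nonempty) (hy : y ∈ parabolic Γ S) (hexp : ∀ w ∈ S, expSum Γ w y ≠ 1)
    (hx : x ∈ parabolic Γ C) (hx1 : x ≠ 1) : ∃ t ∈ parabolic Γ C, ¬ Commute x (t * y * t⁻¹) := by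
  by_contra! h
  rcases eq_or_ne S C with rfl | hne
  · exact hx1 (hC.eq_one_of_forall_commute_conj_of_expSum_ne_one hnt hx hy hexp h)
  · exact hx1 (hC.eq_one_of_forall_commute_conj_of_isCyclicallyReduced hx hSC hS
      (isCyclicallyReduced_of_expSum_ne_one hy hexp) h hne)

lemma CoConnected.exists_ne_one_mem [Finite W] {α : Type*} [Finite α] (hC : CoConnected Γ C)
    (hnt : C.Nontrivial) {N : α → Subgroup (RAAG Γ)} (hN : ∀ a, (N a).Normal)
    (h : ∀ a, ∃ u ∈ C, ∃ v ∈ C, u ≠ v ∧ ∃ p q : ℤ, (p ≠ 0 ∨ q ≠ 0) ∧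
      gen Γ u ^ p * gen Γ v ^ q ∈ N a) :
    ∃ x ≠ 1, ∀ a, x ∈ N a := by
  have hbot : parabolic Γ C ≠ ⊥ := fun hbot =>
    gen_ne_one _ ((Subgroup.mem_bot).1 (hbot ▸ gen_mem_parabolic hC.1.some_mem))
  suffices hnot : ∀ a, ∀ x ∈ parabolic Γ C, x ≠ 1 → ∃ y ∈ parabolic Γ C ⊓ N a, ¬ Commute x y by
    obtain ⟨x, -, hx⟩ := exists_ne_one_mem_of_forall_exists_not_commute hbot hN hnot
    exact ⟨x, hx⟩
  intro a x hx hx1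
  obtain ⟨u, hu, v, hv, huv, p, q, hpq, hmem⟩ := h a
  have hu_exp : expSum Γ u (gen Γ u ^ p * gen Γ v ^ q) = Multiplicative.ofAdd p := by
    simp [expSum_gen_zpow, expSum_gen_of_ne huv.symm]
  have hv_exp : expSum Γ v (gen Γ u ^ p * gen Γ v ^ q) = Multiplicative.ofAdd q := by
    rw [map_mul, expSum_gen_zpow, map_zpow, expSum_gen_of_ne huv]; simp
  set y := gen Γ u ^ p * gen Γ v ^ q
  have hyC : y ∈ parabolic Γ C :=
    mul_mem (zpow_mem (gen_mem_parabolic hu) p) (zpow_mem (gen_mem_parabolic hv) q)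
  have hSC : {w | expSum Γ w y ≠ 1} ⊆ C := fun w hw => by
    by_contra hwC
    exact hw (expSum_eq_one hwC hyC)
  have hpow_mem {w : W} {n : ℤ} (hn : expSum Γ w y = Multiplicative.ofAdd n) :
      gen Γ w ^ n ∈ parabolic Γ {w | expSum Γ w y ≠ 1} := by
    rcases eq_or_ne n 0 with rfl | hn0
    · simp
    · exact zpow_mem (gen_mem_parabolic (by simpa [hn] using hn0)) n
  have hS : {w | expSum Γ w y ≠ 1}.Nonempty :=
    hpq.elim (fun hp => ⟨u, by simpa [hu_exp] using hp⟩) fun hq => ⟨v, by simpa [hv_exp] using hq⟩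
  obtain ⟨t, ht, hcomm⟩ := hC.exists_not_commute_conj hnt hSC hS
    (mul_mem (hpow_mem hu_exp) (hpow_mem hv_exp)) (fun _ => id) hx hx1
  have htyC : t * y * t⁻¹ ∈ parabolic Γ C := mul_mem (mul_mem ht hyC) (inv_mem ht)
  exact ⟨t * y * t⁻¹, ⟨htyC, (hN a).conj_mem y hmem t⟩, hcomm⟩

end CommonElements

section Antipath

variable {X : Type*} {G : SimpleGraph X} {n : ℕ} {f : ℕ → X}

/-- The vertices `f 0, …, f (n - 1)` form, in this order, an induced path of the complement of `G`.
The values `f k` with `n ≤ k` are irrelevant. -/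
structure IsAntipath (G : SimpleGraph X) (n : ℕ) (f : ℕ → X) : Prop where
  compl_adj_succ : ∀ k, k + 1 < n → Gᶜ.Adj (f k) (f (k + 1))
  adj : ∀ k k', k + 1 < k' → k' < n → G.Adj (f k) (f k')

lemma IsAntipath.mono {m : ℕ} (h : IsAntipath G n f) (hmn : m ≤ n) : IsAntipath G m f :=
  ⟨fun k hk => h.compl_adj_succ k (by omega), fun k k' hk hk' => h.adj k k' hk (by omega)⟩

lemma IsAntipath.ne {k k' : ℕ} (h : IsAntipath G n f) (hk : k < k') (hk' : k' < n) :
    f k ≠ f k' := by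
  obtain rfl | hlt := Nat.succ_le_iff.2 hk |>.eq_or_lt
  · exact (h.compl_adj_succ k hk').ne
  · exact (h.adj k k' hlt hk').ne

/-- Some `n` elements of `Y` form an induced path of the complement of `G`. -/
def HasAntipath (G : SimpleGraph X) (Y : Set X) (n : ℕ) : Prop :=
  ∃ f : ℕ → X, (∀ k, f k ∈ Y) ∧ IsAntipath G n f

lemma HasAntipath.mono {Y : Set X} {m : ℕ} (h : HasAntipath G Y n) (hmn : m ≤ n) :
    HasAntipath G Y m :=
  h.imp fun _ hf => ⟨hf.1, hf.2.mono hmn⟩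

lemma dist_getVert_of_length_eq_dist {x y : X} {p : G.Walk x y} (hp : p.length = G.dist x y)
    {k : ℕ} (hk : k ≤ p.length) : G.dist x (p.getVert k) = k := by
  rw [← length_eq_dist_of_subwalk hp (p.isSubwalk_take k), Walk.take_length, min_eq_left hk]

lemma isAntipath_compl_getVert {x y : X} {p : G.Walk x y} (hp : p.length = G.dist x y) :
    IsAntipath Gᶜ (p.length + 1) p.getVert := by
  refine ⟨fun k hk => ?_, fun k k' hk hk' => ?_⟩
  · rw [compl_compl]
    exact p.adj_getVert_succ (by omega)
  have hdist := dist_getVert_of_length_eq_dist hp (k := k) (by omega)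
  have hdist' := dist_getVert_of_length_eq_dist hp (k := k') (by omega)
  refine ⟨fun heq => ?_, fun hadj => ?_⟩
  · rw [heq] at hdist
    omega
  · have := hadj.diff_dist_adj (u := x)
    omega

lemma hasAntipath_dist {Y : Set X} {x y : Y} (h : (Gᶜ.induce Y).Reachable x y) :
    HasAntipath G Y ((Gᶜ.induce Y).dist x y + 1) := by
  obtain ⟨p, hp⟩ := h.exists_walk_length_eq_dist
  have hanti := isAntipath_compl_getVert hp
  refine ⟨fun k => p.getVert k, fun k => (p.getVert k).2, fun k hk => ?_, fun k k' hk hk' => ?_⟩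
  · exact p.adj_getVert_succ (by omega)
  · have hadj := hanti.adj k k' hk (by omega)
    by_contra hG
    exact hadj.2 ⟨fun heq => hadj.1 (Subtype.ext heq), hG⟩

/-- The commuting graph of a group. -/
def commutingGraph (G : Type*) [Group G] : SimpleGraph G where
  Adj x y := x ≠ y ∧ Commute x y
  symm := ⟨fun _ _ h => ⟨h.1.symm, h.2.symm⟩⟩
  loopless := ⟨fun _ h => h.1 rfl⟩

lemma compl_commutingGraph_adj {G : Type*} [Group G] {x y : G} :
    (commutingGraph G)ᶜ.Adj x y ↔ ¬ Commute x y := by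
  simp only [compl_adj, commutingGraph, not_and, ne_eq]
  refine ⟨fun h => h.2 h.1, fun h => ⟨?_, fun _ => h⟩⟩
  rintro rfl
  exact h (.refl _)

lemma hasAntipath_two_of_not_commute {G : Type*} [Group G] {Y : Set G} {x y : G} (hx : x ∈ Y)
    (hy : y ∈ Y) (h : ¬ Commute x y) : HasAntipath (commutingGraph G) Y 2 := by
  refine ⟨fun k => if k = 0 then x else y, fun k => ?_, fun k hk => ?_, fun k k' _ _ => by omega⟩
  · beta_reduce
    split_ifs <;> assumption
  · obtain rfl : k = 0 := by omega
    simpa using compl_commutingGraph_adj.2 h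

lemma CoConnected.reachable {X : Type} {G : SimpleGraph X} {C : Set X} (hC : CoConnected G C)
    (x y : C) : (Gᶜ.induce C).Reachable x y := by
  obtain ⟨x, hx⟩ := x
  obtain ⟨y, hy⟩ := y
  induction hC.2 x hx y hy with
  | refl => exact .refl _
  | @tail b c _ hbc ih =>
    refine (ih hbc.1).trans ?_
    by_cases heq : b = c
    · subst heq
      exact .refl _
    · exact Adj.reachable (G := Gᶜ.induce C) (u := ⟨b, hbc.1⟩) (v := ⟨c, hy⟩) ⟨heq, hbc.2.2⟩

end Antipath

section VertexConjugates

variable {W : Type} {Γ : SimpleGraph W} {C : Set W} {P Q : Subgroup (RAAG Γ)} {x y z : RAAG Γ}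

/-- The conjugates of the standard generators. The graph that the commuting graph induces on them
is the extension graph of Kim and Koberda. -/
def vertexConjugates (Γ : SimpleGraph W) : Set (RAAG Γ) := {x | ∃ v, IsConj (gen Γ v) x}

lemma conj_gen_mem_vertexConjugates (g : RAAG Γ) (v : W) :
    g * gen Γ v * g⁻¹ ∈ vertexConjugates Γ := ⟨v, isConj_iff.2 ⟨g, rfl⟩⟩

lemma mem_vertexConjugates_iff : x ∈ vertexConjugates Γ ↔ ∃ g v, g * gen Γ v * g⁻¹ = x := by
  simp only [vertexConjugates, Set.mem_ofPred_eq, isConj_iff]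
  exact exists_comm

lemma ne_one_of_mem_vertexConjugates (hx : x ∈ vertexConjugates Γ) : x ≠ 1 := by
  obtain ⟨g, v, rfl⟩ := mem_vertexConjugates_iff.1 hx
  exact mt conj_eq_one_iff.1 (gen_ne_one v)

lemma commute_conj_right_iff {G : Type*} [Group G] {g x y : G} :
    Commute x (g * y * g⁻¹) ↔ Commute (g⁻¹ * x * g) y := by
  rw [← Commute.conj_iff (a := g⁻¹ * x * g) g]
  simp only [mul_assoc, mul_inv_cancel_left, mul_inv_cancel, mul_one]

lemma commute_gen_of_commute_gen_pow [Finite W] {v : W} {n : ℕ} (hn : n ≠ 0)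
    (h : Commute z (gen Γ v ^ n)) : Commute z (gen Γ v) := by
  rw [← zpow_natCast] at h
  refine (commute_of_mem_parabolic (fun w hw => ?_)
    (mem_parabolic_starSet_of_commute_zpow (Nat.cast_ne_zero.2 hn) h)).symm
  exact hw.elim (fun hw => hw ▸ .refl _) commute_gen

lemma commute_of_commute_pow_right [Finite W] (hy : y ∈ vertexConjugates Γ) {n : ℕ} (hn : n ≠ 0)
    (h : Commute z (y ^ n)) : Commute z y := by
  obtain ⟨g, v, rfl⟩ := mem_vertexConjugates_iff.1 hy
  rw [conj_pow, commute_conj_right_iff] at h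
  exact commute_conj_right_iff.2 (commute_gen_of_commute_gen_pow hn h)

lemma eq_of_pow_eq_pow [Finite W] (hx : x ∈ vertexConjugates Γ) (hy : y ∈ vertexConjugates Γ)
    {m n : ℕ} (hm : m ≠ 0) (hn : n ≠ 0) (h : x ^ m = y ^ n) : x = y := by
  obtain ⟨g, v, rfl⟩ := mem_vertexConjugates_iff.1 hx
  obtain ⟨k, w, rfl⟩ := mem_vertexConjugates_iff.1 hy
  have hexp : expSum Γ v (gen Γ v) ^ m = expSum Γ v (gen Γ w) ^ n := by
    simpa only [map_pow, expSum_conj] using congrArg (expSum Γ v) h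
  obtain rfl : w = v := by
    by_contra hwv
    rw [expSum_gen_of_ne hwv, one_pow, expSum_gen_self] at hexp
    exact hm (by simpa using congrArg Multiplicative.toAdd hexp)
  obtain rfl : m = n := by
    simpa [expSum_gen_self] using congrArg Multiplicative.toAdd hexp
  rw [conj_pow, conj_pow] at h
  have hiff (z : RAAG Γ) : g * z * g⁻¹ = k * z * k⁻¹ ↔ Commute (k⁻¹ * g) z := by
    rw [commute_iff_eq, mul_inv_eq_iff_eq_mul, ← mul_right_inj k⁻¹]
    simp only [mul_assoc, inv_mul_cancel_left]
  exact (hiff _).2 (commute_gen_of_commute_gen_pow hm ((hiff _).1 h))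

lemma commute_of_commute_pow_pow [Finite W] (hx : x ∈ vertexConjugates Γ)
    (hy : y ∈ vertexConjugates Γ) {m n : ℕ} (hm : m ≠ 0) (hn : n ≠ 0)
    (h : Commute (x ^ m) (y ^ n)) : Commute x y :=
  (commute_of_commute_pow_right hx hm (commute_of_commute_pow_right hy hn h).symm).symm

lemma le_of_forall_vertexConjugates (hP : IsIrreducibleParabolic P) {H : Subgroup (RAAG Γ)}
    (h : ∀ x ∈ vertexConjugates Γ, x ∈ P → x ∈ H) : P ≤ H := by
  obtain ⟨g, C, -, rfl⟩ := hP
  rw [Subgroup.pointwise_smul_subset_iff, ← map_inv, parabolic_le]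
  intro v hv
  rw [mem_conj_smul, inv_inv]
  exact h _ (conj_gen_mem_vertexConjugates g v) (conj_mem_conj_smul.2 (gen_mem_parabolic hv))

lemma exists_mem_vertexConjugates (hP : IsIrreducibleParabolic P) :
    ∃ x ∈ vertexConjugates Γ, x ∈ P := by
  obtain ⟨g, C, hC, rfl⟩ := hP
  exact ⟨_, conj_gen_mem_vertexConjugates g _,
    conj_mem_conj_smul.2 (gen_mem_parabolic hC.1.some_mem)⟩

lemma exists_not_commute_of_not_le_centralizer (hP : IsIrreducibleParabolic P)
    (hQ : IsIrreducibleParabolic Q) (h : ¬ P ≤ Subgroup.centralizer Q) :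
    ∃ x ∈ vertexConjugates Γ, x ∈ P ∧ ∃ y ∈ vertexConjugates Γ, y ∈ Q ∧ ¬ Commute x y := by
  by_contra! hcomm
  refine h (le_of_forall_vertexConjugates hP fun x hx hxP => ?_)
  have hQx : Q ≤ Subgroup.centralizer {x} := le_of_forall_vertexConjugates hQ fun y hy hyQ =>
    Subgroup.mem_centralizer_singleton_iff.2 (hcomm x hx hxP y hy hyQ).symm
  exact fun y hy => Subgroup.mem_centralizer_singleton_iff.1 (hQx hy)

lemma exists_mem_eq_conj_gen (hx : x ∈ vertexConjugates Γ) (hxC : x ∈ parabolic Γ C) :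
    ∃ k ∈ parabolic Γ C, ∃ v ∈ C, x = k * gen Γ v * k⁻¹ := by
  obtain ⟨g, v, rfl⟩ := mem_vertexConjugates_iff.1 hx
  have hv : v ∈ C := by
    by_contra hv
    have := expSum_eq_one hv hxC
    simp at this
  refine ⟨retract Γ C g, retract_mem C g, v, hv, ?_⟩
  rw [← retract_eq_self hxC, map_mul, map_mul, map_inv, retract_gen_of_mem hv]

/-- `x` and `y` are joined by a chain of vertex conjugates in `P` in which no two distinct
consecutive elements commute. -/
def Linked (P : Subgroup (RAAG Γ)) (x y : RAAG Γ) : Prop :=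
  Relation.ReflTransGen (CoAdj (commutingGraph (RAAG Γ)) (vertexConjugates Γ ∩ P)) x y

lemma Linked.symm (h : Linked P x y) : Linked P y x := reflTransGen_coAdj_symm h

lemma Linked.trans (h : Linked P x y) (h' : Linked P y z) : Linked P x z :=
  Relation.ReflTransGen.trans h h'

lemma Linked.conj_smul (k : RAAG Γ) (h : Linked P x y) :
    Linked (MulAut.conj k • P) (k * x * k⁻¹) (k * y * k⁻¹) := by
  have hmem {z : RAAG Γ} (hz : z ∈ vertexConjugates Γ ∩ P) :
      k * z * k⁻¹ ∈ vertexConjugates Γ ∩ (MulAut.conj k • P : Subgroup _) :=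
    ⟨hz.1.imp fun _ h => h.trans (isConj_iff.2 ⟨k, rfl⟩), conj_mem_conj_smul.2 hz.2⟩
  refine Relation.ReflTransGen.lift (fun z => k * z * k⁻¹) (fun a b hab => ?_) _ _ h
  refine ⟨hmem hab.1, hmem hab.2.1, fun hadj => hab.2.2 ?_⟩
  exact ⟨fun heq => hadj.1 (heq ▸ rfl), (Commute.conj_iff k).1 hadj.2⟩

lemma Linked.conj {k : RAAG Γ} (hk : k ∈ P) (h : Linked P x y) :
    Linked P (k * x * k⁻¹) (k * y * k⁻¹) := by
  simpa only [Subgroup.conj_smul_eq_self_of_mem hk] using h.conj_smul k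

lemma CoConnected.linked_gen [Finite W] (hC : CoConnected Γ C) {u v : W} (hu : u ∈ C)
    (hv : v ∈ C) : Linked (parabolic Γ C) (gen Γ u) (gen Γ v) := by
  refine Relation.ReflTransGen.lift (gen Γ) (fun a b hab => ?_) _ _ (hC.2 u hu v hv)
  refine ⟨⟨⟨a, .refl _⟩, gen_mem_parabolic hab.1⟩, ⟨⟨b, .refl _⟩, gen_mem_parabolic hab.2.1⟩,
    fun hadj => ?_⟩
  rcases commute_gen_iff.1 hadj.2 with rfl | h
  exacts [hadj.1 rfl, hab.2.2 h]

/- Conjugation by `gen Γ u` fixes `gen Γ u`, so it maps a chain from `gen Γ u` to `gen Γ v` to a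
chain that again starts at `gen Γ u`. -/
lemma CoConnected.linked_conj_gen [Finite W] (hC : CoConnected Γ C) {k : RAAG Γ}
    (hk : k ∈ parabolic Γ C) {v : W} (hv : v ∈ C) :
    Linked (parabolic Γ C) (gen Γ v) (k * gen Γ v * k⁻¹) := by
  have hgen {u : W} (hu : u ∈ C) :
      Linked (parabolic Γ C) (gen Γ v) (gen Γ u * gen Γ v * (gen Γ u)⁻¹) := by
    have := (hC.linked_gen hu hv).conj (gen_mem_parabolic hu)
    rw [mul_inv_cancel_right] at this
    exact (hC.linked_gen hv hu).trans this
  induction hk using Subgroup.closure_induction_right with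
  | one => simpa using .refl
  | mul_right k hk g hg ih =>
    obtain ⟨u, hu, rfl⟩ := hg
    have hlink : Linked (parabolic Γ C) _ _ := (hgen hu).conj hk
    exact ih.trans (by simpa only [mul_assoc, mul_inv_rev] using hlink)
  | mul_inv_cancel k hk g hg ih =>
    obtain ⟨u, hu, rfl⟩ := hg
    have hlink : Linked (parabolic Γ C) _ _ :=
      ((hgen hu).conj (mul_mem hk (inv_mem (gen_mem_parabolic hu)))).symm
    exact ih.trans (by simpa [mul_assoc] using hlink)

lemma IsIrreducibleParabolic.coConnected_vertexConjugates [Finite W]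
    (hP : IsIrreducibleParabolic P) :
    CoConnected (commutingGraph (RAAG Γ)) (vertexConjugates Γ ∩ P) := by
  refine ⟨exists_mem_vertexConjugates hP, fun x hx y hy => ?_⟩
  obtain ⟨h, C, hC, rfl⟩ := hP
  have hlinked {x : RAAG Γ} (hx : x ∈ vertexConjugates Γ)
      (hxP : x ∈ MulAut.conj h • parabolic Γ C) :
      ∃ v ∈ C, Linked (MulAut.conj h • parabolic Γ C) (h * gen Γ v * h⁻¹) x := by
    have hx' : h⁻¹ * x * h ∈ vertexConjugates Γ :=
      hx.imp fun _ hv => hv.trans (isConj_iff.2 ⟨h⁻¹, by rw [inv_inv]⟩)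
    obtain ⟨k, hk, v, hv, heq⟩ := exists_mem_eq_conj_gen hx' (mem_conj_smul.1 hxP)
    refine ⟨v, hv, ?_⟩
    have := (hC.linked_conj_gen hk hv).conj_smul h
    rwa [← heq, show h * (h⁻¹ * x * h) * h⁻¹ = x by group] at this
  obtain ⟨u, hu, hux⟩ := hlinked hx.1 hx.2
  obtain ⟨v, hv, hvy⟩ := hlinked hy.1 hy.2
  exact hux.symm.trans (((hC.linked_gen hu hv).conj_smul h).trans hvy)

lemma IsIrreducibleParabolic.eq_zpowers [Finite W] (hP : IsIrreducibleParabolic P)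
    (hab : P ≤ Subgroup.centralizer P) (hx : x ∈ vertexConjugates Γ) (hxP : x ∈ P) :
    P = Subgroup.zpowers x := by
  refine (le_of_forall_vertexConjugates hP fun y hy hyP => ?_).antisymm
    (Subgroup.zpowers_le.2 hxP)
  suffices hyx : y = x from hyx ▸ Subgroup.mem_zpowers x
  induction hP.coConnected_vertexConjugates.2 x ⟨hx, hxP⟩ y ⟨hy, hyP⟩ with
  | refl => rfl
  | tail _ h ih =>
    by_contra hne
    exact h.2.2 ⟨fun heq => hne (heq ▸ ih h.1.1 h.1.2), (hab h.1.2 _ h.2.1.2).symm⟩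

lemma eq_of_mem_vertexConjugates [Finite W] (hP : IsIrreducibleParabolic P)
    (hQ : IsIrreducibleParabolic Q) (h : P ≤ Subgroup.centralizer Q)
    (hx : x ∈ vertexConjugates Γ) (hxP : x ∈ P) (hxQ : x ∈ Q) : P = Q := by
  have hPab := hP.le_centralizer_or_disjoint.resolve_right fun hdisj =>
    ne_one_of_mem_vertexConjugates hx
      (Subgroup.disjoint_def.1 hdisj hxP (Subgroup.le_centralizer_iff.1 h hxQ))
  have hQab := hQ.le_centralizer_or_disjoint.resolve_right fun hdisj =>
    ne_one_of_mem_vertexConjugates hx (Subgroup.disjoint_def.1 hdisj hxQ (h hxP))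
  rw [hP.eq_zpowers hPab hx hxP, hQ.eq_zpowers hQab hx hxQ]

end VertexConjugates

section Regions

variable {V W : Type} {Λ : SimpleGraph V} {Γ : SimpleGraph W} {φ : RAAG Λ →* RAAG Γ}
  {T T' : Set (Subgroup (RAAG Γ))} {x y : RAAG Γ} {i j : V}

/-- The homomorphism that sends each standard generator `i` to the product of the factors of
`φ i` along the members of `T`. -/
noncomputable def partHom [Finite W] (φ : RAAG Λ →* RAAG Γ) (T : Set (Subgroup (RAAG Γ))) :
    RAAG Λ →* RAAG Γ :=
  lift (fun i => part (φ (gen Λ i)) T)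
    fun _ _ h => commute_part ((commute_gen h).map φ) T T

@[simp] lemma partHom_gen [Finite W] (φ : RAAG Λ →* RAAG Γ) (T : Set (Subgroup (RAAG Γ))) (i : V) :
    partHom φ T (gen Λ i) = part (φ (gen Λ i)) T :=
  lift_gen _ _ _

lemma partHom_mem_sSup [Finite W] (φ : RAAG Λ →* RAAG Γ) (T : Set (Subgroup (RAAG Γ)))
    (x : RAAG Λ) : partHom φ T x ∈ sSup T := by
  suffices parabolic Λ Set.univ ≤ (sSup T).comap (partHom φ T) from
    this (parabolic_univ (Γ := Λ) ▸ Subgroup.mem_top x)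
  refine parabolic_le.2 fun i _ => ?_
  rw [Subgroup.mem_comap, partHom_gen]
  exact part_mem_of_forall fun P hP hPi => le_sSup hP (part_singleton_mem hPi)

lemma partHom_union [Finite W] (hdisj : Disjoint T T')
    (h : ∀ P ∈ T, ∀ Q ∈ T', P ≤ Subgroup.centralizer Q) (x : RAAG Λ) :
    partHom φ (T ∪ T') x = partHom φ T x * partHom φ T' x := by
  have hle : sSup T ≤ Subgroup.centralizer (sSup T' : Subgroup (RAAG Γ)) :=
    sSup_le fun P hP => Subgroup.le_centralizer_iff.1 <| sSup_le fun Q hQ =>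
      Subgroup.le_centralizer_iff.1 (h P hP Q hQ)
  have hcomm (x y : RAAG Λ) : Commute (partHom φ T' x) (partHom φ T y) :=
    hle (partHom_mem_sSup φ T y) _ (partHom_mem_sSup φ T' x)
  suffices partHom φ (T ∪ T') = MonoidHom.mk' (fun x => partHom φ T x * partHom φ T' x)
    (fun x y => by simp only [map_mul, (hcomm x y).mul_mul_mul_comm]) from
    DFunLike.congr_fun this x
  refine PresentedGroup.ext fun i => ?_
  change partHom φ (T ∪ T') (gen Λ i) = partHom φ T (gen Λ i) * partHom φ T' (gen Λ i)
  rw [partHom_gen, partHom_gen, partHom_gen, part_union hdisj]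

/-- The factors of the images of the standard generators. -/
def imageFactors [Finite W] (φ : RAAG Λ →* RAAG Γ) : Set (Subgroup (RAAG Γ)) :=
  {P | ∃ i, P ∈ factors (φ (gen Λ i))}

lemma imageFactors_finite [Finite V] [Finite W] (φ : RAAG Λ →* RAAG Γ) :
    (imageFactors φ).Finite := by
  have : imageFactors φ = ⋃ i, factors (φ (gen Λ i)) := by
    ext
    simp [imageFactors]
  exact this ▸ Set.finite_iUnion fun i => factors_finite _

lemma isIrreducibleParabolic_of_mem_imageFactors [Finite W] (P : imageFactors φ) :
    IsIrreducibleParabolic P.1 :=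
  P.2.elim fun _ => isIrreducibleParabolic_of_mem_factors

/-- The graph on the image factors of `φ` whose edges join the distinct factors that do not commute
elementwise. -/
def factorGraph [Finite W] (φ : RAAG Λ →* RAAG Γ) : SimpleGraph (imageFactors φ) where
  Adj P Q := P ≠ Q ∧ ¬ P.1 ≤ Subgroup.centralizer Q.1
  symm := ⟨fun _ _ h => ⟨h.1.symm, mt Subgroup.le_centralizer_iff.1 h.2⟩⟩
  loopless := ⟨fun _ h => h.1 rfl⟩

/-- The connected components of the graph of image factors. Different regions commute, so `φ` is
the product of its restrictions to the regions. -/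
abbrev Region [Finite W] (φ : RAAG Λ →* RAAG Γ) : Type := (factorGraph φ).ConnectedComponent

instance [Finite V] [Finite W] : Finite (Region φ) :=
  have := (imageFactors_finite φ).to_subtype
  Quot.finite _

/-- The homomorphism obtained from `φ` by keeping only the factors in a given region. -/
noncomputable def regionHom [Finite W] (c : Region φ) : RAAG Λ →* RAAG Γ :=
  partHom φ (Subtype.val '' c.supp)

/-- The vertex conjugates that lie in a factor of the region. -/
def regionVertices [Finite W] (c : Region φ) : Set (RAAG Γ) :=
  {x | x ∈ vertexConjugates Γ ∧ ∃ P ∈ c.supp, x ∈ P.1}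

lemma le_centralizer_of_region_ne [Finite W] {P Q : imageFactors φ}
    (h : (factorGraph φ).connectedComponentMk P ≠ (factorGraph φ).connectedComponentMk Q) :
    P.1 ≤ Subgroup.centralizer Q.1 := by
  by_contra hPQ
  exact h (ConnectedComponent.connectedComponentMk_eq_of_adj
    ⟨fun heq => h (congrArg _ heq), hPQ⟩)

lemma partHom_imageFactors [Finite W] (φ : RAAG Λ →* RAAG Γ) : partHom φ (imageFactors φ) = φ := by
  refine PresentedGroup.ext fun i => ?_
  change partHom φ (imageFactors φ) (gen Λ i) = φ (gen Λ i)
  have hsub : factors (φ (gen Λ i)) ⊆ imageFactors φ := fun P hP => ⟨i, hP⟩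
  rw [partHom_gen, ← part_inter_factors, Set.inter_eq_right.2 hsub]
  simpa using part_inter_factors (φ (gen Λ i)) Set.univ

lemma eq_one_of_forall_regionHom [Finite V] [Finite W] {x : RAAG Λ}
    (h : ∀ c : Region φ, regionHom c x = 1) : φ x = 1 := by
  suffices key : ∀ S : Set (Region φ),
      partHom φ (Subtype.val '' {P | (factorGraph φ).connectedComponentMk P ∈ S}) x = 1 by
    simpa [partHom_imageFactors] using key Set.univ
  intro S
  induction S, S.toFinite using Set.Finite.induction_on with
  | empty => 
    have := partHom_mem_sSup φ ∅ x
    simpa using this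
  | @insert c S hc _ ih =>
    have hunion : {P | (factorGraph φ).connectedComponentMk P ∈ insert c S} =
        c.supp ∪ {P | (factorGraph φ).connectedComponentMk P ∈ S} := rfl
    rw [hunion, Set.image_union, partHom_union, ih, mul_one]
    · exact h c
    · rw [Set.disjoint_image_iff Subtype.val_injective, Set.disjoint_left]
      rintro P rfl hP
      exact hc hP
    · rintro _ ⟨P, rfl, rfl⟩ _ ⟨Q, hQ, rfl⟩
      exact le_centralizer_of_region_ne fun heq => hc (heq ▸ hQ)

lemma coConnected_regionVertices [Finite W] (c : Region φ) :
    CoConnected (commutingGraph (RAAG Γ)) (regionVertices c) := by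
  have hP (P : imageFactors φ) := isIrreducibleParabolic_of_mem_imageFactors P
  have hlink (P : imageFactors φ) (hPc : P ∈ c.supp) {x y : RAAG Γ} (h : Linked P.1 x y) :
      Relation.ReflTransGen (CoAdj (commutingGraph (RAAG Γ)) (regionVertices c)) x y :=
    Relation.ReflTransGen.mono (fun a b hab =>
      ⟨⟨hab.1.1, P, hPc, hab.1.2⟩, ⟨hab.2.1.1, P, hPc, hab.2.1.2⟩, hab.2.2⟩) x y h
  obtain ⟨A, hA⟩ := c.nonempty_supp
  obtain ⟨a, ha, haA⟩ := exists_mem_vertexConjugates (hP A)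
  refine ⟨⟨a, ha, A, hA, haA⟩, ?_⟩
  rintro x ⟨hx, P, hPc, hxP⟩ y ⟨hy, Q, hQc, hyQ⟩
  obtain ⟨p⟩ := ConnectedComponent.exact (hPc.trans hQc.symm)
  induction p generalizing x with
  | nil => exact hlink _ hPc ((hP _).coConnected_vertexConjugates.2 x ⟨hx, hxP⟩ y ⟨hy, hyQ⟩)
  | @cons P R Q hPR _ ih =>
    have hRc : R ∈ c.supp := (ConnectedComponent.connectedComponentMk_eq_of_adj hPR).symm.trans hPc
    obtain ⟨u, hu, huP, v, hv, hvR, huv⟩ :=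
      exists_not_commute_of_not_le_centralizer (hP P) (hP R) hPR.2
    have hxu := hlink P hPc ((hP P).coConnected_vertexConjugates.2 x ⟨hx, hxP⟩ u ⟨hu, huP⟩)
    exact (hxu.tail ⟨⟨hu, P, hPc, huP⟩, ⟨hv, R, hRc, hvR⟩, fun h => huv h.2⟩).trans
      (ih v hv hRc hvR hQc hyQ)

lemma commutingGraph_adj_of_region_ne [Finite W] {c c' : Region φ} (hc : c ≠ c')
    (hx : x ∈ regionVertices c) (hy : y ∈ regionVertices c') :
    (commutingGraph (RAAG Γ)).Adj x y := by
  obtain ⟨hx, P, rfl, hxP⟩ := hx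
  obtain ⟨-, Q, rfl, hyQ⟩ := hy
  have hPQ := le_centralizer_of_region_ne hc
  refine ⟨?_, (hPQ hxP y hyQ).symm⟩
  rintro rfl
  exact hc (congrArg _ (Subtype.ext (eq_of_mem_vertexConjugates
    (isIrreducibleParabolic_of_mem_imageFactors P) (isIrreducibleParabolic_of_mem_imageFactors Q)
    hPQ hx hxP hyQ)))

lemma compl_adj_of_factorGraph_adj [Finite W] {P Q : imageFactors φ} (h : (factorGraph φ).Adj P Q)
    (hP : P.1 ∈ factors (φ (gen Λ i))) (hQ : Q.1 ∈ factors (φ (gen Λ j))) : Λᶜ.Adj i j := by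
  have hcomm (hij : Commute (gen Λ i) (gen Λ j)) : False :=
    (eq_or_le_centralizer_of_mem_factors (hij.map φ) hP hQ).elim (fun heq => h.1 (Subtype.ext heq))
      h.2
  refine ⟨?_, fun hij => hcomm (commute_gen hij)⟩
  rintro rfl
  exact hcomm (.refl _)

end Regions

section Distance

lemma le_add_length_of_walk {U : Type*} {G : SimpleGraph U} {R : U → ℕ → Prop}
    (hex : ∀ u v, G.Adj u v → ∀ a, R u a → ∃ b, R v b)
    (hstep : ∀ u v, G.Adj u v → ∀ a b, R u a → R v b → b ≤ a + 1) {u v : U} (p : G.Walk u v)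
    (hne : u ≠ v) {a b : ℕ} (hu : R u a) (hv : R v b) : b ≤ a + p.length := by
  induction p generalizing a with
  | nil => exact absurd rfl hne
  | @cons u w v huw p ih =>
    obtain ⟨c, hw⟩ := hex u w huw a hu
    have hca := hstep u w huw a c hu hw
    rw [Walk.length_cons]
    by_cases hwv : w = v
    · subst hwv
      have := hstep u w huw a b hu hv
      omega
    · have := ih hwv hw hv
      omega

variable {V W : Type} {Λ : SimpleGraph V} {Γ : SimpleGraph W} [Finite W] {φ : RAAG Λ →* RAAG Γ}

lemma dist_le_length_of_walk_regionVertices {A B : imageFactors φ} {c : Region φ}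
    {x y : regionVertices c} (p : ((commutingGraph (RAAG Γ))ᶜ.induce (regionVertices c)).Walk x y)
    (hxy : x ≠ y) (hx : x.1 ∈ A.1) (hy : y.1 ∈ B.1) : (factorGraph φ).dist A B ≤ p.length := by
  rw [← zero_add p.length]
  refine le_add_length_of_walk
    (R := fun z k => ∃ P : imageFactors φ, z.1 ∈ P.1 ∧ (factorGraph φ).dist A P = k)
    (fun u v _ _ _ => ?_) (fun u v huv a b hu hv => ?_) p hxy ⟨A, hx, dist_self⟩ ⟨B, hy, rfl⟩
  · obtain ⟨-, P, -, hvP⟩ := v.2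
    exact ⟨_, P, hvP, rfl⟩
  · obtain ⟨P, huP, rfl⟩ := hu
    obtain ⟨Q, hvQ, rfl⟩ := hv
    by_cases hPQ : P = Q
    · subst hPQ
      omega
    · have hadj : (factorGraph φ).Adj P Q :=
        ⟨hPQ, fun hcent => compl_commutingGraph_adj.1 huv (hcent huP v hvQ).symm⟩
      have := hadj.diff_dist_adj (u := A)
      omega

lemma hasAntipath_regionVertices_dist {A B : imageFactors φ} {c : Region φ} (hA : A ∈ c.supp)
    (hB : B ∈ c.supp) (hne : A ≠ B) :
    HasAntipath (commutingGraph (RAAG Γ)) (regionVertices c) ((factorGraph φ).dist A B + 1) := by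
  have hP (P : imageFactors φ) := isIrreducibleParabolic_of_mem_imageFactors P
  by_cases hadj : (factorGraph φ).Adj A B
  · obtain ⟨x, hx, hxA, y, hy, hyB, hxy⟩ :=
      exists_not_commute_of_not_le_centralizer (hP A) (hP B) hadj.2
    rw [dist_eq_one_iff_adj.2 hadj]
    exact hasAntipath_two_of_not_commute ⟨hx, A, hA, hxA⟩ ⟨hy, B, hB, hyB⟩ hxy
  obtain ⟨x, hx, hxA⟩ := exists_mem_vertexConjugates (hP A)
  obtain ⟨y, hy, hyB⟩ := exists_mem_vertexConjugates (hP B)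
  have hxy : x ≠ y := by
    rintro rfl
    have hcent : A.1 ≤ Subgroup.centralizer B.1 := not_not.1 fun h => hadj ⟨hne, h⟩
    exact hne (Subtype.ext (eq_of_mem_vertexConjugates (hP A) (hP B) hcent hx hxA hyB))
  have hreach := (coConnected_regionVertices c).reachable ⟨x, hx, A, hA, hxA⟩ ⟨y, hy, B, hB, hyB⟩
  obtain ⟨p, hp⟩ := hreach.exists_walk_length_eq_dist
  refine (hasAntipath_dist hreach).mono (Nat.succ_le_succ ?_)
  rw [← hp]
  exact dist_le_length_of_walk_regionVertices p (fun h => hxy (congrArg Subtype.val h)) hxA hyB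

lemma le_add_dist_of_mem_factors {n : ℕ} {v : ℕ → V} (hv : IsAntipath Λ n v)
    {C : Λᶜ.ConnectedComponent} (hC : ∀ i, i ∈ C.supp ↔ ∃ k < n, v k = i)
    {A B : imageFactors φ} (hAB : (factorGraph φ).Reachable A B) (hne : A ≠ B)
    {a b : ℕ} (ha : a < n) (hb : b < n)
    (hA : A.1 ∈ factors (φ (gen Λ (v a)))) (hB : B.1 ∈ factors (φ (gen Λ (v b)))) :
    b ≤ a + (factorGraph φ).dist A B := by
  obtain ⟨p, hp⟩ := hAB.exists_walk_length_eq_dist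
  rw [← hp]
  refine le_add_length_of_walk (R := fun P k => k < n ∧ P.1 ∈ factors (φ (gen Λ (v k))))
    ?_ ?_ p hne ⟨ha, hA⟩ ⟨hb, hB⟩
  · rintro P ⟨Q, i, hQ⟩ hPQ k ⟨hk, hP⟩
    have hadj := compl_adj_of_factorGraph_adj hPQ hP hQ
    obtain ⟨l, hl, rfl⟩ := (hC i).1
      ((C.mem_supp_congr_adj hadj).1 ((hC _).2 ⟨k, hk, rfl⟩))
    exact ⟨l, hl, hQ⟩
  · rintro P Q hPQ k l ⟨-, hP⟩ ⟨hl, hQ⟩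
    by_contra! hkl
    exact (compl_adj_of_factorGraph_adj hPQ hP hQ).2 (hv.adj k l hkl hl)

end Distance

section Labels

variable {V W : Type} {Λ : SimpleGraph V} {Γ : SimpleGraph W} [Finite W] {φ : RAAG Λ →* RAAG Γ}
  {c : Region φ} {C : Λᶜ.ConnectedComponent} {A B P : imageFactors φ} {i j : V}

/-- The vertices `i` for which some factor of `φ i` belongs to the region. -/
def regionLabels (c : Region φ) : Set V := {i | ∃ P ∈ c.supp, P.1 ∈ factors (φ (gen Λ i))}

lemma regionLabels_nonempty (c : Region φ) : (regionLabels c).Nonempty := by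
  obtain ⟨P, hP⟩ := c.nonempty_supp
  exact P.2.imp fun _ hi => ⟨P, hP, hi⟩

lemma regionHom_gen_eq_one (hi : i ∉ regionLabels c) : regionHom c (gen Λ i) = 1 := by
  rw [regionHom, partHom_gen, part_eq_one]
  rw [Set.disjoint_left]
  rintro _ ⟨P, hP, rfl⟩ hPi
  exact hi ⟨P, hP, hPi⟩

lemma regionHom_gen_eq_part (hP : P ∈ c.supp)
    (h : ∀ Q ∈ c.supp, Q.1 ∈ factors (φ (gen Λ i)) → Q = P) :
    regionHom c (gen Λ i) = part (φ (gen Λ i)) {P.1} := by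
  have heq : Subtype.val '' c.supp ∩ factors (φ (gen Λ i)) = {P.1} ∩ factors (φ (gen Λ i)) := by
    ext Q
    constructor
    · rintro ⟨⟨Q, hQ, rfl⟩, hQi⟩
      exact ⟨congrArg Subtype.val (h Q hQ hQi), hQi⟩
    · rintro ⟨rfl, hPi⟩
      exact ⟨⟨P, hP, rfl⟩, hPi⟩
  rw [regionHom, partHom_gen, ← part_inter_factors, heq, part_inter_factors]

lemma exists_factorGraph_adj (hA : A ∈ c.supp) (hB : B ∈ c.supp) (hne : A ≠ B) :
    ∃ Q ∈ c.supp, (factorGraph φ).Adj A Q := by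
  obtain ⟨p⟩ := ConnectedComponent.exact (hA.trans hB.symm)
  cases p with
  | nil => exact absurd rfl hne
  | cons hadj _ => exact ⟨_, (c.mem_supp_congr_adj hadj).1 hA, hadj⟩

lemma exists_mem_supp_of_reachable (hAB : (factorGraph φ).Reachable A B) (hi : i ∈ C.supp)
    (hiA : A.1 ∈ factors (φ (gen Λ i))) : ∃ k ∈ C.supp, B.1 ∈ factors (φ (gen Λ k)) := by
  obtain ⟨p⟩ := hAB
  induction p generalizing i with
  | nil => exact ⟨i, hi, hiA⟩
  | @cons A Q B hAQ _ ih =>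
    obtain ⟨k, hk⟩ := Q.2
    exact ih ((C.mem_supp_congr_adj (compl_adj_of_factorGraph_adj hAQ hiA hk)).1 hi) hk

lemma regionLabels_subset_supp (hc : c.supp.Nontrivial) (hA : A ∈ c.supp) (hi : i ∈ C.supp)
    (hiA : A.1 ∈ factors (φ (gen Λ i))) : regionLabels c ⊆ C.supp := by
  rintro j ⟨Q, hQ, hjQ⟩
  obtain ⟨k, hk, hkQ⟩ := exists_mem_supp_of_reachable
    (ConnectedComponent.exact (hA.trans hQ.symm)) hi hiA
  obtain ⟨Q', hQ', hne⟩ := hc.exists_ne Q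
  obtain ⟨R, -, hQR⟩ := exists_factorGraph_adj hQ hQ' hne.symm
  obtain ⟨l, hlR⟩ := R.2
  have hl := (C.mem_supp_congr_adj (compl_adj_of_factorGraph_adj hQR hkQ hlR)).1 hk
  exact (C.mem_supp_congr_adj (compl_adj_of_factorGraph_adj hQR hjQ hlR)).2 hl

lemma exists_zpow_mul_zpow_eq_one {G : Type*} [Group G] {x y z : G}
    (hx : ∃ p > 0, ∃ q : ℤ, x ^ p = z ^ q) (hy : ∃ p > 0, ∃ q : ℤ, y ^ p = z ^ q) :
    ∃ r s : ℤ, (r ≠ 0 ∨ s ≠ 0) ∧ x ^ r * y ^ s = 1 := by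
  obtain ⟨p, hp, q, hpq⟩ := hx
  obtain ⟨p', hp', q', hpq'⟩ := hy
  by_cases hq : q = 0
  · exact ⟨p, 0, .inl (by omega), by simp [hpq, hq]⟩
  refine ⟨p * q', -(p' * q), .inr (by simp [hp'.ne', hq]), ?_⟩
  rw [zpow_neg, mul_inv_eq_one, zpow_mul, zpow_mul, zpow_natCast, zpow_natCast, hpq, hpq',
    ← zpow_mul, ← zpow_mul, mul_comm]

lemma IsIrreducibleParabolic.exists_zpow_mul_zpow_eq_one {P : Subgroup (RAAG Γ)} {a x y : RAAG Γ}
    (hP : IsIrreducibleParabolic P) (ha : IsParabolicClosure P a) (hx : x ∈ P) (hy : y ∈ P)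
    (hax : Commute a x) (hay : Commute a y) :
    ∃ r s : ℤ, (r ≠ 0 ∨ s ≠ 0) ∧ x ^ r * y ^ s = 1 :=
  RAAG.exists_zpow_mul_zpow_eq_one (IsParabolicClosure.exists_pow_eq_zpow hP ha hx hax)
    (IsParabolicClosure.exists_pow_eq_zpow hP ha hy hay)

end Labels

section Components

variable {V W : Type} {Λ : SimpleGraph V} {Γ : SimpleGraph W} [Finite W] {φ : RAAG Λ →* RAAG Γ}
  {C : Λᶜ.ConnectedComponent} {P : imageFactors φ} {i j k : V} {n : ℕ} {v : ℕ → V}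

lemma exists_zpow_mul_zpow_mem_ker_or_nonabelian (c : Region φ) (hP : P ∈ c.supp) (hi : i ∈ C.supp)
    (hij : ∀ k, k ∉ C.supp → Commute (gen Λ k) (gen Λ i) ∧ Commute (gen Λ k) (gen Λ j))
    (hPi : P.1 ∈ factors (φ (gen Λ i))) (hPj : P.1 ∈ factors (φ (gen Λ j)))
    (huniq : ∀ Q ∈ c.supp, Q.1 ∈ factors (φ (gen Λ i)) ∨ Q.1 ∈ factors (φ (gen Λ j)) → Q = P) :
    (∃ p q : ℤ, (p ≠ 0 ∨ q ≠ 0) ∧ gen Λ i ^ p * gen Λ j ^ q ∈ (regionHom c).ker) ∨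
      regionLabels c ⊆ C.supp ∧ ¬ Commute (gen Λ i) (gen Λ j) ∧
        ¬ P.1 ≤ Subgroup.centralizer P.1 := by
  have hirr := isIrreducibleParabolic_of_mem_imageFactors P
  rw [or_iff_not_imp_left]
  intro hrel
  have hnot {k : V} (hPk : P.1 ∈ factors (φ (gen Λ k)))
      (hki : Commute (part (φ (gen Λ k)) {P.1}) (part (φ (gen Λ i)) {P.1}))
      (hkj : Commute (part (φ (gen Λ k)) {P.1}) (part (φ (gen Λ j)) {P.1})) : False := by
    simp only [MonoidHom.mem_ker, map_mul, map_zpow,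
      regionHom_gen_eq_part hP fun Q hQ hQi => huniq Q hQ (.inl hQi),
      regionHom_gen_eq_part hP fun Q hQ hQj => huniq Q hQ (.inr hQj)] at hrel
    exact hrel (hirr.exists_zpow_mul_zpow_eq_one (isParabolicClosure_part_singleton hPk)
      (part_singleton_mem hPi) (part_singleton_mem hPj) hki hkj)
  refine ⟨fun k hk => ?_, fun hcomm => ?_, fun hcent => ?_⟩
  · by_contra hkC
    have hsub : c.supp.Subsingleton := Set.not_nontrivial_iff.1 fun hnt =>
      hkC (regionLabels_subset_supp hnt hP hi hPi hk)
    obtain ⟨Q, hQ, hQk⟩ := hk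
    obtain rfl := hsub hQ hP
    exact hnot hQk (commute_part ((hij k hkC).1.map φ) _ _) (commute_part ((hij k hkC).2.map φ) _ _)
  · exact hnot hPi (.refl _) (commute_part (hcomm.map φ) _ _)
  · exact hnot hPi (.refl _) (hcent (part_singleton_mem hPj) _ (part_singleton_mem hPi))

lemma commute_gen_of_notMem_supp (hk : k ∉ C.supp) (hi : i ∈ C.supp) :
    Commute (gen Λ k) (gen Λ i) :=
  have hne : k ≠ i := fun heq => hk (heq ▸ hi)
  commute_gen (not_not.1 fun hadj => hk ((C.mem_supp_congr_adj ⟨hne, hadj⟩).2 hi))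

lemma regionLabels_subset_and_hasAntipath_or_exists_mem_ker (c : Region φ) (hn : 2 ≤ n)
    (hv : IsAntipath Λ n v) (hC : ∀ i, i ∈ C.supp ↔ ∃ k < n, v k = i) :
    (regionLabels c ⊆ C.supp ∧ HasAntipath (commutingGraph (RAAG Γ)) (regionVertices c) n) ∨
      ∃ p q : ℤ, (p ≠ 0 ∨ q ≠ 0) ∧
        gen Λ (v 0) ^ p * gen Λ (v (n - 1)) ^ q ∈ (regionHom c).ker := by
  have hmem {k : ℕ} (hk : k < n) : v k ∈ C.supp := (hC _).2 ⟨k, hk, rfl⟩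
  by_cases h0 : v 0 ∈ regionLabels c
  swap
  · exact .inr ⟨1, 0, by simp [MonoidHom.mem_ker, regionHom_gen_eq_one h0]⟩
  by_cases hlast : v (n - 1) ∈ regionLabels c
  swap
  · exact .inr ⟨0, 1, by simp [MonoidHom.mem_ker, regionHom_gen_eq_one hlast]⟩
  by_cases hne : ∃ A ∈ c.supp, ∃ B ∈ c.supp,
    A ≠ B ∧ A.1 ∈ factors (φ (gen Λ (v 0))) ∧ B.1 ∈ factors (φ (gen Λ (v (n - 1))))
  · obtain ⟨A, hA, B, hB, hAB, hA0, hBlast⟩ := hne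
    refine .inl ⟨regionLabels_subset_supp ⟨A, hA, B, hB, hAB⟩ hA (hmem (by omega)) hA0, ?_⟩
    have hdist := le_add_dist_of_mem_factors hv hC
      (ConnectedComponent.exact (hA.trans hB.symm)) hAB (by omega) (by omega) hA0 hBlast
    exact (hasAntipath_regionVertices_dist hA hB hAB).mono (by omega)
  push Not at hne
  obtain ⟨P, hP, hP0⟩ := h0
  obtain ⟨Q, hQ, hQlast⟩ := hlast
  obtain rfl : P = Q := by
    by_contra hPQ
    exact hne P hP Q hQ hPQ hP0 hQlast
  refine (exists_zpow_mul_zpow_mem_ker_or_nonabelian c hP (hmem (by omega))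
    (fun k hk => ⟨commute_gen_of_notMem_supp hk (hmem (by omega)),
      commute_gen_of_notMem_supp hk (hmem (by omega))⟩) hP0 hQlast
    fun R hR hR' => ?_).symm.imp_left ?_
  · by_contra hRP
    exact hR'.elim (fun h => hne R hR P hP hRP h hQlast) fun h => hne P hP R hR (Ne.symm hRP) hP0 h
  · rintro ⟨hsub, hnc, hcent⟩
    obtain rfl : n = 2 := by
      by_contra hn2
      exact hnc (commute_gen (hv.adj 0 (n - 1) (by omega) (by omega)))
    have hirr := isIrreducibleParabolic_of_mem_imageFactors P
    obtain ⟨x, hx, hxP, y, hy, hyP, hxy⟩ := exists_not_commute_of_not_le_centralizer hirr hirr hcent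
    exact ⟨hsub, hasAntipath_two_of_not_commute ⟨hx, P, hP, hxP⟩ ⟨hy, P, hP, hyP⟩ hxy⟩

lemma coConnected_supp (C : Λᶜ.ConnectedComponent) : CoConnected Λ C.supp := by
  refine ⟨C.nonempty_supp, fun x hx y hy => ?_⟩
  obtain ⟨p⟩ := ConnectedComponent.exact (hx.trans hy.symm)
  induction p with
  | nil => exact .refl
  | cons hadj _ ih =>
    have h := (C.mem_supp_congr_adj hadj).1 hx
    exact (ih h hy).head ⟨hx, h, hadj.2⟩

lemma exists_region_hasAntipath [Finite V] (hφ : Function.Injective φ) (hn : 2 ≤ n)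
    (hv : IsAntipath Λ n v) (hC : ∀ i, i ∈ C.supp ↔ ∃ k < n, v k = i) :
    ∃ c : Region φ, regionLabels c ⊆ C.supp ∧
      HasAntipath (commutingGraph (RAAG Γ)) (regionVertices c) n := by
  by_contra! hnone
  have h0 : v 0 ∈ C.supp := (hC _).2 ⟨0, by omega, rfl⟩
  have hlast : v (n - 1) ∈ C.supp := (hC _).2 ⟨n - 1, by omega, rfl⟩
  have hne : v 0 ≠ v (n - 1) := hv.ne (by omega) (by omega)
  obtain ⟨x, hx, hker⟩ := (coConnected_supp C).exists_ne_one_mem ⟨_, h0, _, hlast, hne⟩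
    (fun c : Region φ => (regionHom c).normal_ker) fun c => ⟨_, h0, _, hlast, hne,
      (regionLabels_subset_and_hasAntipath_or_exists_mem_ker c hn hv hC).resolve_left
        fun h => hnone c h.1 h.2⟩
  exact hx ((map_eq_one_iff φ hφ).1 (eq_one_of_forall_regionHom hker))

end Components

section Isolated

lemma exists_ne_zero_forall_sum_mul_eq_zero {α β : Type*} [Fintype α] [Fintype β]
    (hcard : Fintype.card β < Fintype.card α) (q : β → α → ℤ) :
    ∃ e : α → ℤ, e ≠ 0 ∧ ∀ b, ∑ a, q b a * e a = 0 := by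
  have hker : LinearMap.ker (Matrix.of q).mulVecLin ≠ ⊥ := fun h =>
    hcard.not_ge (card_le_of_injective ℤ _ (LinearMap.ker_eq_bot.1 h))
  obtain ⟨e, he, he0⟩ := (Submodule.ne_bot_iff _).1 hker
  exact ⟨e, he0, congrFun (LinearMap.mem_ker.1 he)⟩

lemma exists_pow_eq_zpow_of_finite {α β G : Type*} [Finite α] [Finite β] [Group G]
    {x : β → α → G} {z : β → G} (h : ∀ b a, ∃ p > 0, ∃ q : ℤ, x b a ^ p = z b ^ q) :
    ∃ p > 0, ∀ b a, ∃ q : ℤ, x b a ^ p = z b ^ q := by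
  have := Fintype.ofFinite α
  have := Fintype.ofFinite β
  choose p hp q hq using h
  refine ⟨∏ b, ∏ a, p b a, Finset.prod_pos fun b _ => Finset.prod_pos fun a _ => hp b a,
    fun b a => ?_⟩
  obtain ⟨k, hk⟩ := (Finset.dvd_prod_of_mem (p b) (Finset.mem_univ a)).trans
    (Finset.dvd_prod_of_mem (fun b => ∏ a, p b a) (Finset.mem_univ b))
  exact ⟨q b a * k, by rw [hk, pow_mul, hq, zpow_mul, zpow_natCast]⟩

lemma exists_ne_one_mem_parabolic_range {V : Type} {Λ : SimpleGraph V} {α β G : Type*} [Fintype α]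
    [Fintype β] [Group G] (hcard : Fintype.card β < Fintype.card α) {u : α → V}
    (hu : Function.Injective u) {ψ : β → RAAG Λ →* G} {z : β → G}
    (h : ∀ b a, ∃ p > 0, ∃ q : ℤ, ψ b (gen Λ (u a)) ^ p = z b ^ q) :
    ∃ x ≠ 1, x ∈ parabolic Λ (Set.range u) ∧ ∀ b, ψ b x = 1 := by
  obtain ⟨p, hp, hq⟩ := exists_pow_eq_zpow_of_finite h
  choose q hq using hq
  obtain ⟨e, he0, he⟩ := exists_ne_zero_forall_sum_mul_eq_zero hcard q
  obtain ⟨a, ha⟩ := Function.ne_iff.1 he0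
  let x := (Finset.univ.toList.map fun a => gen Λ (u a) ^ (p * e a)).prod
  have hexp : expSum Λ (u a) x = .ofAdd (p * e a) := by
    rw [map_list_prod, List.map_map, Finset.prod_map_toList, Finset.prod_eq_single a]
    · exact expSum_gen_zpow _ _
    · intro b _ hba
      rw [Function.comp_apply, map_zpow, expSum_gen_of_ne (hu.ne hba), one_zpow]
    · exact fun h => absurd (Finset.mem_univ a) h
  refine ⟨x, fun hx => ?_, list_prod_mem fun y hy => ?_, fun b => ?_⟩
  · rw [hx, map_one, eq_comm, ofAdd_eq_one, mul_eq_zero] at hexp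
    exact hexp.elim (by omega) ha
  · obtain ⟨b, -, rfl⟩ := List.mem_map.1 hy
    exact zpow_mem (gen_mem_parabolic (Set.mem_range_self b)) _
  · have hgen : (ψ b ∘ fun a => gen Λ (u a) ^ (p * e a)) =
        zpowersHom G (z b) ∘ fun a => .ofAdd (q b a * e a) := by
      funext a
      rw [Function.comp_apply, map_zpow, zpow_mul, zpow_natCast, hq, Function.comp_apply,
        zpowersHom_apply, toAdd_ofAdd, zpow_mul]
    rw [map_list_prod, List.map_map, hgen, ← List.map_map, ← map_list_prod,
      Finset.prod_map_toList, ← ofAdd_sum, he, ofAdd_zero, map_one]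

variable {V W : Type} {Λ : SimpleGraph V} {Γ : SimpleGraph W} {φ : RAAG Λ →* RAAG Γ}

lemma exists_pow_regionHom_eq_zpow [Finite W] {c : Region φ} {P : imageFactors φ} (hP : P ∈ c.supp)
    {i j : V} (hi : ∀ k, k ≠ i → Λ.Adj i k) (hPi : P.1 ∈ factors (φ (gen Λ i))) :
    ∃ p > 0, ∃ q : ℤ, regionHom c (gen Λ j) ^ p = part (φ (gen Λ i)) {P.1} ^ q := by
  have hcomm : Commute (gen Λ i) (gen Λ j) := by
    by_cases hij : j = i
    · exact hij ▸ .refl _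
    · exact commute_gen (hi j hij)
  have huniq (Q : imageFactors φ) (hQ : Q ∈ c.supp) : Q = P := by
    by_contra hne
    obtain ⟨R, -, hPR⟩ := exists_factorGraph_adj hP hQ (Ne.symm hne)
    obtain ⟨k, hk⟩ := R.2
    have hadj := compl_adj_of_factorGraph_adj hPR hPi hk
    exact hadj.2 (hi k hadj.ne')
  rw [regionHom_gen_eq_part hP fun Q hQ _ => huniq Q hQ]
  have hirr := isIrreducibleParabolic_of_mem_imageFactors P
  by_cases hPj : P.1 ∈ factors (φ (gen Λ j))
  · exact IsParabolicClosure.exists_pow_eq_zpow hirr (isParabolicClosure_part_singleton hPi)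
      (part_singleton_mem hPj) (commute_part (hcomm.map φ) _ _)
  · exact ⟨1, one_pos, 0, by rw [part_eq_one (Set.disjoint_singleton_left.2 hPj)]; simp⟩

lemma exists_injective_region_of_universal [Finite V] [Finite W] (hφ : Function.Injective φ)
    {I : Set V} (hI : ∀ i ∈ I, ∀ k, k ≠ i → Λ.Adj i k) :
    ∃ s : I → Region φ, Function.Injective s ∧ ∀ i, (regionLabels (s i) ∩ I).Nonempty := by
  have := Fintype.ofFinite I
  have := Fintype.ofFinite {c : Region φ // (regionLabels c ∩ I).Nonempty}
  by_cases hcard : Fintype.card I ≤ Fintype.card {c : Region φ // (regionLabels c ∩ I).Nonempty}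
  · obtain ⟨s⟩ := Function.Embedding.nonempty_of_card_le hcard
    exact ⟨fun i => s i, Subtype.val_injective.comp s.injective, fun i => (s i).2⟩
  have hz (c : {c : Region φ // (regionLabels c ∩ I).Nonempty}) :
      ∃ z, ∀ j : I, ∃ p > 0, ∃ q : ℤ, regionHom c.1 (gen Λ j.1) ^ p = z ^ q := by
    obtain ⟨c, i, ⟨P, hP, hPi⟩, hi⟩ := c
    exact ⟨_, fun j => exists_pow_regionHom_eq_zpow hP (hI i hi) hPi⟩
  choose z hz using hz
  obtain ⟨x, hx1, hxI, hx⟩ :=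
    exists_ne_one_mem_parabolic_range (not_le.1 hcard) Subtype.val_injective hz
  refine absurd ((map_eq_one_iff φ hφ).1 (eq_one_of_forall_regionHom fun c => ?_)) hx1
  by_cases hc : (regionLabels c ∩ I).Nonempty
  · exact hx ⟨c, hc⟩
  · suffices parabolic Λ I ≤ (regionHom c).ker from this (Subtype.range_val (s := I) ▸ hxI)
    exact parabolic_le.2 fun i hi => regionHom_gen_eq_one fun hic => hc ⟨i, hic, hi⟩

end Isolated

section LinearForest

variable {V : Type} {G : SimpleGraph V}

lemma exists_adj_dist_eq {r x : V} {k : ℕ} (hx : G.Reachable r x) (hk : G.dist r x = k + 1) :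
    ∃ z, G.Adj z x ∧ G.Reachable r z ∧ G.dist r z = k := by
  obtain ⟨p, hp⟩ := hx.exists_walk_length_eq_dist
  refine ⟨p.getVert k, ?_, ⟨p.take k⟩, dist_getVert_of_length_eq_dist hp (by omega)⟩
  have hadj := p.adj_getVert_succ (i := k) (by omega)
  rwa [← hk, ← hp, p.getVert_length] at hadj

lemma exists_mem_supp_subsingleton_neighborSet [Finite V] (hG : G.IsAcyclic)
    (C : G.ConnectedComponent) : ∃ r ∈ C.supp, (G.neighborSet r).Subsingleton := by
  have := Fintype.ofFinite V
  classical
  rcases subsingleton_or_nontrivial C.supp with hsub | hnt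
  · obtain ⟨r, hr⟩ := C.nonempty_supp
    refine ⟨r, hr, fun x hx => absurd ?_ hx.ne⟩
    exact congrArg Subtype.val
      (hsub.elim ⟨r, hr⟩ ⟨x, (C.mem_supp_congr_adj hx).1 hr⟩)
  · have : Nontrivial C := hnt
    obtain ⟨⟨r, hr⟩, hdeg⟩ :=
      (hG.isTree_connectedComponent C).exists_vert_degree_one_of_nontrivial
    refine ⟨r, hr, fun x hx y hy => ?_⟩
    exact congrArg Subtype.val ((degree_eq_one_iff_existsUnique_adj.1 hdeg).unique
      (y₁ := ⟨x, (C.mem_supp_congr_adj hx).1 hr⟩) (y₂ := ⟨y, (C.mem_supp_congr_adj hy).1 hr⟩) hx hy)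

lemma eq_or_eq_of_adj [Finite V] (hdeg : ∀ v, (G.neighborSet v).ncard ≤ 2) {a b c d : V}
    (hb : G.Adj a b) (hc : G.Adj a c) (hd : G.Adj a d) : b = c ∨ b = d ∨ c = d := by
  by_contra! hne
  have hcard : 2 < (G.neighborSet a).ncard := Set.two_lt_ncard (Set.toFinite _) |>.2
    ⟨b, hb, c, hc, d, hd, hne⟩
  exact (hdeg a).not_gt hcard

lemma not_adj_of_isAcyclic (hG : G.IsAcyclic) {a b c : V} (hab : G.Adj a b) (hbc : G.Adj b c) :
    ¬ G.Adj a c := fun hac => by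
  have h := (hG.subsingleton_path _ _).elim ⟨.cons hac .nil, by simp [hac.ne]⟩
    ⟨.cons hab (.cons hbc .nil), by simp [hab.ne, hac.ne, hbc.ne]⟩
  simpa using congrArg Walk.length (congrArg Subtype.val h)

lemma eq_or_eq_of_isAcyclic (hG : G.IsAcyclic) {a b c d : V} (hab : G.Adj a b) (hbc : G.Adj b c)
    (had : G.Adj a d) (hdc : G.Adj d c) : a = c ∨ b = d := by
  by_contra! hne
  have h := (hG.subsingleton_path _ _).elim ⟨.cons hab (.cons hbc .nil), by
      simp [hab.ne, hne.1, hbc.ne]⟩ ⟨.cons had (.cons hdc .nil), by simp [had.ne, hne.1, hdc.ne]⟩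
  exact hne.2 (by simpa using congrArg Walk.snd (congrArg Subtype.val h))

lemma eq_of_dist_eq [Finite V] (hdeg : ∀ v, (G.neighborSet v).ncard ≤ 2) {r x y : V}
    (hr : (G.neighborSet r).Subsingleton) (hx : G.Reachable r x) (hy : G.Reachable r y)
    (hxy : G.dist r x = G.dist r y) : x = y := by
  induction hk : G.dist r x generalizing x y with
  | zero =>
    rw [← hx.dist_eq_zero_iff.1 hk, ← hy.dist_eq_zero_iff.1 (hxy ▸ hk)]
  | succ k ih =>
    obtain ⟨z, hzx, hz, hdz⟩ := exists_adj_dist_eq hx hk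
    obtain ⟨z', hzy, hz', hdz'⟩ := exists_adj_dist_eq hy (hxy ▸ hk)
    obtain rfl := ih hz hz' (hdz.trans hdz'.symm) hdz
    cases k with
    | zero =>
      obtain rfl := hz.dist_eq_zero_iff.1 hdz
      exact hr hzx hzy
    | succ k =>
      obtain ⟨u, huz, -, hdu⟩ := exists_adj_dist_eq hz hdz
      rcases eq_or_eq_of_adj hdeg huz.symm hzx hzy with rfl | rfl | rfl
      · omega
      · omega
      · rfl

lemma exists_isAntipath_of_isLinearForest [Finite V] {Λ : SimpleGraph V} (hΛ : IsLinearForest Λᶜ)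
    (C : Λᶜ.ConnectedComponent) :
    ∃ n v, IsAntipath Λ n v ∧ ∀ i, i ∈ C.supp ↔ ∃ k < n, v k = i := by
  obtain ⟨r, hr, hnbr⟩ := exists_mem_supp_subsingleton_neighborSet hΛ.1 C
  obtain ⟨y, hy, hmax⟩ := C.supp.exists_max_image (Λᶜ.dist r) C.supp.toFinite C.nonempty_supp
  have hreach {x : V} (hx : x ∈ C.supp) : Λᶜ.Reachable r x :=
    ConnectedComponent.exact (hr.trans hx.symm)
  obtain ⟨p, hp⟩ := (hreach hy).exists_walk_length_eq_dist
  have hanti := isAntipath_compl_getVert hp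
  rw [compl_compl] at hanti
  refine ⟨p.length + 1, p.getVert, hanti, fun i => ⟨fun hi => ?_, ?_⟩⟩
  · have hle := hmax i hi
    refine ⟨Λᶜ.dist r i, by omega, eq_of_dist_eq hΛ.2 hnbr ⟨p.take _⟩ (hreach hi) ?_⟩
    exact dist_getVert_of_length_eq_dist hp (by omega)
  · rintro ⟨k, -, rfl⟩
    exact (ConnectedComponent.sound ⟨p.take k⟩).symm.trans hr

end LinearForest

section Words

variable {W : Type} {Γ : SimpleGraph W}

/-- The value in `A(Γ)` of a word in the standard generators; the letter `(v, true)` stands for `v`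
and `(v, false)` for `v⁻¹`. -/
def evalWord (Γ : SimpleGraph W) (l : List (W × Bool)) : RAAG Γ :=
  (l.map fun a => cond a.2 (gen Γ a.1) (gen Γ a.1)⁻¹).prod

@[simp] lemma evalWord_nil : evalWord Γ [] = 1 := rfl

@[simp] lemma evalWord_cons (a : W × Bool) (l : List (W × Bool)) :
    evalWord Γ (a :: l) = cond a.2 (gen Γ a.1) (gen Γ a.1)⁻¹ * evalWord Γ l := by
  simp [evalWord]

lemma evalWord_append (l l' : List (W × Bool)) :
    evalWord Γ (l ++ l') = evalWord Γ l * evalWord Γ l' := by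
  simp [evalWord]

lemma exists_evalWord_eq (x : RAAG Γ) : ∃ l, evalWord Γ l = x := by
  obtain ⟨y, rfl⟩ := PresentedGroup.mk_surjective (raagRels Γ) x
  obtain ⟨l, rfl⟩ := Quot.exists_rep y
  have hlift : PresentedGroup.mk (raagRels Γ) = FreeGroup.lift (gen Γ) :=
    FreeGroup.ext_hom _ _ fun v => (FreeGroup.lift_apply_of ..).symm
  exact ⟨l, by rw [hlift]; exact FreeGroup.lift_mk.symm⟩

end Words

section Double

variable {W : Type} {Γ : SimpleGraph W} {v w : W} {x y : W ⊕ {w // w ∉ starSet Γ v}}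

/-- The folding map from the vertices of the double along the star of `v` to those of `Γ`. -/
def doubleProj (Γ : SimpleGraph W) (v : W) : W ⊕ {w // w ∉ starSet Γ v} → W :=
  Sum.elim id Subtype.val

open scoped Classical in
/-- The vertex of the double that lies over `w`, on the sheet of the copies if `s = true` and on the
original sheet if `s = false`. The two sheets share the star of `v`. -/
noncomputable def doubleVertex (Γ : SimpleGraph W) (v : W) (s : Bool) (w : W) :
    W ⊕ {w // w ∉ starSet Γ v} :=
  if h : s = true ∧ w ∉ starSet Γ v then .inr ⟨w, h.2⟩ else .inl w

@[simp] lemma doubleProj_doubleVertex (s : Bool) :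
    doubleProj Γ v (doubleVertex Γ v s w) = w := by
  unfold doubleVertex
  split_ifs <;> rfl

lemma isRight_doubleVertex (s : Bool) (h : w ∉ starSet Γ v) :
    (doubleVertex Γ v s w).isRight = s := by
  cases s <;> simp [doubleVertex, h]

lemma doubleVertex_of_mem_starSet (s : Bool) (h : w ∈ starSet Γ v) :
    doubleVertex Γ v s w = .inl w := by
  simp [doubleVertex, h]

@[simp] lemma doubleVertex_isRight_doubleProj (x : W ⊕ {w // w ∉ starSet Γ v}) :
    doubleVertex Γ v x.isRight (doubleProj Γ v x) = x := by
  rcases x with w | ⟨w, hw⟩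
  · simp [doubleVertex, doubleProj]
  · simp [doubleVertex, doubleProj, hw]

lemma doubleVertex_doubleProj (s : Bool)
    (h : x.isRight = s ∨ doubleProj Γ v x ∈ starSet Γ v) :
    doubleVertex Γ v s (doubleProj Γ v x) = x := by
  obtain rfl | h := h
  · exact doubleVertex_isRight_doubleProj x
  rcases x with w | ⟨w, hw⟩
  · exact doubleVertex_of_mem_starSet s h
  · exact absurd h hw

lemma graphDouble_adj_iff :
    (GraphDouble Γ v).Adj x y ↔ Γ.Adj (doubleProj Γ v x) (doubleProj Γ v y) ∧
      (x.isRight = y.isRight ∨ doubleProj Γ v x ∈ starSet Γ v ∨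
        doubleProj Γ v y ∈ starSet Γ v) := by
  have hne {a b : W} : ¬ a = b ∧ Γ.Adj a b ↔ Γ.Adj a b := and_iff_right_of_imp Adj.ne
  rcases x with x | ⟨x, hx⟩ <;> rcases y with y | ⟨y, hy⟩ <;>
    simp [GraphDouble, doubleProj, *, Γ.adj_comm, and_comm]

lemma graphDouble_adj_doubleVertex_iff {s : Bool} {u w : W} :
    (GraphDouble Γ v).Adj (doubleVertex Γ v s u) (doubleVertex Γ v s w) ↔ Γ.Adj u w := by
  rw [graphDouble_adj_iff, doubleProj_doubleVertex, doubleProj_doubleVertex,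
    and_iff_left_iff_imp]
  intro _
  by_contra! h
  exact h.1 (by rw [isRight_doubleVertex s h.2.1, isRight_doubleVertex s h.2.2])

lemma exists_doubleVertex_of_adj (h : (GraphDouble Γ v).Adj x y) :
    ∃ s, doubleVertex Γ v s (doubleProj Γ v x) = x ∧
      doubleVertex Γ v s (doubleProj Γ v y) = y := by
  obtain ⟨-, h | h | h⟩ := graphDouble_adj_iff.1 h
  · exact ⟨_, doubleVertex_doubleProj _ (.inl h), doubleVertex_isRight_doubleProj y⟩
  · exact ⟨_, doubleVertex_doubleProj _ (.inr h), doubleVertex_isRight_doubleProj y⟩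
  · exact ⟨_, doubleVertex_isRight_doubleProj x, doubleVertex_doubleProj _ (.inr h)⟩

end Double

section Folding

variable {W : Type} {Γ : SimpleGraph W} {v w : W} {s : Bool}

open scoped Classical in
/-- The image under the folding homomorphism `foldDouble` of a vertex `x` of the double. -/
noncomputable def foldGen (Γ : SimpleGraph W) (v : W) (x : W ⊕ {w // w ∉ starSet Γ v}) : RAAG Γ :=
  MulAut.conj (gen Γ v ^ x.isRight.toNat)
    (gen Γ (doubleProj Γ v x) ^ if doubleProj Γ v x = v then 2 else 1)

open scoped Classical in
lemma foldGen_doubleVertex (s : Bool) (w : W) :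
    foldGen Γ v (doubleVertex Γ v s w) =
      MulAut.conj (gen Γ v ^ s.toNat) (gen Γ w ^ if w = v then 2 else 1) := by
  rw [foldGen, doubleProj_doubleVertex]
  by_cases h : w ∈ starSet Γ v
  · have hconj (n : ℕ) : MulAut.conj (gen Γ v ^ n) (gen Γ w ^ if w = v then 2 else 1) =
        gen Γ w ^ if w = v then 2 else 1 := by
      have hcomm : Commute (gen Γ v) (gen Γ w) := h.elim (fun h => h ▸ .refl _) commute_gen
      rw [MulAut.conj_apply, (hcomm.pow_pow _ _).eq, mul_inv_cancel_right]
    rw [hconj, hconj]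
  · rw [isRight_doubleVertex s h]

/-- The homomorphism from the group of the double to `A(Γ)` that fixes the vertices of the original
sheet other than `v`, squares `v` and maps the copy of `w` to `v * w * v⁻¹`. Its image is the kernel
of the homomorphism `A(Γ) → ℤ/2` counting the occurrences of `v`. -/
noncomputable def foldDouble (Γ : SimpleGraph W) (v : W) : RAAG (GraphDouble Γ v) →* RAAG Γ :=
  lift (foldGen Γ v) (by
    intro x y h
    obtain ⟨s, hx, hy⟩ := exists_doubleVertex_of_adj h
    rw [← hx, ← hy, graphDouble_adj_doubleVertex_iff] at h
    rw [← hx, ← hy, foldGen_doubleVertex, foldGen_doubleVertex]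
    exact ((commute_gen h).pow_pow _ _).map _)

open scoped Classical in
lemma foldDouble_gen_doubleVertex :
    foldDouble Γ v (gen _ (doubleVertex Γ v s w)) =
      gen Γ v ^ s.toNat * gen Γ w ^ (if w = v then 2 else 1) * (gen Γ v ^ s.toNat)⁻¹ := by
  rw [foldDouble, lift_gen, foldGen_doubleVertex, MulAut.conj_apply]

lemma foldDouble_gen_doubleVertex_of_ne (h : w ≠ v) :
    foldDouble Γ v (gen _ (doubleVertex Γ v s w)) =
      gen Γ v ^ s.toNat * gen Γ w * (gen Γ v ^ s.toNat)⁻¹ := by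
  rw [foldDouble_gen_doubleVertex, if_neg h, pow_one]

lemma foldDouble_gen_doubleVertex_self :
    foldDouble Γ v (gen _ (doubleVertex Γ v s v)) = gen Γ v ^ 2 := by
  rw [foldDouble_gen_doubleVertex, if_pos rfl, (Commute.pow_pow_self _ _ _).eq,
    mul_inv_cancel_right]

open scoped Classical in
/-- The generator `w` of `A(Γ)` acting on the set induced from the left regular action of the group
of the double, where `(g, s)` stands for the element `v⁻ˢ * foldDouble g` of `A(Γ)`. -/
noncomputable def inducedPerm (Γ : SimpleGraph W) (v w : W) :
    Equiv.Perm (RAAG (GraphDouble Γ v) × Bool) :=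
  if w = v then
    { toFun z := cond z.2 (z.1, false) (gen _ (.inl v) * z.1, true)
      invFun z := cond z.2 ((gen _ (.inl v))⁻¹ * z.1, false) (z.1, true)
      left_inv := by rintro ⟨z, _ | _⟩ <;> simp
      right_inv := by rintro ⟨z, _ | _⟩ <;> simp }
  else
    { toFun z := (gen _ (doubleVertex Γ v z.2 w) * z.1, z.2)
      invFun z := ((gen _ (doubleVertex Γ v z.2 w))⁻¹ * z.1, z.2)
      left_inv z := by simp
      right_inv z := by simp }

lemma inducedPerm_self_apply (z : RAAG (GraphDouble Γ v) × Bool) :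
    inducedPerm Γ v v z = cond z.2 (z.1, false) (gen _ (.inl v) * z.1, true) := by
  simp [inducedPerm]

lemma inducedPerm_apply_of_ne (h : w ≠ v) (z : RAAG (GraphDouble Γ v) × Bool) :
    inducedPerm Γ v w z = (gen _ (doubleVertex Γ v z.2 w) * z.1, z.2) := by
  simp [inducedPerm, h]

lemma commute_inducedPerm_self (h : Γ.Adj v w) :
    Commute (inducedPerm Γ v v) (inducedPerm Γ v w) := by
  have hw (s) : doubleVertex Γ v s w = .inl w := doubleVertex_of_mem_starSet s (.inr h)
  have hcomm : Commute (gen (GraphDouble Γ v) (.inl v)) (gen _ (.inl w)) :=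
    commute_gen (graphDouble_adj_iff.2 ⟨h, .inl rfl⟩)
  ext1 ⟨z, s⟩
  cases s <;>
    simp [inducedPerm_self_apply, inducedPerm_apply_of_ne h.ne', hw, ← mul_assoc, hcomm.eq]

lemma commute_inducedPerm {u : W} (h : Γ.Adj u w) :
    Commute (inducedPerm Γ v u) (inducedPerm Γ v w) := by
  obtain rfl | hu := eq_or_ne u v
  · exact commute_inducedPerm_self h
  obtain rfl | hw := eq_or_ne w v
  · exact (commute_inducedPerm_self h.symm).symm
  ext1 ⟨z, s⟩
  have hcomm := commute_gen ((graphDouble_adj_doubleVertex_iff (v := v) (s := s)).2 h)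
  simp [inducedPerm_apply_of_ne hu, inducedPerm_apply_of_ne hw, ← mul_assoc, hcomm.eq]

/-- The action of `A(Γ)` induced from the left regular action of the group of the double. -/
noncomputable def inducedAction (Γ : SimpleGraph W) (v : W) :
    RAAG Γ →* Equiv.Perm (RAAG (GraphDouble Γ v) × Bool) :=
  lift (inducedPerm Γ v) fun _ _ => commute_inducedPerm

lemma inducedAction_foldDouble (y g : RAAG (GraphDouble Γ v)) :
    inducedAction Γ v (foldDouble Γ v y) (g, false) = (y * g, false) := by
  have hy : y ∈ parabolic (GraphDouble Γ v) Set.univ := by simp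
  induction hy using Subgroup.closure_induction generalizing g with
  | one => simp
  | mul y y' _ _ h h' => rw [map_mul, map_mul, Equiv.Perm.mul_apply, h', h, mul_assoc]
  | inv y _ h => rw [map_inv, map_inv, Equiv.Perm.inv_eq_iff_eq, h, mul_inv_cancel_left]
  | mem y hy =>
    obtain ⟨x, -, rfl⟩ := hy
    rw [← doubleVertex_isRight_doubleProj x]
    generalize x.isRight = s, doubleProj Γ v x = w
    obtain rfl | hw := eq_or_ne w v
    · have hvert : doubleVertex Γ w s w = .inl w := doubleVertex_of_mem_starSet s (.inl rfl)
      rw [foldDouble_gen_doubleVertex_self, hvert]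
      simp [inducedAction, pow_two, inducedPerm_self_apply]
    · have hinv : (inducedPerm Γ v v).symm (g, false) = (g, true) := by
        simp [Equiv.symm_apply_eq, inducedPerm_self_apply]
      cases s <;>
        simp [foldDouble_gen_doubleVertex_of_ne hw, inducedAction, inducedPerm_apply_of_ne hw,
          inducedPerm_self_apply, hinv]

lemma foldDouble_injective : Function.Injective (foldDouble Γ v) := fun y y' h => by
  have heq := inducedAction_foldDouble y 1
  rw [h, inducedAction_foldDouble] at heq
  simpa using heq.symm

lemma exists_pow_mul_letter_eq (s : Bool) (a : W × Bool) :
    ∃ (s' : Bool) (l : List _), l.length ≤ 1 ∧ (a = (v, !s) → l = []) ∧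
      gen Γ v ^ s.toNat * cond a.2 (gen Γ a.1) (gen Γ a.1)⁻¹ =
        foldDouble Γ v (evalWord _ l) * gen Γ v ^ s'.toNat := by
  obtain ⟨w, e⟩ := a
  obtain rfl | hw := eq_or_ne w v
  · cases s <;> cases e
    · refine ⟨true, [(doubleVertex Γ w false w, false)], ?_⟩
      simp [foldDouble_gen_doubleVertex_self, pow_two]
    · exact ⟨true, [], by simp⟩
    · exact ⟨false, [], by simp⟩
    · refine ⟨false, [(doubleVertex Γ w false w, true)], ?_⟩
      simp [foldDouble_gen_doubleVertex_self, pow_two]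
  · refine ⟨s, [(doubleVertex Γ v s w, e)], ?_⟩
    cases e <;> simp [foldDouble_gen_doubleVertex_of_ne hw, hw, mul_assoc]

lemma exists_pow_mul_evalWord_eq (s : Bool) (l : List (W × Bool)) :
    ∃ (s' : Bool) (l' : List _), l'.length ≤ l.length ∧
      (l.head? = some (v, !s) → l'.length < l.length) ∧
      gen Γ v ^ s.toNat * evalWord Γ l =
        foldDouble Γ v (evalWord _ l') * gen Γ v ^ s'.toNat := by
  induction l generalizing s with
  | nil => exact ⟨s, [], by simp⟩
  | cons a l ih =>
    obtain ⟨t, k, hk, hnil, heq⟩ := exists_pow_mul_letter_eq (Γ := Γ) (v := v) s a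
    obtain ⟨s', l', hl', -, heq'⟩ := ih t
    refine ⟨s', k ++ l', by simp; omega, fun ha => ?_, ?_⟩
    · simp only [List.head?_cons, Option.some_inj] at ha
      simp [hnil ha]; omega
    · rw [evalWord_cons, ← mul_assoc, heq, mul_assoc, heq', evalWord_append, map_mul, mul_assoc]

lemma exists_conj_conj_eq_foldDouble (s : Bool) (l : List (W × Bool)) (a : W) :
    ∃ l' a' e, l'.length ≤ l.length ∧ (l.head? = some (v, !s) → l'.length < l.length) ∧ e ≠ 0 ∧
      foldDouble Γ v (evalWord _ l' * gen _ a' * (evalWord _ l')⁻¹) =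
        gen Γ v ^ s.toNat * (evalWord Γ l * gen Γ a * (evalWord Γ l)⁻¹) ^ e *
          (gen Γ v ^ s.toNat)⁻¹ := by
  classical
  obtain ⟨s', l', hl', hlt, heq⟩ := exists_pow_mul_evalWord_eq (Γ := Γ) (v := v) s l
  refine ⟨l', doubleVertex Γ v s' a, if a = v then 2 else 1, hl', hlt, by split_ifs <;> simp, ?_⟩
  rw [map_mul, map_mul, map_inv, foldDouble_gen_doubleVertex, conj_pow,
    ← mul_inv_eq_iff_eq_mul.2 heq]
  simp only [mul_assoc, mul_inv_rev, inv_inv, inv_mul_cancel_left]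

end Folding

section AntipathJoin

variable {ι V X : Type*} {Λ : SimpleGraph V} {G : SimpleGraph X}

/-- A map between the vertices that preserves both adjacency and nonadjacency of distinct vertices
is an embedding of graphs. -/
def embeddingOfAdj (g : V → X) (hadj : ∀ i j, Λ.Adj i j → G.Adj (g i) (g j))
    (hcompl : ∀ i j, Λᶜ.Adj i j → Gᶜ.Adj (g i) (g j)) : Λ ↪g G where
  toFun := g
  inj' i j h := by
    by_contra hne
    obtain hΛ | hΛ := em (Λ.Adj i j)
    · exact (hadj i j hΛ).ne h
    · exact (hcompl i j ⟨hne, hΛ⟩).ne h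
  map_rel_iff' := by
    refine fun {i j} => ⟨fun h => ?_, hadj i j⟩
    by_contra hΛ
    exact (hcompl i j ⟨fun hij => h.ne (congrArg g hij), hΛ⟩).2 h

lemma compl_adj_embedding_iff {f : Λ ↪g G} {i j : V} : Gᶜ.Adj (f i) (f j) ↔ Λᶜ.Adj i j :=
  (Embedding.complEquiv f).map_adj_iff

/-- The vertices `f j k` with `k < n j` span the join over `j` of complements of paths with `n j`
vertices. The values `f j k` with `n j ≤ k` are irrelevant. -/
structure IsAntipathJoin (G : SimpleGraph X) (n : ι → ℕ) (f : ι → ℕ → X) : Prop where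
  isAntipath : ∀ j, IsAntipath G (n j) (f j)
  adj : ∀ j j' k k', j ≠ j' → k < n j → k' < n j' → G.Adj (f j k) (f j' k')

variable {n : ι → ℕ} {w : ι → ℕ → V} {f : ι → ℕ → X} {j j' : ι} {k k' : ℕ}

lemma IsAntipathJoin.adj_iff (hw : IsAntipathJoin Λ n w) (hk : k < n j) (hk' : k' < n j') :
    Λ.Adj (w j k) (w j' k') ↔ j ≠ j' ∨ k + 1 < k' ∨ k' + 1 < k := by
  obtain rfl | hj := eq_or_ne j j'
  · have hanti := hw.isAntipath j
    refine ⟨fun h => ?_, ?_⟩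
    · by_contra! hlt
      obtain rfl | rfl | rfl : k = k' ∨ k' = k + 1 ∨ k = k' + 1 := by omega
      · exact h.ne rfl
      · exact (hanti.compl_adj_succ k hk').2 h
      · exact (hanti.compl_adj_succ k' hk).2 h.symm
    · rintro (h | h | h)
      exacts [absurd rfl h, hanti.adj k k' h hk', (hanti.adj k' k h hk).symm]
  · exact iff_of_true (hw.adj j j' k k' hj hk hk') (.inl hj)

lemma IsAntipathJoin.compl_adj_iff (hw : IsAntipathJoin Λ n w) (hk : k < n j) (hk' : k' < n j') :
    Λᶜ.Adj (w j k) (w j' k') ↔ j = j' ∧ (k' = k + 1 ∨ k = k' + 1) := by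
  rw [compl_adj, hw.adj_iff hk hk']
  refine ⟨fun ⟨hne, h⟩ => ?_, ?_⟩
  · push Not at h
    obtain ⟨rfl, h⟩ := h
    refine ⟨rfl, ?_⟩
    have : k ≠ k' := by
      rintro rfl
      exact hne rfl
    omega
  · rintro ⟨rfl, rfl | rfl⟩
    · exact ⟨((hw.isAntipath j).compl_adj_succ k hk').ne, by grind⟩
    · exact ⟨((hw.isAntipath j).compl_adj_succ k' hk).ne', by grind⟩

lemma IsAntipathJoin.exists_embedding (hw : IsAntipathJoin Λ n w)
    (hsurj : ∀ i, ∃ j, ∃ k < n j, w j k = i) (hf : IsAntipathJoin G n f) :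
    ∃ e : Λ ↪g G, ∀ i, ∃ j k, e i = f j k := by
  choose j k hk hjk using hsurj
  refine ⟨embeddingOfAdj (fun i => f (j i) (k i)) (fun i i' h => ?_) (fun i i' h => ?_),
    fun i => ⟨j i, k i, rfl⟩⟩
  · rw [← hjk i, ← hjk i', hw.adj_iff (hk i) (hk i')] at h
    exact (hf.adj_iff (hk i) (hk i')).2 h
  · rw [← hjk i, ← hjk i', hw.compl_adj_iff (hk i) (hk i')] at h
    exact (hf.compl_adj_iff (hk i) (hk i')).2 h

lemma exists_isAntipathJoin_of_isLinearForest {V : Type} [Finite V] {Λ : SimpleGraph V}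
    (hΛ : IsLinearForest Λᶜ) :
    ∃ (n : Λᶜ.ConnectedComponent → ℕ) (w : Λᶜ.ConnectedComponent → ℕ → V), IsAntipathJoin Λ n w ∧
      ∀ C i, i ∈ C.supp ↔ ∃ k < n C, w C k = i := by
  choose n w hw hsupp using exists_isAntipath_of_isLinearForest hΛ
  refine ⟨n, w, ⟨hw, fun C C' k k' hne hk hk' => ?_⟩, hsupp⟩
  have hC : w C k ∈ C.supp := (hsupp C _).2 ⟨k, hk, rfl⟩
  have hC' : w C' k' ∈ C'.supp := (hsupp C' _).2 ⟨k', hk', rfl⟩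
  by_contra hadj
  have hcompl : Λᶜ.Adj (w C k) (w C' k') :=
    ⟨fun h => hne (hC.symm.trans (h ▸ hC')), hadj⟩
  exact hne (hC.symm.trans ((ConnectedComponent.sound hcompl.reachable).trans hC'))

/-- The sequence obtained from `q` by inserting `x` between the entries `k` and `k + 1`. -/
def insertAfter {X : Type*} (q : ℕ → X) (k : ℕ) (x : X) (l : ℕ) : X :=
  if l ≤ k then q l else if l = k + 1 then x else q (l - 1)

/-- Deleting the edge of the path `q` of `Gᶜ` between the entries `k` and `k + 1` and joining its
ends to `x` instead is a subdivision of `q`. -/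
lemma isAntipath_insertAfter {q : ℕ → X} {m : ℕ} {x : X} (hkm : k + 1 < m)
    (hsucc : ∀ l, l + 1 < m → l ≠ k → Gᶜ.Adj (q l) (q (l + 1)))
    (hadj : ∀ l l', l + 1 < l' → l' < m → G.Adj (q l) (q l')) (hk : G.Adj (q k) (q (k + 1)))
    (hx : Gᶜ.Adj x (q k)) (hx' : Gᶜ.Adj x (q (k + 1)))
    (hxq : ∀ l < m, l ≠ k → l ≠ k + 1 → G.Adj x (q l)) :
    IsAntipath G (m + 1) (insertAfter q k x) := by
  refine ⟨fun l hl => ?_, fun l l' hl hl' => ?_⟩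
  · grind [insertAfter, adj_comm]
  · grind [insertAfter, adj_comm]

end AntipathJoin

section DoubleEmbedding

variable {V W : Type} {Λ : SimpleGraph V} {Γ : SimpleGraph W} {v : W}
  {x y : W ⊕ {w // w ∉ starSet Γ v}}

/-- The vertices `x` and `y` of the double lie off the star of `v`, on different sheets. -/
def Separated (x y : W ⊕ {w // w ∉ starSet Γ v}) : Prop :=
  doubleProj Γ v x ∉ starSet Γ v ∧ doubleProj Γ v y ∉ starSet Γ v ∧ x.isRight ≠ y.isRight

lemma Separated.symm (h : Separated x y) : Separated y x := ⟨h.2.1, h.1, h.2.2.symm⟩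

lemma Separated.compl_adj (h : Separated x y) : (GraphDouble Γ v)ᶜ.Adj x y := by
  refine ⟨fun heq => h.2.2 (congrArg _ heq), fun hadj => ?_⟩
  obtain ⟨-, h' | h' | h'⟩ := graphDouble_adj_iff.1 hadj
  exacts [h.2.2 h', h.1 h', h.2.1 h']

lemma adj_doubleProj (h : (GraphDouble Γ v).Adj x y) :
    Γ.Adj (doubleProj Γ v x) (doubleProj Γ v y) :=
  (graphDouble_adj_iff.1 h).1

lemma compl_adj_doubleProj (h : (GraphDouble Γ v)ᶜ.Adj x y) (hsep : ¬ Separated x y) :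
    Γᶜ.Adj (doubleProj Γ v x) (doubleProj Γ v y) := by
  have hsheet : x.isRight = y.isRight ∨ doubleProj Γ v x ∈ starSet Γ v ∨
      doubleProj Γ v y ∈ starSet Γ v := by
    by_contra! hne
    exact hsep ⟨hne.2.1, hne.2.2, hne.1⟩
  refine ⟨fun heq => h.1 ?_, fun hadj => h.2 (graphDouble_adj_iff.2 ⟨hadj, hsheet⟩)⟩
  rw [← heq, or_self] at hsheet
  rw [← doubleVertex_doubleProj y.isRight hsheet, heq, doubleVertex_isRight_doubleProj]

lemma compl_adj_of_notMem_starSet {w : W} (h : w ∉ starSet Γ v) : Γᶜ.Adj v w :=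
  ⟨fun heq => h (.inl heq.symm), fun hadj => h (.inr hadj)⟩

variable {f : Λ ↪g GraphDouble Γ v} {i j : V}

lemma nonempty_embedding_of_compl_adj_doubleProj
    (h : ∀ i j, Separated (f i) (f j) → Γᶜ.Adj (doubleProj Γ v (f i)) (doubleProj Γ v (f j))) :
    Nonempty (Λ ↪g Γ) :=
  ⟨embeddingOfAdj (fun i => doubleProj Γ v (f i))
    (fun _ _ hadj => adj_doubleProj (f.map_adj_iff.2 hadj))
    fun i j hadj => (em (Separated (f i) (f j))).elim (h i j)
      (compl_adj_doubleProj (compl_adj_embedding_iff.2 hadj))⟩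

/-- The embedding moves `i₀` to `v` and projects the other vertices to `Γ`. -/
lemma nonempty_embedding_of_forall_ne (i₀ : V)
    (hsep : ∀ i j, i ≠ i₀ → j ≠ i₀ → ¬ Separated (f i) (f j))
    (hadj : ∀ i, Λ.Adj i₀ i → doubleProj Γ v (f i) ∈ starSet Γ v)
    (hcompl : ∀ i, Λᶜ.Adj i₀ i → doubleProj Γ v (f i) ∉ starSet Γ v)
    (hv : ∀ i, doubleProj Γ v (f i) ≠ v) : Nonempty (Λ ↪g Γ) := by
  classical
  have hproj {i} (h : i ≠ i₀) : Function.update (fun i => doubleProj Γ v (f i)) i₀ v i =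
      doubleProj Γ v (f i) := Function.update_of_ne h ..
  have hadj' {i} (h : Λ.Adj i₀ i) : Γ.Adj v (doubleProj Γ v (f i)) :=
    (hadj i h).resolve_left (hv i)
  have hcompl' {i} (h : Λᶜ.Adj i₀ i) : Γᶜ.Adj v (doubleProj Γ v (f i)) :=
    compl_adj_of_notMem_starSet (hcompl i h)
  refine ⟨embeddingOfAdj (Function.update (fun i => doubleProj Γ v (f i)) i₀ v)
    (fun i j h => ?_) fun i j h => ?_⟩
  · obtain rfl | hi := eq_or_ne i i₀
    · rw [Function.update_self, hproj h.ne']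
      exact hadj' h
    obtain rfl | hj := eq_or_ne j i₀
    · rw [Function.update_self, hproj hi]
      exact (hadj' h.symm).symm
    rw [hproj hi, hproj hj]
    exact adj_doubleProj (f.map_adj_iff.2 h)
  · obtain rfl | hi := eq_or_ne i i₀
    · rw [Function.update_self, hproj h.ne']
      exact hcompl' h
    obtain rfl | hj := eq_or_ne j i₀
    · rw [Function.update_self, hproj hi]
      exact (hcompl' h.symm).symm
    rw [hproj hi, hproj hj]
    exact compl_adj_doubleProj (compl_adj_embedding_iff.2 h) (hsep i j hi hj)

lemma Separated.compl_adj_of_embedding (h : Separated (f i) (f j)) : Λᶜ.Adj i j :=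
  compl_adj_embedding_iff.1 h.compl_adj

lemma doubleProj_ne_of_separated (hΛ : Λᶜ.IsAcyclic) (h : Separated (f i) (f j)) (k : V) :
    doubleProj Γ v (f k) ≠ v := by
  intro hk
  have hadj {l} (hl : doubleProj Γ v (f l) ∉ starSet Γ v) : Λᶜ.Adj k l := by
    refine ⟨?_, fun hkl => hl (.inr ?_)⟩
    · rintro rfl
      exact hl (.inl hk)
    · have := adj_doubleProj (f.map_adj_iff.2 hkl)
      rwa [hk] at this
  exact not_adj_of_isAcyclic hΛ (hadj h.1) h.compl_adj_of_embedding (hadj h.2.1)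

lemma nonempty_embedding_of_separated_of_separated [Finite V] (hΛ : IsLinearForest Λᶜ) {a b c : V}
    (hab : Separated (f a) (f b)) (hac : Separated (f a) (f c)) (hbc : b ≠ c) :
    Nonempty (Λ ↪g Γ) := by
  have hsep {i} (hi : i ≠ a) (hstar : doubleProj Γ v (f i) ∉ starSet Γ v) :
      Separated (f a) (f i) := by
    refine ⟨hab.1, hstar, fun heq => ?_⟩
    have hib : Separated (f i) (f b) := ⟨hstar, hab.2.1, heq ▸ hab.2.2⟩
    have hic : Separated (f i) (f c) := ⟨hstar, hac.2.1, heq ▸ hac.2.2⟩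
    obtain h | h := eq_or_eq_of_isAcyclic hΛ.1 hab.compl_adj_of_embedding
      hib.symm.compl_adj_of_embedding hac.compl_adj_of_embedding hic.symm.compl_adj_of_embedding
    exacts [hi h.symm, hbc h]
  refine nonempty_embedding_of_forall_ne a (fun i j hi hj h => ?_) (fun i hi => ?_)
    (fun i hi => ?_) (doubleProj_ne_of_separated hΛ.1 hab)
  · have := h.2.2
    have := (hsep hi h.1).2.2
    have := (hsep hj h.2.1).2.2
    grind
  · by_contra hstar
    exact (hsep hi.ne' hstar).compl_adj_of_embedding.2 hi
  · obtain h | rfl | rfl := eq_or_eq_of_adj hΛ.2 hab.compl_adj_of_embedding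
      hac.compl_adj_of_embedding hi
    exacts [absurd h hbc, hab.2.1, hac.2.1]

lemma nonempty_embedding_of_doubleProj_eq (hΛ : Λᶜ.IsAcyclic) {a b : V}
    (hab : Separated (f a) (f b)) (heq : doubleProj Γ v (f a) = doubleProj Γ v (f b))
    (hstar : ∀ i, doubleProj Γ v (f i) ∉ starSet Γ v → i = a ∨ i = b) : Nonempty (Λ ↪g Γ) := by
  have hadj := hab.compl_adj_of_embedding
  refine nonempty_embedding_of_forall_ne b (fun i j hi hj h => ?_) (fun i hi => ?_)
    (fun i hi h => ?_) (doubleProj_ne_of_separated hΛ hab)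
  · obtain rfl := (hstar i h.1).resolve_right hi
    obtain rfl := (hstar j h.2.1).resolve_right hj
    exact h.2.2 rfl
  · by_contra h
    obtain rfl := (hstar i h).resolve_right hi.ne'
    exact hadj.symm.2 hi
  · have hia : i ≠ a := by
      rintro rfl
      exact hab.1 h
    have hproj := compl_adj_doubleProj (compl_adj_embedding_iff.2 hi) fun hsep => hsep.2.1 h
    rw [← heq] at hproj
    exact not_adj_of_isAcyclic hΛ hadj hi
      ⟨hia.symm, fun hai => hproj.2 (adj_doubleProj (f.map_adj_iff.2 hai))⟩

lemma isAntipath_doubleProj {p : ℕ → V} {m : ℕ} (hp : IsAntipath Λ m p)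
    (hsep : ∀ l, l + 1 < m → ¬ Separated (f (p l)) (f (p (l + 1)))) :
    IsAntipath Γ m fun l => doubleProj Γ v (f (p l)) :=
  ⟨fun l hl =>
      compl_adj_doubleProj (compl_adj_embedding_iff.2 (hp.compl_adj_succ l hl)) (hsep l hl),
    fun l l' hl hl' => adj_doubleProj (f.map_adj_iff.2 (hp.adj l l' hl hl'))⟩

lemma isAntipath_insertAfter_doubleProj {p : ℕ → V} {m k : ℕ} (hp : IsAntipath Λ m p)
    (hk : k + 1 < m) (hab : Separated (f (p k)) (f (p (k + 1))))
    (hadj : Γ.Adj (doubleProj Γ v (f (p k))) (doubleProj Γ v (f (p (k + 1)))))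
    (hstar : ∀ i, i ≠ p k → i ≠ p (k + 1) → Γ.Adj v (doubleProj Γ v (f i))) :
    IsAntipath Γ (m + 1) (insertAfter (fun l => doubleProj Γ v (f (p l))) k v) := by
  have hne {l l'} (h : l ≠ l') (hl : l < m) (hl' : l' < m) : p l ≠ p l' := by
    obtain hlt | hlt := h.lt_or_gt
    exacts [hp.ne hlt hl', (hp.ne hlt hl).symm]
  have hmem {l} (hl : l < m) (h : l ≠ k) (h' : l ≠ k + 1) :
      Γ.Adj v (doubleProj Γ v (f (p l))) :=
    hstar _ (hne h hl (by omega)) (hne h' hl hk)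
  refine isAntipath_insertAfter hk (fun l hl hlk => ?_)
    (fun l l' hl hl' => adj_doubleProj (f.map_adj_iff.2 (hp.adj l l' hl hl'))) hadj
    (compl_adj_of_notMem_starSet hab.1) (compl_adj_of_notMem_starSet hab.2.1)
    fun l hl h h' => hmem hl h h'
  refine compl_adj_doubleProj (compl_adj_embedding_iff.2 (hp.compl_adj_succ l hl)) fun hsep => ?_
  obtain hlt | rfl : l ≠ k + 1 ∨ l = k + 1 := by omega
  · exact hsep.1 (.inr (hmem (by omega) hlk hlt))
  · exact hsep.2.1 (.inr (hmem hl (by omega) (by omega)))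

lemma isAntipathJoin_update_insertAfter {ι : Type*} [DecidableEq ι] {n : ι → ℕ} {w : ι → ℕ → V}
    (hw : IsAntipathJoin Λ n w) {j : ι} {k : ℕ} (hk : k + 1 < n j)
    (hab : Separated (f (w j k)) (f (w j (k + 1))))
    (hadj : Γ.Adj (doubleProj Γ v (f (w j k))) (doubleProj Γ v (f (w j (k + 1)))))
    (hstar : ∀ i, i ≠ w j k → i ≠ w j (k + 1) → Γ.Adj v (doubleProj Γ v (f i))) :
    IsAntipathJoin Γ n (Function.update (fun j' l => doubleProj Γ v (f (w j' l))) j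
      (insertAfter (fun l => doubleProj Γ v (f (w j l))) k v)) := by
  have hmap {i i'} (h : Λ.Adj i i') : Γ.Adj (doubleProj Γ v (f i)) (doubleProj Γ v (f i')) :=
    adj_doubleProj (f.map_adj_iff.2 h)
  have hv {j' l} (hj : j' ≠ j) (hl : l < n j') : Γ.Adj v (doubleProj Γ v (f (w j' l))) :=
    hstar _ (hw.adj j' j l k hj hl (by omega)).ne (hw.adj j' j l (k + 1) hj hl hk).ne
  have hcross {j' l} (hj : j' ≠ j) (hl : l < n j') (l') (hl' : l' < n j) :
      Γ.Adj (insertAfter (fun l => doubleProj Γ v (f (w j l))) k v l')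
        (doubleProj Γ v (f (w j' l))) := by
    unfold insertAfter
    split_ifs
    · exact hmap (hw.adj j j' l' l hj.symm hl' hl)
    · exact hv hj hl
    · exact hmap (hw.adj j j' (l' - 1) l hj.symm (by omega) hl)
  refine ⟨fun j' => ?_, fun j₁ j₂ k₁ k₂ hne hk₁ hk₂ => ?_⟩
  · obtain rfl | hj := eq_or_ne j' j
    · rw [Function.update_self]
      exact (isAntipath_insertAfter_doubleProj (hw.isAntipath j') hk hab hadj hstar).mono (by omega)
    · rw [Function.update_of_ne hj]
      exact isAntipath_doubleProj (hw.isAntipath j') fun l hl hsep =>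
        hsep.1 (.inr (hv hj (by omega)))
  · obtain rfl | hj₁ := eq_or_ne j₁ j
    · rw [Function.update_self, Function.update_of_ne hne.symm]
      exact hcross hne.symm hk₂ k₁ hk₁
    obtain rfl | hj₂ := eq_or_ne j₂ j
    · rw [Function.update_self, Function.update_of_ne hne]
      exact (hcross hne hk₁ k₂ hk₂).symm
    rw [Function.update_of_ne hj₁, Function.update_of_ne hj₂]
    exact hmap (hw.adj j₁ j₂ k₁ k₂ hne hk₁ hk₂)

lemma nonempty_embedding_of_adj_doubleProj [Finite V] (hΛ : IsLinearForest Λᶜ) {a b : V}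
    (hab : Separated (f a) (f b)) (hadj : Γ.Adj (doubleProj Γ v (f a)) (doubleProj Γ v (f b)))
    (hstar : ∀ i, doubleProj Γ v (f i) ∉ starSet Γ v → i = a ∨ i = b) : Nonempty (Λ ↪g Γ) := by
  classical
  obtain ⟨n, w, hw, hsupp⟩ := exists_isAntipathJoin_of_isLinearForest hΛ
  have hsurj (i) : ∃ j, ∃ k < n j, w j k = i := ⟨_, (hsupp _ i).1 rfl⟩
  obtain ⟨j, k, hk, rfl⟩ := hsurj a
  obtain ⟨j', k', hk', rfl⟩ := hsurj b
  have hstar' (i) (hi : i ≠ w j k) (hi' : i ≠ w j' k') : Γ.Adj v (doubleProj Γ v (f i)) := by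
    by_contra h
    refine (hstar i fun h' => ?_).elim hi hi'
    exact h (h'.resolve_left (doubleProj_ne_of_separated hΛ.1 hab i))
  obtain ⟨rfl, rfl | rfl⟩ := (hw.compl_adj_iff hk hk').1 hab.compl_adj_of_embedding
  · exact (hw.exists_embedding hsurj
      (isAntipathJoin_update_insertAfter hw hk' hab hadj hstar')).nonempty
  · exact (hw.exists_embedding hsurj (isAntipathJoin_update_insertAfter hw hk hab.symm hadj.symm
      fun i hi hi' => hstar' i hi' hi)).nonempty

theorem nonempty_embedding_of_embedding_graphDouble [Finite V] (hΛ : IsLinearForest Λᶜ)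
    (f : Λ ↪g GraphDouble Γ v) : Nonempty (Λ ↪g Γ) := by
  by_cases! hsep : ∀ i j, ¬ Separated (f i) (f j)
  · exact nonempty_embedding_of_compl_adj_doubleProj fun i j h => absurd h (hsep i j)
  obtain ⟨a, b, hab⟩ := hsep
  by_cases! hstar : ∀ i, doubleProj Γ v (f i) ∉ starSet Γ v → i = a ∨ i = b
  · obtain heq | hne := eq_or_ne (doubleProj Γ v (f a)) (doubleProj Γ v (f b))
    · exact nonempty_embedding_of_doubleProj_eq hΛ.1 hab heq hstar
    by_cases hadj : Γ.Adj (doubleProj Γ v (f a)) (doubleProj Γ v (f b))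
    · exact nonempty_embedding_of_adj_doubleProj hΛ hab hadj hstar
    refine nonempty_embedding_of_compl_adj_doubleProj (f := f) fun i j h => ?_
    obtain ⟨rfl, rfl⟩ | ⟨rfl, rfl⟩ : i = a ∧ j = b ∨ i = b ∧ j = a := by
      have := hstar i h.1
      have := hstar j h.2.1
      have := h.2.2
      grind
    exacts [⟨hne, hadj⟩, ⟨hne.symm, fun h' => hadj h'.symm⟩]
  · obtain ⟨c, hc, hca, hcb⟩ := hstar
    obtain h | h : (f a).isRight ≠ (f c).isRight ∨ (f b).isRight ≠ (f c).isRight := by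
      have := hab.2.2
      grind
    · exact nonempty_embedding_of_separated_of_separated hΛ hab ⟨hab.1, hc, h⟩ hcb.symm
    · exact nonempty_embedding_of_separated_of_separated hΛ hab.symm ⟨hab.2.1, hc, h⟩ hca.symm

end DoubleEmbedding

section Doubling

variable {V W : Type} {Λ : SimpleGraph V} {Γ : SimpleGraph W}

lemma exists_embedding_of_map_eq_conj_pow [Finite W] {K : Type*} [Group K] {ψ : K →* RAAG Γ}
    (hψ : Function.Injective ψ) {e : Λ ↪g commutingGraph (RAAG Γ)}
    (he : ∀ i, e i ∈ vertexConjugates Γ) {x : V → K} {m : V → ℕ} (hm : ∀ i, m i ≠ 0) {g : RAAG Γ}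
    (hx : ∀ i, ψ (x i) = g * e i ^ m i * g⁻¹) : ∃ e' : Λ ↪g commutingGraph K, ∀ i, e' i = x i := by
  refine ⟨embeddingOfAdj x (fun i j h => ?_) (fun i j h => ?_), fun _ => rfl⟩
  · obtain ⟨hne, hcomm⟩ := e.map_adj_iff.2 h
    refine ⟨fun heq => hne (eq_of_pow_eq_pow (he i) (he j) (hm i) (hm j) ?_), ?_⟩
    · simpa [hx] using congrArg ψ heq
    · refine Commute.of_map hψ ?_
      rw [hx, hx]
      exact (Commute.conj_iff g).2 (hcomm.pow_pow (m i) (m j))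
  · have hcomm : ¬ Commute (e i) (e j) :=
      compl_commutingGraph_adj.1 (compl_adj_embedding_iff.2 h)
    refine compl_commutingGraph_adj.2 fun h' => hcomm ?_
    refine commute_of_commute_pow_pow (he i) (he j) (hm i) (hm j) ((Commute.conj_iff g).1 ?_)
    rw [← hx, ← hx]
    exact h'.map ψ

lemma exists_shorter_words [Finite W] [Fintype V] {e : Λ ↪g commutingGraph (RAAG Γ)}
    {l : V → List (W × Bool)} {a : V → W}
    (he : ∀ i, e i = evalWord Γ (l i) * gen Γ (a i) * (evalWord Γ (l i))⁻¹) {i₀ : V}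
    (hi₀ : l i₀ ≠ []) :
    ∃ (v : W) (e' : Λ ↪g commutingGraph (RAAG (GraphDouble Γ v)))
      (l' : V → List ((W ⊕ {w // w ∉ starSet Γ v}) × Bool)) (a' : V → W ⊕ {w // w ∉ starSet Γ v}),
      (∀ i, e' i = evalWord _ (l' i) * gen _ (a' i) * (evalWord _ (l' i))⁻¹) ∧
        ∑ i, (l' i).length < ∑ i, (l i).length := by
  obtain ⟨⟨v, ε⟩, t, ht⟩ := List.exists_cons_of_ne_nil hi₀
  choose l' a' m hle hlt hm hfold using fun i =>
    exists_conj_conj_eq_foldDouble (Γ := Γ) (v := v) (!ε) (l i) (a i)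
  simp only [← he] at hfold
  obtain ⟨e', he'⟩ := exists_embedding_of_map_eq_conj_pow foldDouble_injective
    (fun i => he i ▸ conj_gen_mem_vertexConjugates _ _) hm hfold
  exact ⟨v, e', l', a', he', Finset.sum_lt_sum (fun i _ => hle i)
    ⟨i₀, Finset.mem_univ _, hlt i₀ (by simp [ht])⟩⟩

/-- Each passage to the double along the star of a letter that begins one of the conjugating words
shortens that word, until all the conjugates are standard generators. -/
lemma nonempty_embedding_of_words [Fintype V] (hΛ : IsLinearForest Λᶜ) (N : ℕ) {W : Type}
    [Finite W] {Γ : SimpleGraph W} (e : Λ ↪g commutingGraph (RAAG Γ)) {l : V → List (W × Bool)}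
    {a : V → W} (he : ∀ i, e i = evalWord Γ (l i) * gen Γ (a i) * (evalWord Γ (l i))⁻¹)
    (hN : ∑ i, (l i).length = N) : Nonempty (Λ ↪g Γ) := by
  induction N using Nat.strong_induction_on generalizing W with
  | _ N ih =>
    by_cases! hl : ∀ i, l i = []
    · simp only [hl, evalWord_nil, one_mul, inv_one, mul_one] at he
      refine ⟨embeddingOfAdj a (fun i j h => ?_) fun i j h => ?_⟩
      · obtain ⟨hne, hcomm⟩ := e.map_adj_iff.2 h
        rw [he, he] at hne hcomm
        exact (commute_gen_iff.1 hcomm).resolve_left fun h' => hne (congrArg _ h')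
      · have hcomm : ¬ Commute (e i) (e j) :=
          compl_commutingGraph_adj.1 (compl_adj_embedding_iff.2 h)
        rwa [he, he, commute_gen_iff, not_or] at hcomm
    · obtain ⟨i₀, hi₀⟩ := hl
      obtain ⟨v, e', l', a', he', hlt⟩ := exists_shorter_words he hi₀
      obtain ⟨f⟩ := ih _ (hN ▸ hlt) e' he' rfl
      exact nonempty_embedding_of_embedding_graphDouble hΛ f

theorem nonempty_embedding_of_embedding_vertexConjugates [Finite V] [Finite W]
    (hΛ : IsLinearForest Λᶜ) (e : Λ ↪g commutingGraph (RAAG Γ))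
    (he : ∀ i, e i ∈ vertexConjugates Γ) : Nonempty (Λ ↪g Γ) := by
  have := Fintype.ofFinite V
  choose g a hga using fun i => mem_vertexConjugates_iff.1 (he i)
  choose l hl using fun i => exists_evalWord_eq (g i)
  exact nonempty_embedding_of_words hΛ _ e (fun i => by rw [hl, hga]) rfl

end Doubling

section ExtensionGraphEmbedding

variable {V W : Type} {Λ : SimpleGraph V} {Γ : SimpleGraph W} [Finite W] {φ : RAAG Λ →* RAAG Γ}

lemma hasAntipath_one (c : Region φ) :
    HasAntipath (commutingGraph (RAAG Γ)) (regionVertices c) 1 := by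
  obtain ⟨x, hx⟩ := (coConnected_regionVertices c).1
  exact ⟨fun _ => x, fun _ => hx, fun k hk => by omega, fun k k' hk hk' => by omega⟩

lemma adj_of_mem_supp_of_lt_two {C : Λᶜ.ConnectedComponent} {n : ℕ} {p : ℕ → V} {i k : V}
    (hsupp : ∀ i, i ∈ C.supp ↔ ∃ l < n, p l = i) (hn : n < 2) (hi : i ∈ C.supp) (hki : k ≠ i) :
    Λ.Adj i k := by
  by_contra hadj
  obtain ⟨l, hl, hli⟩ := (hsupp i).1 hi
  obtain ⟨m, hm, hmk⟩ := (hsupp k).1 ((C.mem_supp_congr_adj ⟨hki.symm, hadj⟩).1 hi)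
  obtain rfl : l = m := by omega
  exact hki (hmk.symm.trans hli)

lemma exists_injective_region_hasAntipath [Finite V] (hφ : Function.Injective φ)
    {n : Λᶜ.ConnectedComponent → ℕ} {w : Λᶜ.ConnectedComponent → ℕ → V}
    (hw : ∀ C, IsAntipath Λ (n C) (w C)) (hsupp : ∀ C i, i ∈ C.supp ↔ ∃ k < n C, w C k = i) :
    ∃ R : Λᶜ.ConnectedComponent → Region φ, Function.Injective R ∧
      ∀ C, HasAntipath (commutingGraph (RAAG Γ)) (regionVertices (R C)) (n C) := by
  set I : Set V := {i | n (Λᶜ.connectedComponentMk i) < 2} with hI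
  obtain ⟨s, hs, hsI⟩ := exists_injective_region_of_universal hφ (I := I) fun i hi k hki =>
    adj_of_mem_supp_of_lt_two (hsupp _) hi rfl hki
  have hR (C : Λᶜ.ConnectedComponent) : ∃ c : Region φ,
      HasAntipath (commutingGraph (RAAG Γ)) (regionVertices c) (n C) ∧
        ((∃ i : I, Λᶜ.connectedComponentMk i = C ∧ s i = c) ∨
          2 ≤ n C ∧ regionLabels c ⊆ C.supp) := by
    obtain hn | hn := Nat.lt_or_ge (n C) 2
    · obtain ⟨i, rfl⟩ := C.nonempty_supp
      exact ⟨s ⟨i, hn⟩, (hasAntipath_one _).mono (by omega), .inl ⟨⟨i, hn⟩, rfl, rfl⟩⟩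
    · obtain ⟨c, hlabels, hc⟩ := exists_region_hasAntipath hφ hn (hw C) (hsupp C)
      exact ⟨c, hc, .inr ⟨hn, hlabels⟩⟩
  choose R hanti hR using hR
  have hdisjoint {C} (hn : 2 ≤ n C) (hlabels : regionLabels (R C) ⊆ C.supp) (i : I) :
      s i ≠ R C := by
    intro heq
    obtain ⟨l, hl, hlI⟩ := hsI i
    have hlC : Λᶜ.connectedComponentMk l = C := hlabels (heq ▸ hl)
    rw [hI, Set.mem_ofPred_eq, hlC] at hlI
    omega
  refine ⟨R, fun C C' heq => ?_, hanti⟩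
  obtain ⟨i, rfl, hi⟩ | ⟨hn, hlabels⟩ := hR C <;>
    obtain ⟨i', rfl, hi'⟩ | ⟨hn', hlabels'⟩ := hR C'
  · rw [hs (hi.trans (heq.trans hi'.symm))]
  · exact absurd (hi.trans heq) (hdisjoint hn' hlabels' i)
  · exact absurd (hi'.trans heq.symm) (hdisjoint hn hlabels i')
  · obtain ⟨l, hl⟩ := regionLabels_nonempty (R C)
    exact (hlabels hl).symm.trans (hlabels' (heq ▸ hl))

lemma exists_embedding_vertexConjugates [Finite V] (hΛ : IsLinearForest Λᶜ)
    (hφ : Function.Injective φ) :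
    ∃ e : Λ ↪g commutingGraph (RAAG Γ), ∀ i, e i ∈ vertexConjugates Γ := by
  obtain ⟨n, w, hw, hsupp⟩ := exists_isAntipathJoin_of_isLinearForest hΛ
  obtain ⟨R, hR, hanti⟩ := exists_injective_region_hasAntipath hφ hw.isAntipath hsupp
  choose f hf hanti using hanti
  obtain ⟨e, he⟩ := hw.exists_embedding (fun i => ⟨_, (hsupp _ i).1 rfl⟩)
    ⟨hanti, fun C C' k k' hne _ _ =>
      commutingGraph_adj_of_region_ne (hR.ne hne) (hf C k) (hf C' k')⟩
  refine ⟨e, fun i => ?_⟩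
  obtain ⟨C, k, hCk⟩ := he i
  rw [hCk]
  exact (hf C k).1

end ExtensionGraphEmbedding

end RAAG

/-- If `Λᶜ` is a linear forest and `A(Λ)` embeds into `A(Γ)`, then `Λ` is an induced
subgraph of `Γ`. -/
theorem statement1 {V W : Type} [Fintype V] [Fintype W]
    (Λ : SimpleGraph V) (Γ : SimpleGraph W) (hΛ : IsLinearForest Λᶜ)
    (h : ∃ φ : RAAG Λ →* RAAG Γ, Function.Injective φ) :
    Nonempty (Λ ↪g Γ) := by
  obtain ⟨φ, hφ⟩ := h
  obtain ⟨e, he⟩ := RAAG.exists_embedding_vertexConjugates hΛ hφ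
  exact RAAG.nonempty_embedding_of_embedding_vertexConjugates hΛ e he
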